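/- There exist universal constants c, C > 0 such that the following holds. Let n ≥ 2, let X be an isotropic, log-concave random vector in ℝⁿ, and let G be a standard Gaussian random vector in ℝⁿ. Set P_n = κ_n·√(log(n+1)). Then for every gauge function ‖·‖ on ℝⁿ, (c/P_n)·E‖G‖ ≤ E‖X‖ ≤ C·P_n·E‖G‖. -/

import Mathlib

/-!
Fix a log-concave probability measure `ν`, a gauge `f` with Gaussian mean `ℓ = E f(G)`, and consider
the tilted measures with density proportional to `exp (⟪θ, x⟫ - s ‖x‖² / 2)` with respect to `ν`. In
stochastic localization `θ` follows a diffusion whose drift is the barycenter `a(s, θ)` of the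
tilted measure. No stochastic calculus is needed here: the law of `θ` at time `s` has the explicit
density `W = Psi * gk`, expectations with respect to it are written `EE`, and Dynkin's formula
`dynkin`, i.e. `d/ds E F = E (∂ₛ + a ⬝ ∇ + Δ / 2) F`, is an integration by parts. Tilted
expectations are martingales, in particular `a` is one, and the covariance `A` of the tilted
measure is the derivative of `a`.

*Control of the covariance.* The derivative of `A` consists of third moments of the tilted measure,
which is log-concave, so that it is bounded by `κₙ ‖A‖^(3/2)` (`T_bound`). Hence for
`S = tr (A - 1) ^ (2 q) + n / 64 ^ q` the drift of `V = S / (1 + S)` is at most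
`4224 q² κₙ² V` (`gen_VJet_le`), and `E V` grows at most exponentially. With `q` of order at least
`log n` and `s ≤ 1 / (4224 κₙ² q)`, all the eigenvalues of `A` lie in `[1/2, 3/2]` outside of an
event of probability at most `4 * 2⁻ᵠ` (`EE_bad_le`, `eig_good`). Moreover `A ≤ 1 / s` always
(`ctr_sq_le`), which follows from the Prékopa–Leindler inequality.

*Comparison.* Let `U(v, x) = E f(x + √v G)`, called `Mh f v x` in the code. It is convex in `x`,
solves the heat equation, and its Laplacian is at most `ℓ / √v` (`laplacian_U_le`). For a variance
profile `v(s)` the drift of `U(v(s), a)` is half the sum of `(v' + λᵢ²) ∂ᵢᵢ U` over an eigenbasis of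
`A` (`gen_UJet_eq`). Let `t` be of order `1 / (κₙ² log n)`.
* Upper bound: on `[0, t]` take `v' = -4`, which beats `λᵢ²` off the bad event; after time `t` take
  `v = 1 / s`, for which `v' + λᵢ² ≤ 0` always. As `s → ∞` the tilted measure collapses to its
  barycenter, and `∫ f dν ≤ U(v(0), a(0, 0)) + O(ℓ / √t)` with `v(0) = 1 / t + 4 t`.
* Lower bound: on `[0, t]` take `v' = -1/4`, which is beaten by `λᵢ²` off the bad event, and
  `v(t) = 0` in the limit. By Jensen `∫ f dν ≥ E f(a(t, θ))`, and this is at least of order `√t ℓ`.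

These arguments need compact support, so that isotropic measures are truncated to large balls
(`trunc`), and the radius tends to infinity. Finally `κₙ` is finite (`kappa_bddAbove`) and at least
one (`one_le_kappa`).
-/

open MeasureTheory Real Pointwise RealInnerProductSpace
open scoped ENNReal

noncomputable section

/-- A convex body: a compact convex set with non-empty interior. -/
def IsConvexBody {n : ℕ} (K : Set (EuclideanSpace ℝ (Fin n))) : Prop :=
  IsCompact K ∧ Convex ℝ K ∧ (interior K).Nonempty

/-- The uniform probability measure on a set `K`. -/
def unifOn {n : ℕ} (K : Set (EuclideanSpace ℝ (Fin n))) : Measure (EuclideanSpace ℝ (Fin n)) :=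
  (volume K)⁻¹ • volume.restrict K

/-- A probability measure `μ` on `ℝⁿ` is isotropic: its barycenter vanishes and its
covariance matrix is the identity. -/
def IsIsotropicMeasure {n : ℕ} (μ : Measure (EuclideanSpace ℝ (Fin n))) : Prop :=
  (∀ i, ∫ x, x i ∂μ = 0) ∧ ∀ i j, ∫ x, x i * x j ∂μ = if i = j then 1 else 0

/-- A convex body is in isotropic position if the uniform probability measure on it
is isotropic. -/
def IsIsotropicBody {n : ℕ} (K : Set (EuclideanSpace ℝ (Fin n))) : Prop :=
  IsIsotropicMeasure (unifOn K)

/-- A log-concave density: nonnegative, and multiplicatively convex. This is equivalent to: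
`{p > 0}` is convex and `log (1/p)` is convex on it. -/
def IsLogConcaveDensity {n : ℕ} (p : EuclideanSpace ℝ (Fin n) → ℝ) : Prop :=
  (∀ x, 0 ≤ p x) ∧ ∀ x y : EuclideanSpace ℝ (Fin n), ∀ t : ℝ, 0 ≤ t → t ≤ 1 →
    p x ^ t * p y ^ (1 - t) ≤ p (t • x + (1 - t) • y)

/-- A measure on `ℝⁿ` is log-concave if it has a log-concave density w.r.t. Lebesgue. -/
def IsLogConcaveMeasure {n : ℕ} (μ : Measure (EuclideanSpace ℝ (Fin n))) : Prop :=
  ∃ p : EuclideanSpace ℝ (Fin n) → ℝ, Measurable p ∧ IsLogConcaveDensity p ∧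
    μ = volume.withDensity fun x => ENNReal.ofReal (p x)

/-- The standard Gaussian probability measure on `ℝⁿ`. -/
def stdGaussian (n : ℕ) : Measure (EuclideanSpace ℝ (Fin n)) :=
  volume.withDensity fun x => ENNReal.ofReal ((2 * π) ^ (-(n : ℝ) / 2) * Real.exp (-‖x‖ ^ 2 / 2))

/-- The Poincaré constant of a measure: the least `A ≥ 0` such that
`Var f ≤ A ⬝ E |∇ f|²` for all locally Lipschitz `f`. -/
def poincareConst {n : ℕ} (μ : Measure (EuclideanSpace ℝ (Fin n))) : ℝ :=
  sInf {A : ℝ | 0 ≤ A ∧ ∀ f : EuclideanSpace ℝ (Fin n) → ℝ, LocallyLipschitz f →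
    ∫ x, (f x - ∫ y, f y ∂μ) ^ 2 ∂μ ≤ A * ∫ x, ‖gradient f x‖ ^ 2 ∂μ}

/-- The KLS constant `ψₙ`. -/
def KLSConst (n : ℕ) : ℝ :=
  sSup {s : ℝ | ∃ μ : Measure (EuclideanSpace ℝ (Fin n)), IsProbabilityMeasure μ ∧
    IsLogConcaveMeasure μ ∧ IsIsotropicMeasure μ ∧ s = Real.sqrt (poincareConst μ)}

/-- The Hilbert-Schmidt norm of a matrix. -/
def hsNorm {n : ℕ} (M : Matrix (Fin n) (Fin n) ℝ) : ℝ :=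
  Real.sqrt (∑ i, ∑ j, (M i j) ^ 2)

/-- The coefficient `κₙ`, the supremum of `‖E [X₁ (X ⊗ X)]‖_HS` over all isotropic
log-concave random vectors `X` in `ℝⁿ`. -/
def kappaConst (n : ℕ) : ℝ :=
  sSup {s : ℝ | ∃ μ : Measure (EuclideanSpace ℝ (Fin n)), IsProbabilityMeasure μ ∧
    IsLogConcaveMeasure μ ∧ IsIsotropicMeasure μ ∧ ∃ h : 0 < n,
    s = hsNorm (Matrix.of fun i j => ∫ x, x ⟨0, h⟩ * (x i * x j) ∂μ)}

/-- A gauge function on `ℝⁿ`: non-negative, convex, positively homogeneous. -/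
def IsGauge {n : ℕ} (f : EuclideanSpace ℝ (Fin n) → ℝ) : Prop :=
  (∀ x, 0 ≤ f x) ∧ ConvexOn ℝ Set.univ f ∧
    ∀ (c : ℝ), 0 ≤ c → ∀ x, f (c • x) = c * f x

/-- `M(K)`: the mean of the Minkowski functional of `K` over the unit sphere, w.r.t. the
uniform probability measure on the sphere. -/
def Mparam (n : ℕ) (K : Set (EuclideanSpace ℝ (Fin n))) : ℝ :=
  ∫ x : Metric.sphere (0 : EuclideanSpace ℝ (Fin n)) 1,
    gauge K x ∂(((volume : Measure (EuclideanSpace ℝ (Fin n))).toSphere Set.univ)⁻¹ •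
      (volume : Measure (EuclideanSpace ℝ (Fin n))).toSphere)

/-- The polar body. -/
def polarBody {n : ℕ} (K : Set (EuclideanSpace ℝ (Fin n))) : Set (EuclideanSpace ℝ (Fin n)) :=
  {x | ∀ y ∈ K, ⟪x, y⟫ ≤ 1}

/-- `R(K)`: the maximal Euclidean norm of a point of `K`. -/
def Rparam {n : ℕ} (K : Set (EuclideanSpace ℝ (Fin n))) : ℝ :=
  sSup {r : ℝ | ∃ x ∈ K, r = ‖x‖}

/-- The operator norm `‖A : K → T‖ = sup_{x ≠ 0} ‖Ax‖_T / ‖x‖_K` (Minkowski functionals). -/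
def mapNorm {n : ℕ} (K T : Set (EuclideanSpace ℝ (Fin n)))
    (A : Matrix (Fin n) (Fin n) ℝ) : ℝ :=
  sSup {r : ℝ | ∃ x : EuclideanSpace ℝ (Fin n), x ≠ 0 ∧
    r = gauge T (Matrix.toEuclideanLin A x) / gauge K x}

/-- The ℓ₂ operator norm of a matrix. -/
def matOpNorm {n : ℕ} (M : Matrix (Fin n) (Fin n) ℝ) : ℝ :=
  ‖LinearMap.toContinuousLinearMap (Matrix.toEuclideanLin M)‖

/-! ### The Prékopa–Leindler inequality -/

section

/-- The translates `K + min L` and `max K + L` are contained in `C` and meet in a single point. -/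
lemma volume_add_le_of_isCompact {K L C : Set ℝ} (hK : IsCompact K) (hL : IsCompact L)
    (hK0 : K.Nonempty) (hL0 : L.Nonempty) (h : ∀ a ∈ K, ∀ b ∈ L, a + b ∈ C) :
    volume K + volume L ≤ volume C := by
  have hk := hK.sSup_mem hK0
  have hl := hL.sInf_mem hL0
  set k := sSup K
  set l := sInf L
  have e1 : volume K = volume ((fun x => x + (-l)) ⁻¹' K) :=
    (measure_preimage_add_right volume (-l) K).symm
  have e2 : volume L = volume ((fun x => (-k) + x) ⁻¹' L) :=
    (measure_preimage_add volume (-k) L).symm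
  rw [e1, e2]
  have hm2 : MeasurableSet ((fun x => (-k) + x) ⁻¹' L) :=
    (measurable_const_add (-k)) hL.measurableSet
  rw [← measure_union₀ hm2.nullMeasurableSet]
  · apply measure_mono
    rintro x (hx | hx)
    · have := h _ hx _ hl
      simpa using this
    · have := h _ hk _ hx
      simpa using this
  · apply measure_mono_null (t := {k + l}) _ (by simp)
    rintro x ⟨h1, h2⟩
    have h3 : x + (-l) ≤ k := le_csSup hK.bddAbove h1
    have h4 : l ≤ (-k) + x := csInf_le hL.bddBelow h2
    simp only [Set.mem_singleton_iff]
    linarith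

/-- One-dimensional Brunn–Minkowski inequality. -/
lemma volume_add_le {A B C : Set ℝ} (hA : MeasurableSet A) (hB : MeasurableSet B)
    (hA0 : A.Nonempty) (hB0 : B.Nonempty) (h : ∀ a ∈ A, ∀ b ∈ B, a + b ∈ C) :
    volume A + volume B ≤ volume C := by
  obtain ⟨a0, ha0⟩ := hA0
  obtain ⟨b0, hb0⟩ := hB0
  have key : ∀ K ⊆ A, IsCompact K → volume K + volume B ≤ volume C := by
    intro K hK hKc
    have hKt : volume K ≠ ⊤ := hKc.measure_lt_top.ne
    suffices h2 : volume B ≤ volume C - volume K by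
      by_cases hle : volume K ≤ volume C
      · calc volume K + volume B ≤ volume K + (volume C - volume K) := by gcongr
          _ = volume C := add_tsub_cancel_of_le hle
      · have h3 := volume_add_le_of_isCompact (hKc.insert a0) (isCompact_singleton (x := b0))
          (Set.insert_nonempty _ _) (Set.singleton_nonempty _) (C := C) (fun a ha b hb => by
            rw [Set.mem_singleton_iff.1 hb]
            exact h a (Set.insert_subset ha0 hK ha) _ hb0)
        exact absurd ((measure_mono (Set.subset_insert a0 K)).trans (le_self_add.trans h3)) hle
    refine le_of_forall_lt_imp_le_of_dense fun s hs => ?_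
    obtain ⟨L, hL, hLc, hsL⟩ := hB.exists_lt_isCompact hs
    refine ENNReal.le_sub_of_add_le_left hKt ?_
    refine le_trans (add_le_add (measure_mono (Set.subset_insert a0 K))
      (hsL.le.trans (measure_mono (Set.subset_insert b0 L)))) ?_
    refine volume_add_le_of_isCompact (hKc.insert a0) (hLc.insert b0) (Set.insert_nonempty _ _)
      (Set.insert_nonempty _ _) ?_
    intro a ha b hb
    exact h a (Set.insert_subset ha0 hK ha) b (Set.insert_subset hb0 hL hb)
  have hBC : volume B ≤ volume C := by simpa using key ∅ (by simp) (by simp)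
  by_cases hBt : volume B = ⊤
  · rw [hBt] at hBC
    rw [top_le_iff.1 hBC]
    exact le_top
  suffices h2 : volume A ≤ volume C - volume B by
    calc volume A + volume B ≤ (volume C - volume B) + volume B := by gcongr
      _ = volume C := tsub_add_cancel_of_le hBC
  refine le_of_forall_lt_imp_le_of_dense fun s hs => ?_
  obtain ⟨K, hK, hKc, hsK⟩ := hA.exists_lt_isCompact hs
  exact ENNReal.le_sub_of_add_le_right hBt ((add_le_add hsK.le le_rfl).trans (key K hK hKc))

/-- The additive form of the Prékopa–Leindler inequality for functions of supremum one: the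
one-dimensional Brunn–Minkowski inequality applied to superlevel sets, which are all nonempty below
level one. -/
lemma pl_one_normalized {t : ℝ} (ht0 : 0 < t) (ht1 : t < 1) {f g h : ℝ → ℝ}
    (hf : Measurable f) (hg : Measurable g) (hh : Measurable h)
    (hf0 : ∀ x, 0 ≤ f x) (hg0 : ∀ x, 0 ≤ g x) (hh0 : ∀ x, 0 ≤ h x)
    (hf1 : ∀ x, f x ≤ 1) (hg1 : ∀ x, g x ≤ 1)
    (hfs : ∀ r, 0 < r → r < 1 → ∃ x, r < f x) (hgs : ∀ r, 0 < r → r < 1 → ∃ x, r < g x)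
    (H : ∀ r x y, 0 < r → r < f x → r < g y → r < h (t * x + (1 - t) * y)) :
    ENNReal.ofReal t * (∫⁻ x, ENNReal.ofReal (f x)) +
      ENNReal.ofReal (1 - t) * (∫⁻ x, ENNReal.ofReal (g x)) ≤ ∫⁻ x, ENNReal.ofReal (h x) := by
  rw [lintegral_eq_lintegral_meas_lt volume (Filter.Eventually.of_forall hf0) hf.aemeasurable,
    lintegral_eq_lintegral_meas_lt volume (Filter.Eventually.of_forall hg0) hg.aemeasurable,
    lintegral_eq_lintegral_meas_lt volume (Filter.Eventually.of_forall hh0) hh.aemeasurable]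
  have mf : Antitone fun r : ℝ => volume {a : ℝ | r < f a} :=
    fun r s hrs => measure_mono fun x hx => lt_of_le_of_lt hrs hx
  have mg : Antitone fun r : ℝ => volume {a : ℝ | r < g a} :=
    fun r s hrs => measure_mono fun x hx => lt_of_le_of_lt hrs hx
  rw [← lintegral_const_mul _ mf.measurable, ← lintegral_const_mul _ mg.measurable,
    ← lintegral_add_left (mf.measurable.const_mul _)]
  refine setLIntegral_mono' measurableSet_Ioi fun r hr => ?_
  have hr0 : 0 < r := hr
  by_cases hr1 : r < 1
  · have s1 : 0 < 1 - t := by linarith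
    have eA : ENNReal.ofReal t * volume {a | r < f a} = volume {x | r < f (t⁻¹ * x)} := by
      have := Real.volume_preimage_mul_left (a := t⁻¹) (by positivity) {a | r < f a}
      rw [inv_inv, abs_of_pos ht0] at this
      exact this.symm
    have eB : ENNReal.ofReal (1 - t) * volume {a | r < g a}
        = volume {x | r < g ((1 - t)⁻¹ * x)} := by
      have := Real.volume_preimage_mul_left (a := (1 - t)⁻¹) (by positivity) {a | r < g a}
      rw [inv_inv, abs_of_pos s1] at this
      exact this.symm
    rw [eA, eB]
    obtain ⟨x, hx⟩ := hfs r hr0 hr1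
    obtain ⟨y, hy⟩ := hgs r hr0 hr1
    refine volume_add_le ?_ ?_ ⟨t * x, ?_⟩ ⟨(1 - t) * y, ?_⟩ ?_
    · exact measurableSet_lt measurable_const (hf.comp (measurable_const_mul _))
    · exact measurableSet_lt measurable_const (hg.comp (measurable_const_mul _))
    · simpa [ht0.ne'] using hx
    · simpa [s1.ne'] using hy
    · intro a ha b hb
      have := H r _ _ hr0 ha hb
      rwa [mul_inv_cancel_left₀ ht0.ne', mul_inv_cancel_left₀ s1.ne'] at this
  · have e1 : {a | r < f a} = ∅ := by
      ext a; simp only [Set.mem_ofPred_eq, Set.mem_empty_iff_false, iff_false, not_lt]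
      linarith [hf1 a]
    have e2 : {a | r < g a} = ∅ := by
      ext a; simp only [Set.mem_ofPred_eq, Set.mem_empty_iff_false, iff_false, not_lt]
      linarith [hg1 a]
    simp [e1, e2]

lemma ennreal_geom_le_arith {t : ℝ} (ht0 : 0 < t) (ht1 : t < 1) (a b : ℝ≥0∞) :
    a ^ t * b ^ (1 - t) ≤ ENNReal.ofReal t * a + ENNReal.ofReal (1 - t) * b := by
  have s1 : 0 < 1 - t := by linarith
  by_cases ha : a = ∞
  · subst ha
    rw [ENNReal.mul_top (by simpa using ht0)]; simp
  by_cases hb : b = ∞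
  · subst hb
    rw [ENNReal.mul_top (by simpa using s1)]; simp
  lift a to NNReal using ha
  lift b to NNReal using hb
  have := NNReal.geom_mean_le_arith_mean2_weighted t.toNNReal (1 - t).toNNReal a b (by
    rw [← Real.toNNReal_add ht0.le s1.le]; simp)
  rw [Real.coe_toNNReal _ ht0.le, Real.coe_toNNReal _ s1.le] at this
  rw [← ENNReal.coe_rpow_of_nonneg _ ht0.le, ← ENNReal.coe_rpow_of_nonneg _ s1.le]
  rw [ENNReal.ofReal, ENNReal.ofReal]
  exact_mod_cast this

/-- Prékopa–Leindler for bounded functions: rescale to supremum one and use the inequality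
between the arithmetic and geometric means. -/
lemma pl_one_bounded {t : ℝ} (ht0 : 0 < t) (ht1 : t < 1) {f g h : ℝ → ℝ≥0∞}
    (hf : Measurable f) (hg : Measurable g) (hh : Measurable h)
    (hfb : (⨆ x, f x) ≠ ∞) (hgb : (⨆ x, g x) ≠ ∞)
    (H : ∀ x y, f x ^ t * g y ^ (1 - t) ≤ h (t * x + (1 - t) * y)) :
    (∫⁻ x, f x) ^ t * (∫⁻ x, g x) ^ (1 - t) ≤ ∫⁻ x, h x := by
  have s1 : 0 < 1 - t := by linarith
  set a := ⨆ x, f x with ha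
  set b := ⨆ x, g x with hb
  have hfa : ∀ x, f x ≤ a := fun x => le_iSup f x
  have hgb' : ∀ x, g x ≤ b := fun x => le_iSup g x
  by_cases ha0 : a = 0
  · have : ∀ x, f x = 0 := fun x => le_antisymm (ha0 ▸ hfa x) zero_le
    simp [this, ht0]
  by_cases hb0 : b = 0
  · have : ∀ x, g x = 0 := fun x => le_antisymm (hb0 ▸ hgb' x) zero_le
    simp [this, s1]
  set c := a ^ t * b ^ (1 - t) with hc
  have hc0 : c ≠ 0 := by
    simp [hc, ENNReal.rpow_eq_zero_iff, ha0, hb0, hfb, hgb]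
  have hct : c ≠ ∞ := ENNReal.mul_ne_top (ENNReal.rpow_ne_top_of_nonneg ht0.le hfb)
    (ENNReal.rpow_ne_top_of_nonneg s1.le hgb)
  have f1 : ∀ x, f x / a ≤ 1 := fun x => ENNReal.div_le_of_le_mul (by simpa using hfa x)
  have g1 : ∀ x, g x / b ≤ 1 := fun x => ENNReal.div_le_of_le_mul (by simpa using hgb' x)
  have ft : ∀ x, f x / a ≠ ∞ := fun x => ne_top_of_le_ne_top ENNReal.one_ne_top (f1 x)
  have gt : ∀ x, g x / b ≠ ∞ := fun x => ne_top_of_le_ne_top ENNReal.one_ne_top (g1 x)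
  have key := pl_one_normalized ht0 ht1 (f := fun x => (f x / a).toReal)
    (g := fun x => (g x / b).toReal) (h := fun x => (min (h x / c) 1).toReal)
    (hf.div_const a).ennreal_toReal (hg.div_const b).ennreal_toReal
    ((hh.div_const c).min measurable_const).ennreal_toReal
    (fun x => ENNReal.toReal_nonneg) (fun x => ENNReal.toReal_nonneg)
    (fun x => ENNReal.toReal_nonneg)
    (fun x => ENNReal.toReal_le_of_le_ofReal zero_le_one (by simpa using f1 x))
    (fun x => ENNReal.toReal_le_of_le_ofReal zero_le_one (by simpa using g1 x)) ?_ ?_ ?_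
  · have ef : ∀ x, ENNReal.ofReal (f x / a).toReal = f x / a := fun x => ENNReal.ofReal_toReal (ft x)
    have eg : ∀ x, ENNReal.ofReal (g x / b).toReal = g x / b := fun x => ENNReal.ofReal_toReal (gt x)
    simp only [ef, eg] at key
    have k2 : ∫⁻ x, ENNReal.ofReal (min (h x / c) 1).toReal ≤ (∫⁻ x, h x) / c := by
      rw [ENNReal.div_eq_inv_mul, ← lintegral_const_mul _ hh]
      refine lintegral_mono fun x => ?_
      refine ENNReal.ofReal_toReal_le.trans ?_
      rw [← ENNReal.div_eq_inv_mul]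
      exact min_le_left _ _
    have k3 := (ennreal_geom_le_arith ht0 ht1 _ _).trans (key.trans k2)
    have e1 : ∫⁻ x, f x / a = (∫⁻ x, f x) / a := by
      simp only [ENNReal.div_eq_inv_mul]; rw [lintegral_const_mul _ hf]
    have e2 : ∫⁻ x, g x / b = (∫⁻ x, g x) / b := by
      simp only [ENNReal.div_eq_inv_mul]; rw [lintegral_const_mul _ hg]
    rw [e1, e2, ENNReal.div_rpow_of_nonneg _ _ ht0.le, ENNReal.div_rpow_of_nonneg _ _ s1.le] at k3
    rw [ENNReal.le_div_iff_mul_le (Or.inl hc0) (Or.inl hct)] at k3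
    convert k3 using 1
    rw [hc]
    have ha1 : a ^ t ≠ 0 := by simp [ENNReal.rpow_eq_zero_iff, ha0, hfb]
    have hb1 : b ^ (1 - t) ≠ 0 := by simp [ENNReal.rpow_eq_zero_iff, hb0, hgb]
    have ha2 : a ^ t ≠ ∞ := ENNReal.rpow_ne_top_of_nonneg ht0.le hfb
    have hb2 : b ^ (1 - t) ≠ ∞ := ENNReal.rpow_ne_top_of_nonneg s1.le hgb
    calc (∫⁻ x, f x) ^ t * (∫⁻ x, g x) ^ (1 - t)
        = ((∫⁻ x, f x) ^ t / a ^ t * a ^ t) * ((∫⁻ x, g x) ^ (1 - t) / b ^ (1 - t) * b ^ (1 - t)) := by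
          rw [ENNReal.div_mul_cancel ha1 ha2, ENNReal.div_mul_cancel hb1 hb2]
      _ = _ := by ring
  · intro r hr0 hr
    have : ENNReal.ofReal r * a < a := by
      conv_rhs => rw [← one_mul a]
      exact (ENNReal.mul_lt_mul_iff_left ha0 hfb).2 (by simpa using hr)
    obtain ⟨x, hx⟩ := lt_iSup_iff.1 (this.trans_eq ha)
    refine ⟨x, ?_⟩
    have h2 : ENNReal.ofReal r < f x / a :=
      (ENNReal.lt_div_iff_mul_lt (Or.inl ha0) (Or.inl hfb)).2 hx
    exact (ENNReal.ofReal_lt_iff_lt_toReal hr0.le (ft x)).1 h2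
  · intro r hr0 hr
    have : ENNReal.ofReal r * b < b := by
      conv_rhs => rw [← one_mul b]
      exact (ENNReal.mul_lt_mul_iff_left hb0 hgb).2 (by simpa using hr)
    obtain ⟨x, hx⟩ := lt_iSup_iff.1 (this.trans_eq hb)
    refine ⟨x, ?_⟩
    have h2 : ENNReal.ofReal r < g x / b :=
      (ENNReal.lt_div_iff_mul_lt (Or.inl hb0) (Or.inl hgb)).2 hx
    exact (ENNReal.ofReal_lt_iff_lt_toReal hr0.le (gt x)).1 h2
  · intro r x y hr0 hrf hrg
    have h1 : ENNReal.ofReal r < f x / a := (ENNReal.ofReal_lt_iff_lt_toReal hr0.le (ft x)).2 hrf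
    have h2 : ENNReal.ofReal r < g y / b := (ENNReal.ofReal_lt_iff_lt_toReal hr0.le (gt y)).2 hrg
    have hm : min (h (t * x + (1 - t) * y) / c) 1 ≠ ∞ :=
      ne_top_of_le_ne_top ENNReal.one_ne_top (min_le_right _ _)
    rw [← ENNReal.ofReal_lt_iff_lt_toReal hr0.le hm]
    refine lt_min ?_ (h1.trans_le (f1 x))
    have h3 : ENNReal.ofReal r = ENNReal.ofReal r ^ t * ENNReal.ofReal r ^ (1 - t) := by
      rw [← ENNReal.rpow_add _ _ (by simpa using hr0) ENNReal.ofReal_ne_top]; simp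
    have h4 : (f x / a) ^ t * (g y / b) ^ (1 - t) ≤ h (t * x + (1 - t) * y) / c := by
      rw [ENNReal.div_rpow_of_nonneg _ _ ht0.le, ENNReal.div_rpow_of_nonneg _ _ s1.le, hc]
      rw [ENNReal.div_eq_inv_mul, ENNReal.div_eq_inv_mul, ENNReal.div_eq_inv_mul,
        ENNReal.mul_inv]
      · calc _ = (a ^ t)⁻¹ * (b ^ (1 - t))⁻¹ * (f x ^ t * g y ^ (1 - t)) := by ring
          _ ≤ _ := by gcongr; exact H x y
      · left; simp [ENNReal.rpow_eq_zero_iff, ha0, hfb]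
      · left; exact ENNReal.rpow_ne_top_of_nonneg ht0.le hfb
    refine lt_of_lt_of_le ?_ h4
    rw [h3]
    exact ENNReal.mul_lt_mul (ENNReal.rpow_lt_rpow h1 ht0) (ENNReal.rpow_lt_rpow h2 s1)

lemma lintegral_min_iSup {α : Type*} [MeasurableSpace α] (μ : Measure α) {f : α → ℝ≥0∞}
    (hf : Measurable f) : ⨆ N : ℕ, ∫⁻ x, min (f x) N ∂μ = ∫⁻ x, f x ∂μ := by
  rw [← lintegral_iSup (fun N => hf.min measurable_const)
    (fun i j hij x => min_le_min le_rfl (by exact_mod_cast hij))]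
  refine lintegral_congr fun x => ?_
  have : ⨆ N : ℕ, min (f x) (N : ℝ≥0∞) = min (f x) (⨆ N : ℕ, (N : ℝ≥0∞)) := by
    rw [inf_iSup_eq]
  rw [this, ENNReal.iSup_natCast]; simp

/-- The Prékopa–Leindler inequality on the line. -/
lemma pl_one {t : ℝ} (ht0 : 0 < t) (ht1 : t < 1) {f g h : ℝ → ℝ≥0∞}
    (hf : Measurable f) (hg : Measurable g) (hh : Measurable h)
    (H : ∀ x y, f x ^ t * g y ^ (1 - t) ≤ h (t * x + (1 - t) * y)) :
    (∫⁻ x, f x) ^ t * (∫⁻ x, g x) ^ (1 - t) ≤ ∫⁻ x, h x := by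
  have s1 : 0 < 1 - t := by linarith
  have tr : ∀ f : ℝ → ℝ≥0∞, Measurable f → Filter.Tendsto (fun N : ℕ => ∫⁻ x, min (f x) N)
      Filter.atTop (nhds (∫⁻ x, f x)) := fun f hf => by
    rw [← lintegral_min_iSup volume hf]
    exact tendsto_atTop_iSup fun i j hij => lintegral_mono fun x =>
      min_le_min le_rfl (by exact_mod_cast hij)
  have bd : ∀ (f : ℝ → ℝ≥0∞) (N : ℕ), (⨆ x, min (f x) (N : ℝ≥0∞)) ≠ ∞ := fun f N =>
    ne_top_of_le_ne_top (ENNReal.natCast_ne_top N) (iSup_le fun x => min_le_right _ _)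
  -- truncate `g` first and then `f`, so that no indeterminate product arises in the limits
  have step : ∀ N M : ℕ, (∫⁻ x, min (f x) N) ^ t * (∫⁻ x, min (g x) M) ^ (1 - t) ≤ ∫⁻ x, h x := by
    intro N M
    refine pl_one_bounded ht0 ht1 (hf.min measurable_const) (hg.min measurable_const) hh
      (bd f N) (bd g M) fun x y => (le_trans ?_ (H x y))
    gcongr <;> exact min_le_left _ _
  have e1 : (∫⁻ x, f x) ^ t = ⨆ N : ℕ, (∫⁻ x, min (f x) N) ^ t := by
    refine tendsto_nhds_unique ((ENNReal.continuous_rpow_const.tendsto _).comp (tr f hf)) ?_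
    exact tendsto_atTop_iSup fun i j hij => ENNReal.rpow_le_rpow (lintegral_mono fun x =>
      min_le_min le_rfl (by exact_mod_cast hij)) ht0.le
  have e2 : (∫⁻ x, g x) ^ (1 - t) = ⨆ N : ℕ, (∫⁻ x, min (g x) N) ^ (1 - t) := by
    refine tendsto_nhds_unique ((ENNReal.continuous_rpow_const.tendsto _).comp (tr g hg)) ?_
    exact tendsto_atTop_iSup fun i j hij => ENNReal.rpow_le_rpow (lintegral_mono fun x =>
      min_le_min le_rfl (by exact_mod_cast hij)) s1.le
  rw [e1, e2, ENNReal.iSup_mul]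
  refine iSup_le fun N => ?_
  rw [ENNReal.mul_iSup]
  exact iSup_le fun M => step N M

/-- Prékopa–Leindler on `ℝⁿ`, by induction on the dimension and Fubini. -/
lemma pl_pi {t : ℝ} (ht0 : 0 < t) (ht1 : t < 1) (n : ℕ) : ∀ {f g h : (Fin n → ℝ) → ℝ≥0∞},
    Measurable f → Measurable g → Measurable h →
    (∀ x y, f x ^ t * g y ^ (1 - t) ≤ h (t • x + (1 - t) • y)) →
    (∫⁻ x, f x) ^ t * (∫⁻ x, g x) ^ (1 - t) ≤ ∫⁻ x, h x := by
  induction n with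
  | zero =>
    intro f g h hf hg hh H
    have : ∀ u : (Fin 0 → ℝ) → ℝ≥0∞, ∫⁻ x, u x = u 0 := by
      intro u
      rw [show (volume : Measure (Fin 0 → ℝ)) = Measure.dirac 0 from
        Measure.volume_pi_eq_dirac 0]
      rw [lintegral_dirac]
    rw [this, this, this]
    convert H 0 0 using 2
  | succ n ih =>
    intro f g h hf hg hh H
    let e := (MeasurableEquiv.piFinSuccAbove (fun _ : Fin (n + 1) => ℝ) 0).symm
    have he : MeasurePreserving e := (volume_preserving_piFinSuccAbove (fun _ => ℝ) 0).symm
    have tr : ∀ u : (Fin (n + 1) → ℝ) → ℝ≥0∞, Measurable u →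
        ∫⁻ x, u x = ∫⁻ a : ℝ, ∫⁻ z : Fin n → ℝ, u (e (a, z)) := by
      intro u hu
      rw [← he.lintegral_comp hu, Measure.volume_eq_prod]
      exact lintegral_prod _ (hu.comp e.measurable).aemeasurable
    have me : ∀ u : (Fin (n + 1) → ℝ) → ℝ≥0∞, Measurable u →
        Measurable fun a : ℝ => ∫⁻ z : Fin n → ℝ, u (e (a, z)) := fun u hu =>
      (hu.comp e.measurable).lintegral_prod_right'
    rw [tr f hf, tr g hg, tr h hh]
    refine pl_one ht0 ht1 (me f hf) (me g hg) (me h hh) fun a b => ?_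
    refine ih (hf.comp (e.measurable.comp measurable_prodMk_left))
      (hg.comp (e.measurable.comp measurable_prodMk_left))
      (hh.comp (e.measurable.comp measurable_prodMk_left)) fun x y => ?_
    refine (H _ _).trans (le_of_eq ?_)
    congr 1
    ext i
    simp only [e, MeasurableEquiv.piFinSuccAbove, Pi.add_apply, Pi.smul_apply, smul_eq_mul]
    refine Fin.cases ?_ (fun j => ?_) i <;> simp

/-- The Prékopa–Leindler inequality. -/
theorem prekopa_leindler {t : ℝ} (ht0 : 0 < t) (ht1 : t < 1) {n : ℕ}
    {f g h : EuclideanSpace ℝ (Fin n) → ℝ≥0∞}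
    (hf : Measurable f) (hg : Measurable g) (hh : Measurable h)
    (H : ∀ x y, f x ^ t * g y ^ (1 - t) ≤ h (t • x + (1 - t) • y)) :
    (∫⁻ x, f x) ^ t * (∫⁻ x, g x) ^ (1 - t) ≤ ∫⁻ x, h x := by
  have hp := PiLp.volume_preserving_toLp (Fin n)
  have mt := hp.measurable
  rw [← hp.lintegral_comp hf, ← hp.lintegral_comp hg, ← hp.lintegral_comp hh]
  refine pl_pi ht0 ht1 n (hf.comp mt) (hg.comp mt) (hh.comp mt) fun x y => ?_
  exact H _ _

end

/-! ### Tails of log-concave measures and finiteness of `κₙ` -/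

section

/-- Marginal tails of a log-concave measure are log-concave. -/
lemma tail_logConcave {n : ℕ} {μ : Measure (EuclideanSpace ℝ (Fin n))}
    (hμ : IsLogConcaveMeasure μ) {u : EuclideanSpace ℝ (Fin n) → ℝ} (hum : Measurable u)
    (hu : ∀ x y (a b : ℝ), u (a • x + b • y) = a * u x + b * u y)
    (r s t : ℝ) (ht0 : 0 < t) (ht1 : t < 1) :
    μ {x | r < u x} ^ t * μ {x | s < u x} ^ (1 - t) ≤ μ {x | t * r + (1 - t) * s < u x} := by
  obtain ⟨p, hpm, ⟨hp0, hp⟩, rfl⟩ := hμ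
  have hs : ∀ r, MeasurableSet {x | r < u x} := fun r => measurableSet_lt measurable_const hum
  rw [withDensity_apply _ (hs _), withDensity_apply _ (hs _), withDensity_apply _ (hs _),
    ← lintegral_indicator (hs _), ← lintegral_indicator (hs _), ← lintegral_indicator (hs _)]
  refine prekopa_leindler ht0 ht1 (hpm.ennreal_ofReal.indicator (hs _))
    (hpm.ennreal_ofReal.indicator (hs _)) (hpm.ennreal_ofReal.indicator (hs _)) ?_
  intro x y
  have h1 : 0 < 1 - t := by linarith
  by_cases hx : r < u x
  · by_cases hy : s < u y
    · have hxy : t • x + (1 - t) • y ∈ {x | t * r + (1 - t) * s < u x} := by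
        change t * r + (1 - t) * s < u (t • x + (1 - t) • y)
        rw [hu]; gcongr
      rw [Set.indicator_of_mem (show x ∈ {x | r < u x} from hx),
        Set.indicator_of_mem (show y ∈ {x | s < u x} from hy), Set.indicator_of_mem hxy,
        ENNReal.ofReal_rpow_of_nonneg (hp0 _) ht0.le, ENNReal.ofReal_rpow_of_nonneg (hp0 _) h1.le,
        ← ENNReal.ofReal_mul (Real.rpow_nonneg (hp0 _) _)]
      exact ENNReal.ofReal_le_ofReal (hp x y t ht0.le ht1.le)
    · rw [Set.indicator_of_notMem (show y ∉ {x | s < u x} from hy), ENNReal.zero_rpow_of_pos h1]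
      simp
  · rw [Set.indicator_of_notMem (show x ∉ {x | r < u x} from hx), ENNReal.zero_rpow_of_pos ht0]
    simp

/-- Exponential one-sided tail for a normalized linear functional of a log-concave measure. -/
lemma tail_exp {n : ℕ} {μ : Measure (EuclideanSpace ℝ (Fin n))} [IsProbabilityMeasure μ]
    (hμ : IsLogConcaveMeasure μ) {u : EuclideanSpace ℝ (Fin n) → ℝ} (hum : Measurable u)
    (hu : ∀ x y (a b : ℝ), u (a • x + b • y) = a * u x + b * u y)
    (h2 : ∫ x, u x ^ 2 ∂μ = 1) (r : ℝ) (hr : 0 < r) :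
    μ.real {x | r < |u x|} ≤ 2 * Real.exp (-r / 4) := by
  have h_integ : Integrable (fun x => u x ^ 2) μ := by
    by_contra h
    rw [integral_undef h] at h2; norm_num at h2
  have cheb : μ.real {x | 2 ≤ |u x|} ≤ 1 / 4 := by
    have := mul_meas_ge_le_integral_of_nonneg (μ := μ) (f := fun x => u x ^ 2)
      (Filter.Eventually.of_forall fun x => by positivity) h_integ 4
    have e : {x | 2 ≤ |u x|} = {x | 4 ≤ u x ^ 2} := by
      ext x
      change 2 ≤ |u x| ↔ 4 ≤ u x ^ 2
      rw [← sq_abs]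
      constructor <;> intro h <;> nlinarith [abs_nonneg (u x)]
    rw [h2, ← e] at this
    linarith
  by_cases hr2 : r ≤ 2
  · have h1 : (1:ℝ) ≤ 2 * Real.exp (-r / 4) := by
      have := Real.add_one_le_exp (-r/4)
      linarith
    exact le_trans measureReal_le_one h1
  push Not at hr2
  have one : ∀ v : EuclideanSpace ℝ (Fin n) → ℝ, Measurable v →
      (∀ x y (a b : ℝ), v (a • x + b • y) = a * v x + b * v y) →
      μ.real {x | 2 ≤ |v x|} ≤ 1 / 4 → μ.real {x | r < v x} ≤ Real.exp (-r / 4) := by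
    intro v hvm hv hc
    have ms : ∀ r, MeasurableSet {x | r < v x} := fun r => measurableSet_lt measurable_const hvm
    have ht0 : 0 < (r - 2) / (r + 2) := div_pos (by linarith) (by linarith)
    have h1t : 1 - (r - 2) / (r + 2) = 4 / (r + 2) := by field_simp; ring
    have ht1 : (r - 2) / (r + 2) < 1 := by rw [div_lt_one (by linarith)]; linarith
    have key := tail_logConcave hμ hvm hv (-2) r _ ht0 ht1
    have e : (r - 2) / (r + 2) * -2 + (1 - (r - 2) / (r + 2)) * r = 2 := by
      rw [h1t]; field_simp; ring
    rw [e, h1t] at key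
    have key2 := ENNReal.toReal_mono (by finiteness) key
    rw [ENNReal.toReal_mul, ← ENNReal.toReal_rpow, ← ENNReal.toReal_rpow] at key2
    change μ.real _ ^ _ * μ.real _ ^ _ ≤ μ.real _ at key2
    set G := μ.real {x | r < v x}
    have b1 : μ.real {x | 2 < v x} ≤ 1 / 4 :=
      (measureReal_mono fun x (hx : 2 < v x) => (hx.le.trans (le_abs_self _) :)).trans hc
    have b2 : 3 / 4 ≤ μ.real {x | -2 < v x} := by
      have hcompl := probReal_compl_eq_one_sub (μ := μ) (ms (-2))
      have : μ.real {x | -2 < v x}ᶜ ≤ 1 / 4 := by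
        refine (measureReal_mono fun x hx => ?_).trans hc
        have : ¬ (-2 < v x) := hx
        change 2 ≤ |v x|
        rw [le_abs]; right; linarith
      linarith
    have b3 : (3 / 4 : ℝ) ≤ μ.real {x | -2 < v x} ^ ((r - 2) / (r + 2)) := by
      calc (3 / 4 : ℝ) = (3 / 4 : ℝ) ^ (1 : ℝ) := by simp
        _ ≤ (3 / 4 : ℝ) ^ ((r - 2) / (r + 2)) :=
          Real.rpow_le_rpow_of_exponent_ge (by norm_num) (by norm_num) ht1.le
        _ ≤ _ := Real.rpow_le_rpow (by norm_num) b2 ht0.le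
    have hG0 : 0 ≤ G := measureReal_nonneg
    have hGp : 0 ≤ G ^ (4 / (r + 2)) := Real.rpow_nonneg hG0 _
    have b4 : G ^ (4 / (r + 2)) ≤ 1 / 3 := by nlinarith
    have b5 : G ≤ (1 / 3 : ℝ) ^ ((r + 2) / 4) := by
      have := Real.rpow_le_rpow hGp b4 (show 0 ≤ (r + 2) / 4 by linarith)
      rw [← Real.rpow_mul hG0] at this
      have e2 : 4 / (r + 2) * ((r + 2) / 4) = 1 := by
        have : r + 2 ≠ 0 := by linarith
        field_simp
      rwa [e2, Real.rpow_one] at this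
    refine b5.trans ?_
    calc (1 / 3 : ℝ) ^ ((r + 2) / 4) ≤ (Real.exp (-1)) ^ ((r + 2) / 4) := by
          refine Real.rpow_le_rpow (by norm_num) ?_ (by linarith)
          rw [Real.exp_neg, one_div]
          exact inv_anti₀ (Real.exp_pos _) (by linarith [Real.exp_one_lt_d9])
      _ = Real.exp (-(r + 2) / 4) := by rw [← Real.exp_mul]; ring_nf
      _ ≤ _ := Real.exp_le_exp.2 (by linarith)
  have A1 := one u hum hu cheb
  have A2 := one (fun x => - u x) hum.neg (fun x y a b => by rw [hu]; ring) (by simpa using cheb)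
  have hsub : {x | r < |u x|} ⊆ {x | r < u x} ∪ {x | r < -u x} := by
    intro x hx
    have hx' : r < |u x| := hx
    exact lt_abs.1 hx'
  calc μ.real {x | r < |u x|} ≤ _ := measureReal_mono hsub
    _ ≤ _ := measureReal_union_le _ _
    _ ≤ _ := by linarith

/-- Universal bound for third absolute moments of coordinates. -/
lemma exists_third_moment_bound : ∃ C : ℝ, 0 ≤ C ∧ ∀ {n : ℕ}
    {μ : Measure (EuclideanSpace ℝ (Fin n))}, IsProbabilityMeasure μ →
    IsLogConcaveMeasure μ → IsIsotropicMeasure μ → ∀ i,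
      ∫⁻ x, ENNReal.ofReal (|x i| ^ 3) ∂μ ≤ ENNReal.ofReal C := by
  have h_integ : Integrable (fun t : ℝ => t ^ 2 * (2 * Real.exp (-t / 4)))
      (volume.restrict (Set.Ioi 0)) := by
    have := (integrableOn_rpow_mul_exp_neg_mul_rpow (s := 2) (p := 1) (b := 1/4)
      (by norm_num) one_pos (by norm_num)).const_mul 2
    refine this.congr ?_
    filter_upwards with t
    simp only [Real.rpow_one]
    norm_num
    ring_nf
  refine ⟨3 * ∫ t in Set.Ioi 0, t ^ 2 * (2 * Real.exp (-t / 4)), ?_, ?_⟩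
  · exact mul_nonneg (by norm_num) (integral_nonneg fun t => by positivity)
  intro n μ hP hμ hiso i
  have hum : Measurable fun x : EuclideanSpace ℝ (Fin n) => x i := by fun_prop
  have h2 : ∫ x, x i ^ 2 ∂μ = 1 := by simpa [sq] using hiso.2 i i
  have := lintegral_rpow_eq_lintegral_meas_lt_mul μ (f := fun x => |x i|)
    (Filter.Eventually.of_forall fun x => abs_nonneg _) hum.abs.aemeasurable
    (p := 3) (by norm_num)
  have e : ∀ x : EuclideanSpace ℝ (Fin n), |x i| ^ (3:ℝ) = |x i| ^ 3 := fun x => Real.rpow_natCast _ 3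
  simp only [e] at this
  rw [this, ENNReal.ofReal_mul (by norm_num)]
  gcongr
  rw [ofReal_integral_eq_lintegral_ofReal h_integ (Filter.Eventually.of_forall fun t => by positivity)]
  refine setLIntegral_mono' measurableSet_Ioi fun t ht => ?_
  have ht : 0 < t := ht
  have e2 : t ^ ((3:ℝ) - 1) = t ^ 2 := by norm_num
  rw [e2, mul_comm, ENNReal.ofReal_mul (by positivity)]
  gcongr
  have := tail_exp hμ hum (fun x y a b => by simp) h2 t ht
  rw [← ENNReal.ofReal_toReal (measure_ne_top μ _)]
  exact ENNReal.ofReal_le_ofReal this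

lemma mul3_le_cubes {a b c : ℝ} (ha : 0 ≤ a) (hb : 0 ≤ b) (hc : 0 ≤ c) :
    a * (b * c) ≤ a ^ 3 + b ^ 3 + c ^ 3 := by
  set m := max a (max b c)
  have h1 : a * (b * c) ≤ m * (m * m) := by
    gcongr <;> simp [m]
  have h2 : m ^ 3 ≤ a ^ 3 + b ^ 3 + c ^ 3 := by
    have := pow_nonneg ha 3
    have := pow_nonneg hb 3
    have := pow_nonneg hc 3
    rcases max_choice a (max b c) with h | h
    · rw [show m = a from h]; linarith
    · rcases max_choice b c with h' | h'
      · rw [show m = b from h.trans h']; linarith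
      · rw [show m = c from h.trans h']; linarith
  linarith [show m * (m * m) = m ^ 3 by ring]

/-- The set whose supremum defines `κₙ` is bounded, so that `sSup` is a genuine supremum. -/
lemma kappa_bddAbove (n : ℕ) :
    BddAbove {s : ℝ | ∃ μ : Measure (EuclideanSpace ℝ (Fin n)), IsProbabilityMeasure μ ∧
    IsLogConcaveMeasure μ ∧ IsIsotropicMeasure μ ∧ ∃ h : 0 < n,
    s = hsNorm (Matrix.of fun i j => ∫ x, x ⟨0, h⟩ * (x i * x j) ∂μ)} := by
  obtain ⟨C, hC0, hC⟩ := exists_third_moment_bound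
  refine ⟨Real.sqrt (∑ _i : Fin n, ∑ _j : Fin n, (3 * C) ^ 2), ?_⟩
  rintro s ⟨μ, hP, hμ, hiso, h, rfl⟩
  refine Real.sqrt_le_sqrt ?_
  refine Finset.sum_le_sum fun i _ => Finset.sum_le_sum fun j _ => ?_
  rw [Matrix.of_apply, sq_le_sq, abs_of_nonneg (show 0 ≤ 3 * C by positivity)]
  have h1 := enorm_integral_le_lintegral_enorm (μ := μ)
    (fun x : EuclideanSpace ℝ (Fin n) => x ⟨0, h⟩ * (x i * x j))
  have h2 : ∫⁻ x, ‖x ⟨0, h⟩ * (x i * x j)‖ₑ ∂μ ≤ ENNReal.ofReal (3 * C) := by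
    calc ∫⁻ x, ‖x ⟨0, h⟩ * (x i * x j)‖ₑ ∂μ
        ≤ ∫⁻ x, (ENNReal.ofReal (|x ⟨0, h⟩| ^ 3) + ENNReal.ofReal (|x i| ^ 3))
          + ENNReal.ofReal (|x j| ^ 3) ∂μ := by
          refine lintegral_mono fun x => ?_
          rw [← ENNReal.ofReal_add (by positivity) (by positivity),
            ← ENNReal.ofReal_add (by positivity) (by positivity), Real.enorm_eq_ofReal_abs]
          refine ENNReal.ofReal_le_ofReal ?_
          rw [abs_mul, abs_mul]
          exact mul3_le_cubes (abs_nonneg _) (abs_nonneg _) (abs_nonneg _)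
      _ = (∫⁻ x, ENNReal.ofReal (|x ⟨0, h⟩| ^ 3) ∂μ + ∫⁻ x, ENNReal.ofReal (|x i| ^ 3) ∂μ)
          + ∫⁻ x, ENNReal.ofReal (|x j| ^ 3) ∂μ := by
          rw [lintegral_add_left (by fun_prop), lintegral_add_left (by fun_prop)]
      _ ≤ (ENNReal.ofReal C + ENNReal.ofReal C) + ENNReal.ofReal C := by
          gcongr <;> exact hC hP hμ hiso _
      _ = ENNReal.ofReal (3 * C) := by
          rw [← ENNReal.ofReal_add hC0 hC0, ← ENNReal.ofReal_add (by positivity) hC0]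
          ring_nf
  rw [Real.enorm_eq_ofReal_abs] at h1
  exact (ENNReal.ofReal_le_ofReal_iff (by positivity)).1 (h1.trans h2)

lemma hsNorm_le_kappa {n : ℕ} (h : 0 < n) {μ : Measure (EuclideanSpace ℝ (Fin n))}
    (hP : IsProbabilityMeasure μ) (hμ : IsLogConcaveMeasure μ) (hiso : IsIsotropicMeasure μ) :
    hsNorm (Matrix.of fun i j => ∫ x, x ⟨0, h⟩ * (x i * x j) ∂μ) ≤ kappaConst n :=
  le_csSup (kappa_bddAbove n) ⟨μ, hP, hμ, hiso, h, rfl⟩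

end

/-! ### The product exponential measure and `1 ≤ κₙ` -/

section

/-- Density of a centred exponential random variable. -/
def expDens (t : ℝ) : ℝ := if -1 ≤ t then Real.exp (-(t + 1)) else 0

lemma expDens_nonneg (t : ℝ) : 0 ≤ expDens t := by
  unfold expDens; split_ifs <;> positivity

lemma expDens_measurable : Measurable expDens :=
  Measurable.ite measurableSet_Ici (by fun_prop) measurable_const

lemma expDens_logConcave (x y t : ℝ) (h0 : 0 ≤ t) (h1 : t ≤ 1) :
    expDens x ^ t * expDens y ^ (1 - t) ≤ expDens (t * x + (1 - t) * y) := by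
  rcases h0.eq_or_lt with rfl | h0'
  · simp
  rcases h1.eq_or_lt with rfl | h1'
  · simp
  have hs : 0 < 1 - t := by linarith
  by_cases hx : -1 ≤ x
  · by_cases hy : -1 ≤ y
    · have hxy : -1 ≤ t * x + (1 - t) * y := by nlinarith
      simp only [expDens, hx, hy, hxy, if_true]
      rw [← Real.exp_mul, ← Real.exp_mul, ← Real.exp_add]
      exact Real.exp_le_exp.2 (by linarith)
    · simp only [expDens, hy, if_false]
      rw [Real.zero_rpow hs.ne', mul_zero]; exact expDens_nonneg _
  · simp only [expDens, hx, if_false]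
    rw [Real.zero_rpow h0'.ne', zero_mul]; exact expDens_nonneg _

lemma expDens_integral (g : ℝ → ℝ) :
    ∫ t, g t * expDens t = ∫ u in Set.Ioi 0, g (u - 1) * Real.exp (-u) := by
  rw [← integral_sub_right_eq_self (fun t => g t * expDens t) 1, ← integral_Ici_eq_integral_Ioi,
    ← integral_indicator measurableSet_Ici]
  congr 1; ext u
  simp only [Set.indicator, Set.mem_Ici, expDens]
  by_cases h : 0 ≤ u
  · rw [if_pos (by linarith), if_pos h]; ring_nf
  · rw [if_neg (by linarith), if_neg h, mul_zero]

lemma integrable_pow_exp (d : ℕ) :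
    Integrable (fun u : ℝ => u ^ d * Real.exp (-u)) (volume.restrict (Set.Ioi 0)) := by
  have := Real.GammaIntegral_convergent (s := d + 1) (by positivity)
  refine this.congr ?_
  filter_upwards with u
  simp [mul_comm]

lemma integral_pow_exp (d : ℕ) :
    ∫ u in Set.Ioi (0:ℝ), u ^ d * Real.exp (-u) = d.factorial := by
  rw [← Real.Gamma_nat_eq_factorial, Real.Gamma_eq_integral (by positivity)]
  congr 1; ext u
  simp [mul_comm]

/-- The `d`-th moment of the centred exponential distribution. -/
def expMoment (d : ℕ) : ℝ := ∫ t, t ^ d * expDens t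

lemma expMoment_zero : expMoment 0 = 1 := by
  rw [expMoment, expDens_integral]
  simpa using integral_pow_exp 0

lemma expMoment_one : expMoment 1 = 0 := by
  rw [expMoment, expDens_integral]
  have h : ∀ u : ℝ, (u - 1) ^ 1 * Real.exp (-u)
      = u ^ 1 * Real.exp (-u) - u ^ 0 * Real.exp (-u) := fun u => by ring
  simp only [h]
  rw [integral_sub (integrable_pow_exp 1) (integrable_pow_exp 0), integral_pow_exp,
    integral_pow_exp]
  simp

lemma expMoment_two : expMoment 2 = 1 := by
  rw [expMoment, expDens_integral]
  have h : ∀ u : ℝ, (u - 1) ^ 2 * Real.exp (-u)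
      = u ^ 2 * Real.exp (-u) - 2 * (u ^ 1 * Real.exp (-u)) + u ^ 0 * Real.exp (-u) :=
    fun u => by ring
  simp only [h]
  have i0 := integrable_pow_exp 0
  have i1 := integrable_pow_exp 1
  have i2 := integrable_pow_exp 2
  rw [integral_add (f := fun u => u ^ 2 * Real.exp (-u) - 2 * (u ^ 1 * Real.exp (-u))) (i2.sub (i1.const_mul 2)) i0, integral_sub i2 (i1.const_mul 2),
    integral_const_mul, integral_pow_exp, integral_pow_exp, integral_pow_exp]
  norm_num [Nat.factorial]

lemma expMoment_three : expMoment 3 = 2 := by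
  rw [expMoment, expDens_integral]
  have h : ∀ u : ℝ, (u - 1) ^ 3 * Real.exp (-u)
      = (u ^ 3 * Real.exp (-u) - 3 * (u ^ 2 * Real.exp (-u)))
        + (3 * (u ^ 1 * Real.exp (-u)) - u ^ 0 * Real.exp (-u)) :=
    fun u => by ring
  simp only [h]
  have i0 := integrable_pow_exp 0
  have i1 := integrable_pow_exp 1
  have i2 := integrable_pow_exp 2
  have i3 := integrable_pow_exp 3
  rw [integral_add (f := fun u => u ^ 3 * Real.exp (-u) - 3 * (u ^ 2 * Real.exp (-u)))
    (g := fun u => 3 * (u ^ 1 * Real.exp (-u)) - u ^ 0 * Real.exp (-u))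
    (i3.sub (i2.const_mul 3)) ((i1.const_mul 3).sub i0),
    integral_sub i3 (i2.const_mul 3), integral_sub (i1.const_mul 3) i0,
    integral_const_mul, integral_const_mul, integral_pow_exp, integral_pow_exp, integral_pow_exp,
    integral_pow_exp]
  norm_num [Nat.factorial]

/-- The product of `n` centred exponential distributions. -/
def expMeasure (n : ℕ) : Measure (EuclideanSpace ℝ (Fin n)) :=
  volume.withDensity fun x => ENNReal.ofReal (∏ i, expDens (x i))

lemma expMeasure_moment {n : ℕ} (d : Fin n → ℕ) :
    ∫ x, ∏ i, x i ^ d i ∂(expMeasure n) = ∏ i, expMoment (d i) := by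
  have hm : Measurable fun x : EuclideanSpace ℝ (Fin n) => ∏ i, expDens (x i) :=
    Finset.measurable_prod _ fun i _ => expDens_measurable.comp (by fun_prop)
  rw [expMeasure, integral_withDensity_eq_integral_toReal_smul hm.ennreal_ofReal (by simp)]
  simp only [smul_eq_mul]
  have h1 : ∀ x : EuclideanSpace ℝ (Fin n), (ENNReal.ofReal (∏ i, expDens (x i))).toReal
      * ∏ i, x i ^ d i = ∏ i, (x i ^ d i * expDens (x i)) := fun x => by
    rw [ENNReal.toReal_ofReal (Finset.prod_nonneg fun i _ => expDens_nonneg _),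
      Finset.prod_mul_distrib, mul_comm]
  simp only [h1]
  have h2 := (EuclideanSpace.volume_preserving_symm_measurableEquiv_toLp (Fin n)).symm
    |>.integral_comp' (f := (MeasurableEquiv.toLp 2 (Fin n → ℝ)))
    (fun x : EuclideanSpace ℝ (Fin n) => ∏ i, (x i ^ d i * expDens (x i)))
  rw [← h2]
  exact integral_fintype_prod_volume_eq_prod (fun i (t : ℝ) => t ^ d i * expDens t)

lemma expMeasure_logConcave (n : ℕ) : IsLogConcaveMeasure (expMeasure n) := by
  refine ⟨fun x => ∏ i, expDens (x i),
    Finset.measurable_prod _ fun i _ => expDens_measurable.comp (by fun_prop),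
    ⟨fun x => Finset.prod_nonneg fun i _ => expDens_nonneg _, ?_⟩, rfl⟩
  intro x y t h0 h1
  dsimp only
  rw [← Real.finsetProd_rpow _ _ fun i _ => expDens_nonneg _,
    ← Real.finsetProd_rpow _ _ fun i _ => expDens_nonneg _, ← Finset.prod_mul_distrib]
  refine Finset.prod_le_prod (fun i _ => mul_nonneg (Real.rpow_nonneg (expDens_nonneg _) _)
    (Real.rpow_nonneg (expDens_nonneg _) _)) fun i _ => ?_
  simpa using expDens_logConcave (x i) (y i) t h0 h1

lemma expMeasure_prob (n : ℕ) : IsProbabilityMeasure (expMeasure n) := by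
  have h := expMeasure_moment (n := n) (fun _ => 0)
  simp only [pow_zero, Finset.prod_const_one, expMoment_zero, integral_const, smul_eq_mul,
    mul_one] at h
  exact ⟨by
    have : (expMeasure n) Set.univ ≠ ⊤ := by
      intro h'
      simp [Measure.real, h'] at h
    rw [← ENNReal.ofReal_toReal this]
    change ENNReal.ofReal ((expMeasure n).real Set.univ) = 1
    rw [h]; simp⟩

lemma prod_pow_single {n : ℕ} (x : Fin n → ℝ) (i : Fin n) :
    ∏ k, x k ^ (Pi.single i 1 : Fin n → ℕ) k = x i := by
  rw [Finset.prod_eq_single i]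
  · simp
  · intro b _ hb; simp [Pi.single_eq_of_ne hb]
  · simp

lemma expMeasure_isotropic (n : ℕ) : IsIsotropicMeasure (expMeasure n) := by
  constructor
  · intro i
    have h := expMeasure_moment (n := n) (Pi.single i 1)
    simp only [prod_pow_single] at h
    rw [h]
    exact Finset.prod_eq_zero (Finset.mem_univ i) (by simp [expMoment_one])
  · intro i j
    have h := expMeasure_moment (n := n) (Pi.single i 1 + Pi.single j 1)
    simp only [Pi.add_apply, pow_add, Finset.prod_mul_distrib, prod_pow_single] at h
    rw [h]
    split_ifs with hij
    · subst hij
      refine Finset.prod_eq_one fun k _ => ?_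
      by_cases hk : k = i
      · subst hk; simp [expMoment_two]
      · simp [Pi.single_eq_of_ne hk, expMoment_zero]
    · exact Finset.prod_eq_zero (Finset.mem_univ i) (by
        simp [Pi.single_eq_of_ne hij, expMoment_one])

/-- The product of centred exponential distributions has `E X₁³ = 2`. -/
lemma one_le_kappa {n : ℕ} (hn : 0 < n) : 1 ≤ kappaConst n := by
  refine le_trans ?_ (hsNorm_le_kappa hn (expMeasure_prob n) (expMeasure_logConcave n)
    (expMeasure_isotropic n))
  have h := expMeasure_moment (n := n)
    (Pi.single ⟨0, hn⟩ 1 + (Pi.single ⟨0, hn⟩ 1 + Pi.single ⟨0, hn⟩ 1))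
  simp only [Pi.add_apply, pow_add, Finset.prod_mul_distrib, prod_pow_single] at h
  have h2 : ∏ k, expMoment ((Pi.single ⟨0, hn⟩ 1 : Fin n → ℕ) k +
      ((Pi.single ⟨0, hn⟩ 1 : Fin n → ℕ) k + (Pi.single ⟨0, hn⟩ 1 : Fin n → ℕ) k)) = 2 := by
    rw [Finset.prod_eq_single ⟨0, hn⟩]
    · simp [expMoment_three]
    · intro b _ hb; simp [Pi.single_eq_of_ne hb, expMoment_zero]
    · simp
  rw [h2] at h
  refine Real.le_sqrt_of_sq_le ?_
  calc (1:ℝ) ^ 2 ≤ (∫ x, x ⟨0, hn⟩ * (x ⟨0, hn⟩ * x ⟨0, hn⟩) ∂(expMeasure n)) ^ 2 := by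
        rw [h]; norm_num
    _ ≤ ∑ j, (∫ x, x ⟨0, hn⟩ * (x ⟨0, hn⟩ * x j) ∂(expMeasure n)) ^ 2 :=
      Finset.single_le_sum (f := fun j =>
        (∫ x, x ⟨0, hn⟩ * (x ⟨0, hn⟩ * x j) ∂(expMeasure n)) ^ 2)
        (fun j _ => sq_nonneg _) (Finset.mem_univ _)
    _ ≤ _ := Finset.single_le_sum (f := fun i => ∑ j,
        (∫ x, x ⟨0, hn⟩ * (x i * x j) ∂(expMeasure n)) ^ 2)
        (fun i _ => Finset.sum_nonneg fun j _ => sq_nonneg _) (Finset.mem_univ _)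

end

/-! ### Exponential tilts and differentiation under the integral -/

section

/-- Euclidean `n`-space. -/
abbrev Eu (n : ℕ) := EuclideanSpace ℝ (Fin n)

variable {n : ℕ}

/-- The exponential weight `exp (⟪θ, x⟫ - s ‖x‖² / 2)` of stochastic localization. -/
def ew (s : ℝ) (θ x : Eu n) : ℝ := Real.exp (⟪θ, x⟫ - s * ‖x‖ ^ 2 / 2)

/-- `Psi ν h s θ = ∫ h(x) exp (⟪θ, x⟫ - s ‖x‖² / 2) dν(x)`. -/
def Psi (ν : Measure (Eu n)) (h : Eu n → ℝ) (s : ℝ) (θ : Eu n) : ℝ :=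
  ∫ x, h x * ew s θ x ∂ν

/-- Integrability condition under which `Psi ν h` may be differentiated for `s > s₁`. -/
def Adm (ν : Measure (Eu n)) (h : Eu n → ℝ) (s₁ : ℝ) : Prop :=
  AEStronglyMeasurable h ν ∧
    ∀ r : ℝ, Integrable (fun x => |h x| * Real.exp (r * ‖x‖ - s₁ * ‖x‖ ^ 2 / 2)) ν

lemma ew_pos (s : ℝ) (θ x : Eu n) : 0 < ew s θ x := Real.exp_pos _

lemma ew_continuous : Continuous fun p : ℝ × Eu n × Eu n => ew p.1 p.2.1 p.2.2 := by
  unfold ew; fun_prop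

lemma ew_continuous_x (s : ℝ) (θ : Eu n) : Continuous fun x => ew s θ x := by
  unfold ew; fun_prop

lemma ew_le {s s₁ r : ℝ} {θ x : Eu n} (hs : s₁ ≤ s) (hθ : ‖θ‖ ≤ r) :
    ew s θ x ≤ Real.exp (r * ‖x‖ - s₁ * ‖x‖ ^ 2 / 2) := by
  refine Real.exp_le_exp.2 ?_
  have h1 : ⟪θ, x⟫ ≤ r * ‖x‖ := (real_inner_le_norm θ x).trans (by gcongr)
  have h2 : s₁ * ‖x‖ ^ 2 ≤ s * ‖x‖ ^ 2 := by gcongr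
  linarith

lemma Adm.mul_of_le {ν : Measure (Eu n)} {h w : Eu n → ℝ} {s₁ C r₀ : ℝ} (hh : Adm ν h s₁)
    (hw : AEStronglyMeasurable w ν) (hb : ∀ x, |w x| ≤ C * Real.exp (r₀ * ‖x‖)) :
    Adm ν (fun x => w x * h x) s₁ := by
  refine ⟨hw.mul hh.1, fun r => ?_⟩
  refine ((hh.2 (r₀ + r)).const_mul C).mono' ?_ ?_
  · have : Continuous fun x : Eu n => Real.exp (r * ‖x‖ - s₁ * ‖x‖ ^ 2 / 2) := by fun_prop
    exact (hw.mul hh.1).norm.mul this.aestronglyMeasurable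
  · filter_upwards with x
    rw [Real.norm_of_nonneg (by positivity), abs_mul]
    calc |w x| * |h x| * Real.exp (r * ‖x‖ - s₁ * ‖x‖ ^ 2 / 2)
        ≤ C * Real.exp (r₀ * ‖x‖) * |h x| * Real.exp (r * ‖x‖ - s₁ * ‖x‖ ^ 2 / 2) := by
          gcongr; exact hb x
      _ = C * (|h x| * (Real.exp (r₀ * ‖x‖) * Real.exp (r * ‖x‖ - s₁ * ‖x‖ ^ 2 / 2))) := by ring
      _ = _ := by rw [← Real.exp_add]; ring_nf

lemma Adm.inner {ν : Measure (Eu n)} {h : Eu n → ℝ} {s₁ : ℝ} (hh : Adm ν h s₁) (w : Eu n) :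
    Adm ν (fun x => ⟪w, x⟫ * h x) s₁ := by
  refine hh.mul_of_le (C := ‖w‖) (r₀ := 1) (by fun_prop) fun x => ?_
  refine (abs_real_inner_le_norm w x).trans ?_
  have := Real.add_one_le_exp (1 * ‖x‖)
  gcongr; linarith

lemma Adm.coord {ν : Measure (Eu n)} {h : Eu n → ℝ} {s₁ : ℝ} (hh : Adm ν h s₁) (k : Fin n) :
    Adm ν (fun x => x k * h x) s₁ := by
  refine hh.mul_of_le (C := 1) (r₀ := 1) (by fun_prop) fun x => ?_
  have := Real.add_one_le_exp (1 * ‖x‖)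
  have h2 : |x k| ≤ ‖x‖ := by simpa using PiLp.norm_apply_le x k
  linarith

lemma Adm.normSq {ν : Measure (Eu n)} {h : Eu n → ℝ} {s₁ : ℝ} (hh : Adm ν h s₁) :
    Adm ν (fun x => ‖x‖ ^ 2 * h x) s₁ := by
  refine hh.mul_of_le (C := 2) (r₀ := 1) (by fun_prop) fun x => ?_
  have := Real.quadratic_le_exp_of_nonneg (x := 1 * ‖x‖) (by positivity)
  rw [abs_of_nonneg (by positivity)]
  nlinarith [norm_nonneg x]

lemma Adm.integrable {ν : Measure (Eu n)} {h : Eu n → ℝ} {s₁ s : ℝ} (hh : Adm ν h s₁)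
    (hs : s₁ ≤ s) (θ : Eu n) : Integrable (fun x => h x * ew s θ x) ν := by
  refine (hh.2 ‖θ‖).mono' (hh.1.mul (ew_continuous_x s θ).aestronglyMeasurable) ?_
  filter_upwards with x
  rw [norm_mul, Real.norm_eq_abs, Real.norm_of_nonneg (ew_pos _ _ _).le]
  gcongr
  exact ew_le hs le_rfl

/-- The linear functional `(σ, τ) ↦ ⟪τ, x⟫ - σ ‖x‖² / 2`. -/
def ewL (x : Eu n) : (ℝ × Eu n) →L[ℝ] ℝ :=
  (innerSL ℝ x).comp (ContinuousLinearMap.snd ℝ ℝ (Eu n)) -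
    (‖x‖ ^ 2 / 2) • ContinuousLinearMap.fst ℝ ℝ (Eu n)

lemma ewL_apply (x : Eu n) (p : ℝ × Eu n) : ewL x p = ⟪p.2, x⟫ - p.1 * ‖x‖ ^ 2 / 2 := by
  simp [ewL, real_inner_comm, mul_comm]; ring

lemma ewL_norm_le (x : Eu n) : ‖ewL x‖ ≤ ‖x‖ + ‖x‖ ^ 2 := by
  refine ContinuousLinearMap.opNorm_le_bound _ (by positivity) fun p => ?_
  rw [ewL_apply, Real.norm_eq_abs]
  have h1 := abs_real_inner_le_norm p.2 x
  have h2 : ‖p.2‖ ≤ ‖p‖ := norm_snd_le p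
  have h3 : |p.1| ≤ ‖p‖ := norm_fst_le p
  have h4 : |p.1 * ‖x‖ ^ 2 / 2| ≤ ‖p‖ * ‖x‖ ^ 2 := by
    rw [abs_div, abs_mul, abs_of_nonneg (sq_nonneg ‖x‖), abs_two]
    have : |p.1| * ‖x‖ ^ 2 ≤ ‖p‖ * ‖x‖ ^ 2 := by gcongr
    have : 0 ≤ ‖p‖ * ‖x‖ ^ 2 := by positivity
    linarith
  calc |⟪p.2, x⟫ - p.1 * ‖x‖ ^ 2 / 2| ≤ |⟪p.2, x⟫| + |p.1 * ‖x‖ ^ 2 / 2| := abs_sub _ _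
    _ ≤ ‖p‖ * ‖x‖ + ‖p‖ * ‖x‖ ^ 2 := by
      refine add_le_add (h1.trans ?_) h4
      gcongr
    _ = _ := by ring

lemma ewL_continuous : Continuous (ewL : Eu n → _) := by
  unfold ewL
  fun_prop

/-- Joint Fréchet differentiability of `Psi`. -/
lemma Psi_hasFDerivAt {ν : Measure (Eu n)} {h : Eu n → ℝ} {s₁ s : ℝ} (hh : Adm ν h s₁)
    (hs : s₁ < s) (θ : Eu n) :
    ∃ L : (ℝ × Eu n) →L[ℝ] ℝ,
      (∀ p, L p = -(1 / 2) * p.1 * Psi ν (fun x => ‖x‖ ^ 2 * h x) s θ +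
        Psi ν (fun x => ⟪p.2, x⟫ * h x) s θ) ∧
      HasFDerivAt (fun p : ℝ × Eu n => Psi ν h p.1 p.2) L (s, θ) := by
  set F' : ℝ × Eu n → Eu n → ((ℝ × Eu n) →L[ℝ] ℝ) := fun p x => (h x * ew p.1 p.2 x) • ewL x
  have hε : 0 < s - s₁ := by linarith
  have hadm : Adm ν (fun x => (‖x‖ + ‖x‖ ^ 2) * h x) s₁ := by
    refine hh.mul_of_le (C := 3) (r₀ := 1) (by fun_prop) fun x => ?_
    have := Real.quadratic_le_exp_of_nonneg (x := 1 * ‖x‖) (by positivity)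
    rw [abs_of_nonneg (by positivity)]
    nlinarith [norm_nonneg x]
  have hbound := hadm.2 (‖θ‖ + (s - s₁))
  have hmeas : ∀ p : ℝ × Eu n, AEStronglyMeasurable (fun x => h x * ew p.1 p.2 x) ν :=
    fun p => hh.1.mul (ew_continuous_x _ _).aestronglyMeasurable
  have hF'm : AEStronglyMeasurable (F' (s, θ)) ν :=
    (hmeas (s, θ)).smul ewL_continuous.aestronglyMeasurable
  have hle : ∀ x, ∀ p ∈ Metric.ball (s, θ) (s - s₁), ‖F' p x‖ ≤
      |(‖x‖ + ‖x‖ ^ 2) * h x| * Real.exp ((‖θ‖ + (s - s₁)) * ‖x‖ - s₁ * ‖x‖ ^ 2 / 2) := by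
    intro x p hp
    have hp' : dist p (s, θ) < s - s₁ := hp
    rw [Prod.dist_eq, max_lt_iff] at hp'
    have h1 : s₁ ≤ p.1 := by
      have := (abs_lt.1 (Real.dist_eq p.1 s ▸ hp'.1)).1
      linarith
    have h2 : ‖p.2‖ ≤ ‖θ‖ + (s - s₁) := by
      have h3 : ‖p.2 - θ‖ < s - s₁ := by simpa [dist_eq_norm] using hp'.2
      have := norm_le_norm_add_norm_sub θ p.2
      rw [norm_sub_rev] at this
      linarith
    simp only [F']
    rw [norm_smul, norm_mul, Real.norm_eq_abs, Real.norm_of_nonneg (ew_pos _ _ _).le, abs_mul,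
      abs_of_nonneg (show 0 ≤ ‖x‖ + ‖x‖ ^ 2 by positivity)]
    calc |h x| * ew p.1 p.2 x * ‖ewL x‖
        ≤ |h x| * Real.exp ((‖θ‖ + (s - s₁)) * ‖x‖ - s₁ * ‖x‖ ^ 2 / 2) * (‖x‖ + ‖x‖ ^ 2) := by
          gcongr
          · exact ew_le h1 h2
          · exact ewL_norm_le x
      _ = _ := by ring
  have main := hasFDerivAt_integral_of_dominated_of_fderiv_le (μ := ν) (𝕜 := ℝ)
    (F := fun (p : ℝ × Eu n) x => h x * ew p.1 p.2 x) (F' := F') (x₀ := (s, θ))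
    (Metric.ball_mem_nhds _ hε) (Filter.Eventually.of_forall hmeas)
    (hh.integrable hs.le θ) hF'm (Filter.Eventually.of_forall hle) hbound
    (Filter.Eventually.of_forall fun x p _ => by
      have h1 : HasFDerivAt (fun p : ℝ × Eu n => ewL x p) (ewL x) p := (ewL x).hasFDerivAt
      have h2 := (h1.exp).const_mul (h x)
      simp only [ewL_apply] at h2
      simp only [F', ew]
      rw [mul_smul]
      exact h2)
  refine ⟨_, fun p => ?_, main⟩
  have h_integ : Integrable (F' (s, θ)) ν :=
    hbound.mono' hF'm (Filter.Eventually.of_forall fun x =>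
      hle x _ (Metric.mem_ball_self hε))
  rw [ContinuousLinearMap.integral_apply h_integ]
  simp only [F', Psi, smul_apply, ewL_apply, smul_eq_mul]
  rw [← integral_const_mul, ← integral_add ((hh.normSq.integrable hs.le θ).const_mul _)
    ((hh.inner _).integrable hs.le θ)]
  congr 1; ext x; ring

/-- Derivative of `Psi` along a curve. -/
lemma Psi_curve {ν : Measure (Eu n)} {h : Eu n → ℝ} {s₁ : ℝ} (hh : Adm ν h s₁)
    {σ : ℝ → ℝ} {τ : ℝ → Eu n} {σ' r : ℝ} {τ' : Eu n} (hσ : HasDerivAt σ σ' r)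
    (hτ : HasDerivAt τ τ' r) (hs : s₁ < σ r) :
    HasDerivAt (fun r => Psi ν h (σ r) (τ r))
      (-(1 / 2) * σ' * Psi ν (fun x => ‖x‖ ^ 2 * h x) (σ r) (τ r) +
        Psi ν (fun x => ⟪τ', x⟫ * h x) (σ r) (τ r)) r := by
  obtain ⟨L, hL, hd⟩ := Psi_hasFDerivAt hh hs (τ r)
  have := hd.comp_hasDerivAt r (hσ.prodMk hτ)
  rw [hL] at this
  exact this

lemma Psi_continuousAt {ν : Measure (Eu n)} {h : Eu n → ℝ} {s₁ s : ℝ} (hh : Adm ν h s₁)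
    (hs : s₁ < s) (θ : Eu n) : ContinuousAt (fun p : ℝ × Eu n => Psi ν h p.1 p.2) (s, θ) := by
  obtain ⟨L, _, hd⟩ := Psi_hasFDerivAt hh hs θ
  exact hd.continuousAt

end

/-! ### Gaussian averages -/

section

variable {n : ℕ}

/-- The centred Gaussian density on `ℝⁿ` with covariance `v • 1`. -/
def gk (v : ℝ) (z : Eu n) : ℝ := Real.exp (-(n / 2 * Real.log (2 * π * v)) - ‖z‖ ^ 2 / (2 * v))

lemma gk_pos (v : ℝ) (z : Eu n) : 0 < gk v z := Real.exp_pos _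

lemma gk_continuous (v : ℝ) : Continuous (gk v : Eu n → ℝ) := by unfold gk; fun_prop

lemma stdGaussian_eq : stdGaussian n =
    volume.withDensity fun x : Eu n => ENNReal.ofReal (gk 1 x) := by
  unfold stdGaussian gk
  congr 1; ext x; congr 1
  rw [Real.rpow_def_of_pos (by positivity), ← Real.exp_add]
  congr 1; ring_nf

lemma integrable_exp_neg_normSq {b : ℝ} (hb : 0 < b) :
    Integrable (fun x : Eu n => Real.exp (-b * ‖x‖ ^ 2)) := by
  by_contra h
  have h1 := GaussianFourier.integral_rexp_neg_mul_sq_norm (V := Eu n) hb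
  rw [integral_undef h] at h1
  have : 0 < (π / b) ^ (Module.finrank ℝ (Eu n) / 2 : ℝ) := by positivity
  linarith

lemma gk_eq (v : ℝ) (z : Eu n) :
    gk v z = Real.exp (-(n / 2 * Real.log (2 * π * v))) * Real.exp (-(1 / (2 * v)) * ‖z‖ ^ 2) := by
  rw [gk, ← Real.exp_add]; congr 1; ring

lemma gk_integrable {v : ℝ} (hv : 0 < v) : Integrable (gk v : Eu n → ℝ) := by
  have := (integrable_exp_neg_normSq (n := n) (b := 1 / (2 * v)) (by positivity)).const_mul
    (Real.exp (-(n / 2 * Real.log (2 * π * v))))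
  exact this.congr (Filter.Eventually.of_forall fun z => (gk_eq v z).symm)

lemma gk_integral {v : ℝ} (hv : 0 < v) : ∫ z : Eu n, gk v z = 1 := by
  simp only [gk_eq]
  rw [integral_const_mul, GaussianFourier.integral_rexp_neg_mul_sq_norm (by positivity),
    Real.rpow_def_of_pos (by positivity), ← Real.exp_add, Real.exp_eq_one_iff]
  have : π / (1 / (2 * v)) = 2 * π * v := by field_simp
  rw [this, finrank_euclideanSpace_fin]; ring

lemma gk_neg (v : ℝ) (z : Eu n) : gk v (-z) = gk v z := by simp [gk]

/-- A Gaussian translate is the exponential weight times a factor independent of `y`. -/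
lemma gk_sub {v : ℝ} (hv : 0 < v) (x y : Eu n) :
    gk v (y - x) = gk v x * ew (1 / v) ((1 / v) • x) y := by
  rw [gk, gk, ew, ← Real.exp_add]
  congr 1
  rw [norm_sub_sq_real, inner_smul_left, real_inner_comm]
  simp; field_simp; ring

lemma gk_sub_smul {v : ℝ} (hv : 0 < v) (x y : Eu n) :
    gk v (x - v • y) = gk v x * ew v x y := by
  rw [gk, gk, ew, ← Real.exp_add]
  congr 1
  rw [norm_sub_sq_real, inner_smul_right, norm_smul, Real.norm_of_nonneg hv.le]
  field_simp; ring

lemma gk_curve {v : ℝ → ℝ} {x : ℝ → Eu n} {r v' : ℝ} {x' : Eu n} (hv : HasDerivAt v v' r)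
    (hx : HasDerivAt x x' r) (h0 : 0 < v r) :
    HasDerivAt (fun r => gk (v r) (x r))
      (gk (v r) (x r) * (v' * (-(n / (2 * v r)) + ‖x r‖ ^ 2 / (2 * v r ^ 2)) -
        ⟪x r, x'⟫ / v r)) r := by
  have h1 : HasDerivAt (fun r => Real.log (2 * π * v r)) (2 * π * v' / (2 * π * v r)) r :=
    (hv.const_mul (2 * π)).log (by positivity)
  have h2 : HasDerivAt (fun r => ‖x r‖ ^ 2) (2 * ⟪x r, x'⟫) r := hx.norm_sq
  have h3 := h2.div (hv.const_mul 2) (by positivity)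
  have h4 := ((h1.const_mul (n / 2 : ℝ)).neg.sub h3).exp
  have e : (fun r => gk (v r) (x r)) = fun r => Real.exp
      (-(n / 2 * Real.log (2 * π * v r)) - ‖x r‖ ^ 2 / (2 * v r)) := rfl
  rw [e]
  refine h4.congr_deriv ?_
  simp only [gk, Pi.sub_apply, Pi.neg_apply, Pi.div_apply]
  congr 1
  have : v r ≠ 0 := h0.ne'
  field_simp
  ring

/-- Gaussian average `∫ h(y) gk v (y - x) dy`. -/
def Mh (h : Eu n → ℝ) (v : ℝ) (x : Eu n) : ℝ := ∫ y, h y * gk v (y - x)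

lemma Mh_eq (h : Eu n → ℝ) {v : ℝ} (hv : 0 < v) (x : Eu n) :
    Mh h v x = gk v x * Psi volume h (1 / v) ((1 / v) • x) := by
  rw [Mh, Psi, ← integral_const_mul]
  congr 1; ext y
  rw [gk_sub hv]; ring

/-- Functions integrable against every Gaussian weight with arbitrary exponential factors. -/
def AdmV (h : Eu n → ℝ) : Prop := ∀ s, 0 < s → Adm volume h s

lemma AdmV.coord {h : Eu n → ℝ} (hh : AdmV h) (k : Fin n) : AdmV fun x => x k * h x :=
  fun s hs => (hh s hs).coord k
lemma AdmV.inner {h : Eu n → ℝ} (hh : AdmV h) (w : Eu n) : AdmV fun x => ⟪w, x⟫ * h x :=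
  fun s hs => (hh s hs).inner w
lemma AdmV.normSq {h : Eu n → ℝ} (hh : AdmV h) : AdmV fun x => ‖x‖ ^ 2 * h x :=
  fun s hs => (hh s hs).normSq

lemma admV_one : AdmV (fun _ : Eu n => (1 : ℝ)) := by
  refine fun s hs => ⟨aestronglyMeasurable_const, fun r => ?_⟩
  refine ((integrable_exp_neg_normSq (n := n) (b := s / 4) (by positivity)).const_mul
    (Real.exp (r ^ 2 / s))).mono' (by fun_prop) ?_
  filter_upwards with x
  rw [Real.norm_of_nonneg (by positivity), abs_one, one_mul, ← Real.exp_add]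
  refine Real.exp_le_exp.2 ?_
  have : 0 ≤ (r - s / 2 * ‖x‖) ^ 2 / s := by positivity
  have e : (r - s / 2 * ‖x‖) ^ 2 / s = r ^ 2 / s - r * ‖x‖ + s / 4 * ‖x‖ ^ 2 := by
    field_simp; ring
  linarith

lemma AdmV.of_le {w : Eu n → ℝ} (hw : Continuous w) {C : ℝ} (hb : ∀ x, |w x| ≤ C * ‖x‖) :
    AdmV w := by
  intro s hs
  have := (admV_one (n := n) s hs).mul_of_le (w := w) (C := |C|) (r₀ := 1)
    hw.aestronglyMeasurable fun x => by
      have := Real.add_one_le_exp (1 * ‖x‖)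
      calc |w x| ≤ C * ‖x‖ := hb x
        _ ≤ |C| * ‖x‖ := by gcongr; exact le_abs_self C
        _ ≤ _ := by gcongr; linarith
  simpa using this

lemma AdmV.integrable {h : Eu n → ℝ} (hh : AdmV h) {v : ℝ} (hv : 0 < v) (x : Eu n) :
    Integrable fun y => h y * gk v (y - x) := by
  have := ((hh (1 / v) (by positivity)).integrable le_rfl ((1 / v) • x)).const_mul (gk v x)
  refine this.congr (Filter.Eventually.of_forall fun y => ?_)
  simp only [gk_sub hv]; ring

lemma Mh_inner {h : Eu n → ℝ} (hh : AdmV h) {v : ℝ} (hv : 0 < v) (x w : Eu n) :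
    Mh (fun y => ⟪w, y⟫ * h y) v x = ∑ i, w i * Mh (fun y => y i * h y) v x := by
  simp only [Mh, ← integral_const_mul]
  rw [← integral_finsetSum _ fun i _ => ((hh.coord i).integrable hv x).const_mul _]
  congr 1; ext y
  simp only [PiLp.inner_apply, Finset.sum_mul]
  refine Finset.sum_congr rfl fun i _ => ?_
  simp; ring

lemma Mh_normSq {h : Eu n → ℝ} (hh : AdmV h) {v : ℝ} (hv : 0 < v) (x : Eu n) :
    Mh (fun y => ‖y‖ ^ 2 * h y) v x = ∑ i, Mh (fun y => y i * (y i * h y)) v x := by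
  simp only [Mh]
  rw [← integral_finsetSum _ fun i _ => (((hh.coord i).coord i).integrable hv x)]
  congr 1; ext y
  simp only [EuclideanSpace.norm_sq_eq, Finset.sum_mul]
  refine Finset.sum_congr rfl fun i _ => ?_
  rw [Real.norm_eq_abs, sq_abs]; ring

/-- The derivative of `Mh h` with respect to the variance. -/
def Mv (h : Eu n → ℝ) (v : ℝ) (x : Eu n) : ℝ :=
  -(n / (2 * v)) * Mh h v x + 1 / (2 * v ^ 2) *
    ∑ i, (Mh (fun y => y i * (y i * h y)) v x - 2 * x i * Mh (fun y => y i * h y) v x +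
      x i ^ 2 * Mh h v x)

/-- The derivative of `Mh h` in the direction of the `i`-th coordinate vector. -/
def Mi (i : Fin n) (h : Eu n → ℝ) (v : ℝ) (x : Eu n) : ℝ :=
  1 / v * (Mh (fun y => y i * h y) v x - x i * Mh h v x)

lemma Mh_curve {h : Eu n → ℝ} (hh : AdmV h) {v : ℝ → ℝ} {x : ℝ → Eu n} {r v' : ℝ} {x' : Eu n}
    (hv : HasDerivAt v v' r) (hx : HasDerivAt x x' r) (h0 : 0 < v r) :
    HasDerivAt (fun r => Mh h (v r) (x r))
      (v' * Mv h (v r) (x r) + ∑ i, x' i * Mi i h (v r) (x r)) r := by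
  have hne : v r ≠ 0 := h0.ne'
  have hvi : HasDerivAt (fun r => 1 / v r) (-v' / v r ^ 2) r := by
    simpa using hv.fun_inv hne
  have hxi := hvi.smul hx
  have h1 : 1 / (2 * v r) < 1 / v r := one_div_lt_one_div_of_lt h0 (by linarith)
  have hP := Psi_curve (hh (1 / (2 * v r)) (by positivity)) hvi hxi h1
  have hG := gk_curve hv hx h0
  have key := hG.mul hP
  have ev : (fun r => Mh h (v r) (x r)) =ᶠ[nhds r]
      fun r => gk (v r) (x r) * Psi volume h (1 / v r) ((1 / v r) • x r) := by
    filter_upwards [hv.continuousAt.eventually (lt_mem_nhds h0)] with r hr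
    exact Mh_eq h hr _
  refine (key.congr_of_eventuallyEq ev).congr_deriv ?_
  have e1 : gk (v r) (x r) * Psi volume (fun y => ‖y‖ ^ 2 * h y) (1 / v r) ((1 / v r) • x r)
      = ∑ i, Mh (fun y => y i * (y i * h y)) (v r) (x r) := by
    rw [← Mh_eq _ h0, Mh_normSq hh h0]
  have e2 : ∀ w : Eu n, gk (v r) (x r) *
      Psi volume (fun y => ⟪w, y⟫ * h y) (1 / v r) ((1 / v r) • x r)
      = ∑ i, w i * Mh (fun y => y i * h y) (v r) (x r) := fun w => by
    rw [← Mh_eq _ h0, Mh_inner hh h0]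
  have e3 : gk (v r) (x r) * Psi volume h (1 / v r) ((1 / v r) • x r) = Mh h (v r) (x r) :=
    (Mh_eq _ h0 _).symm
  have f1 : Mv h (v r) (x r) = -(n / (2 * v r)) * Mh h (v r) (x r) + 1 / (2 * v r ^ 2) *
      (∑ i, Mh (fun y => y i * (y i * h y)) (v r) (x r) -
        2 * ∑ i, x r i * Mh (fun y => y i * h y) (v r) (x r) +
        ‖x r‖ ^ 2 * Mh h (v r) (x r)) := by
    rw [Mv, EuclideanSpace.norm_sq_eq, Finset.sum_add_distrib, Finset.sum_sub_distrib,
      Finset.sum_mul, Finset.mul_sum]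
    simp [mul_assoc]
  have f2 : ∑ i, x' i * Mi i h (v r) (x r) = 1 / v r *
      (∑ i, x' i * Mh (fun y => y i * h y) (v r) (x r) - ⟪x r, x'⟫ * Mh h (v r) (x r)) := by
    rw [PiLp.inner_apply, Finset.sum_mul, ← Finset.sum_sub_distrib, Finset.mul_sum]
    refine Finset.sum_congr rfl fun i _ => ?_
    simp [Mi]; ring
  have f3 : ∑ i, ((1 / v r) • x' + (-v' / v r ^ 2) • x r) i * Mh (fun y => y i * h y) (v r) (x r)
      = 1 / v r * ∑ i, x' i * Mh (fun y => y i * h y) (v r) (x r) +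
        (-v' / v r ^ 2) * ∑ i, x r i * Mh (fun y => y i * h y) (v r) (x r) := by
    rw [Finset.mul_sum, Finset.mul_sum, ← Finset.sum_add_distrib]
    refine Finset.sum_congr rfl fun i _ => ?_
    simp; ring
  have e2' := e2 ((1 / v r) • x' + (-v' / v r ^ 2) • x r)
  rw [f3] at e2'
  rw [f1, f2, ← e3, ← e1]
  have expand : ∀ G P P2 PI c d : ℝ, G * c * P + G * (d * P2 + PI)
      = c * (G * P) + (d * (G * P2) + G * PI) := by intros; ring
  change gk (v r) (x r) * _ * Psi volume h (1 / v r) ((1 / v r) • x r) + gk (v r) (x r) *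
    (_ * Psi volume (fun y => ‖y‖ ^ 2 * h y) (1 / v r) ((1 / v r) • x r) +
     Psi volume (fun y => ⟪(1 / v r) • x' + (-v' / v r ^ 2) • x r, y⟫ * h y) (1 / v r)
      ((1 / v r) • x r)) = _
  rw [expand, e2', e1, e3]
  field_simp
  ring

lemma Mh_continuousAt {h : Eu n → ℝ} (hh : AdmV h) {v : ℝ} (hv : 0 < v) (x : Eu n) :
    ContinuousAt (fun p : ℝ × Eu n => Mh h p.1 p.2) (v, x) := by
  have ev : (fun p : ℝ × Eu n => Mh h p.1 p.2) =ᶠ[nhds (v, x)]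
      fun p => gk p.1 p.2 * Psi volume h (1 / p.1) ((1 / p.1) • p.2) := by
    filter_upwards [continuousAt_fst.eventually (lt_mem_nhds (a := 0) (b := (v, x).1) hv)] with p hp
    exact Mh_eq h hp _
  refine ContinuousAt.congr ?_ ev.symm
  have h1 : 1 / (2 * v) < 1 / v := one_div_lt_one_div_of_lt hv (by linarith)
  have hP := Psi_continuousAt (hh (1 / (2 * v)) (by positivity)) h1 ((1 / v) • x)
  have hne : v ≠ 0 := hv.ne'
  have hc : ContinuousAt (fun p : ℝ × Eu n => (1 / p.1, (1 / p.1) • p.2)) (v, x) := by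
    have : ContinuousAt (fun p : ℝ × Eu n => 1 / p.1) (v, x) :=
      continuousAt_const.div continuousAt_fst hne
    exact this.prodMk (this.smul continuousAt_snd)
  refine ContinuousAt.mul ?_ (ContinuousAt.comp (f := fun p : ℝ × Eu n => (1 / p.1, (1 / p.1) • p.2))
    (g := fun p : ℝ × Eu n => Psi volume h p.1 p.2) hP hc)
  unfold gk
  refine ContinuousAt.rexp (ContinuousAt.sub (ContinuousAt.neg (ContinuousAt.mul
    continuousAt_const (ContinuousAt.log (by fun_prop) (by positivity)))) (ContinuousAt.div
    (by fun_prop) (by fun_prop) (by positivity)))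

end

/-! ### Gaussian smoothing of gauges -/

section

variable {n : ℕ}

/-- Second derivatives of `Mh h`. -/
def Mij (i j : Fin n) (h : Eu n → ℝ) (v : ℝ) (x : Eu n) : ℝ :=
  1 / v * (Mi j (fun y => y i * h y) v x - ((if i = j then 1 else 0) * Mh h v x +
    x i * Mi j h v x))

lemma Mi_curve {h : Eu n → ℝ} (hh : AdmV h) {v : ℝ} {x : ℝ → Eu n} {r : ℝ} {x' : Eu n}
    (hx : HasDerivAt x x' r) (h0 : 0 < v) (i : Fin n) :
    HasDerivAt (fun r => Mi i h v (x r)) (∑ j, x' j * Mij i j h v (x r)) r := by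
  have h1 := Mh_curve (hh.coord i) (hasDerivAt_const r v) hx h0
  have h2 := Mh_curve hh (hasDerivAt_const r v) hx h0
  have h3 : HasDerivAt (fun r => x r i) (x' i) r := by
    have := (EuclideanSpace.proj (𝕜 := ℝ) i : Eu n →L[ℝ] ℝ).hasFDerivAt.comp_hasDerivAt r hx
    exact this
  have h4 := (h1.sub (h3.mul h2)).const_mul (1 / v)
  refine h4.congr_deriv ?_
  simp only [Mij, zero_mul, zero_add]
  have e : ∑ j, x' j * (1 / v * (Mi j (fun y => y i * h y) v (x r) -
      ((if i = j then 1 else 0) * Mh h v (x r) + x r i * Mi j h v (x r))))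
      = 1 / v * (∑ j, x' j * Mi j (fun y => y i * h y) v (x r) -
        (∑ j, x' j * ((if i = j then 1 else 0) * Mh h v (x r))
          + x r i * ∑ j, x' j * Mi j h v (x r))) := by
    rw [Finset.mul_sum, ← Finset.sum_add_distrib, ← Finset.sum_sub_distrib, Finset.mul_sum]
    exact Finset.sum_congr rfl fun j _ => by ring
  rw [e]
  simp

/-- The heat equation. -/
lemma Mv_eq (h : Eu n → ℝ) {v : ℝ} (hv : 0 < v) (x : Eu n) :
    Mv h v x = 1 / 2 * ∑ i, Mij i i h v x := by
  have hne := hv.ne'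
  have e : ∑ i, Mij i i h v x = ∑ i, (1 / v ^ 2 * (Mh (fun y => y i * (y i * h y)) v x
      - 2 * x i * Mh (fun y => y i * h y) v x + x i ^ 2 * Mh h v x) - 1 / v * Mh h v x) := by
    refine Finset.sum_congr rfl fun i _ => ?_
    simp only [Mij, Mi, if_true]
    field_simp; ring
  rw [e, Finset.sum_sub_distrib, Mv, Finset.sum_const, ← Finset.mul_sum]
  simp
  field_simp
  ring

lemma IsGauge.continuous {f : Eu n → ℝ} (hf : IsGauge f) : Continuous f :=
  hf.2.1.locallyLipschitz.continuous

lemma IsGauge.zero {f : Eu n → ℝ} (hf : IsGauge f) : f 0 = 0 := by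
  simpa using hf.2.2 0 le_rfl 0

lemma IsGauge.add_le {f : Eu n → ℝ} (hf : IsGauge f) (x y : Eu n) : f (x + y) ≤ f x + f y := by
  have h := hf.2.1.2 (Set.mem_univ x) (Set.mem_univ y) (by norm_num : (0 : ℝ) ≤ 1 / 2)
    (by norm_num : (0 : ℝ) ≤ 1 / 2) (by norm_num)
  have h2 := hf.2.2 (1 / 2) (by norm_num) (x + y)
  rw [smul_add] at h2
  rw [h2] at h
  simp only [smul_eq_mul] at h
  linarith

lemma IsGauge.exists_le {f : Eu n → ℝ} (hf : IsGauge f) : ∃ C, 0 ≤ C ∧ ∀ x, f x ≤ C * ‖x‖ := by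
  obtain ⟨C, hC⟩ := (isCompact_sphere (0 : Eu n) 1).bddAbove_image hf.continuous.continuousOn
  refine ⟨max C 0, le_max_right _ _, fun x => ?_⟩
  by_cases hx : x = 0
  · simp [hx, hf.zero]
  have hx' : ‖x‖ ≠ 0 := norm_ne_zero_iff.2 hx
  have h1 : f (‖x‖⁻¹ • x) ≤ C := hC ⟨_, by simp [norm_smul, hx'], rfl⟩
  have h2 := hf.2.2 ‖x‖ (norm_nonneg _) (‖x‖⁻¹ • x)
  rw [smul_smul, mul_inv_cancel₀ hx', one_smul] at h2
  rw [h2, mul_comm]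
  gcongr
  exact h1.trans (le_max_left _ _)

lemma IsGauge.admV {f : Eu n → ℝ} (hf : IsGauge f) : AdmV f := by
  obtain ⟨C, _, hC⟩ := hf.exists_le
  exact AdmV.of_le hf.continuous (C := C) fun x => by rw [abs_of_nonneg (hf.1 x)]; exact hC x

lemma Mh_scale (f : Eu n → ℝ) {r : ℝ} (hr : 0 < r) (x : Eu n) :
    Mh f (r ^ 2) x = ∫ z, f (x + r • z) * gk 1 z := by
  have e1 : Mh f (r ^ 2) x = ∫ y, f (x + y) * gk (r ^ 2) y := by
    rw [Mh, ← integral_add_left_eq_self (fun y => f y * gk (r ^ 2) (y - x)) x]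
    simp
  have e2 := Measure.integral_comp_smul volume (fun y : Eu n => f (x + y) * gk (r ^ 2) y) r
  rw [finrank_euclideanSpace_fin, abs_of_pos (by positivity)] at e2
  rw [e1]
  have e3 : ∀ z : Eu n, gk 1 z = r ^ n * gk (r ^ 2) (r • z) := by
    intro z
    have h1 : r ^ n = Real.exp (n * Real.log r) := by
      rw [mul_comm, Real.exp_mul, Real.exp_log hr, Real.rpow_natCast]
    have h2 : Real.log (2 * π * r ^ 2) = Real.log (2 * π * 1) + 2 * Real.log r := by
      rw [Real.log_mul (by positivity) (by positivity), Real.log_pow, mul_one]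
      norm_num
    rw [h1, gk, gk, ← Real.exp_add, norm_smul, Real.norm_of_nonneg hr.le, h2]
    congr 1
    field_simp
    ring
  have e4 : ∀ z : Eu n, f (x + r • z) * gk 1 z = r ^ n * (f (x + r • z) * gk (r ^ 2) (r • z)) :=
    fun z => by rw [e3]; ring
  simp only [e4]
  rw [integral_const_mul, e2, smul_eq_mul, ← mul_assoc, mul_inv_cancel₀ (by positivity), one_mul]

lemma integral_stdGaussian (f : Eu n → ℝ) :
    ∫ x, f x ∂(stdGaussian n) = ∫ z, f z * gk 1 z := by
  rw [stdGaussian_eq, integral_withDensity_eq_integral_toReal_smul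
    (gk_continuous 1).measurable.ennreal_ofReal (by simp)]
  congr 1; ext z
  rw [ENNReal.toReal_ofReal (gk_pos _ _).le, smul_eq_mul, mul_comm]

lemma IsGauge.integrable_shift {f : Eu n → ℝ} (hf : IsGauge f) (x : Eu n) {r : ℝ} (hr : 0 ≤ r) :
    Integrable fun z => f (x + r • z) * gk 1 z := by
  have h1 : Integrable fun z => f z * gk 1 z := by simpa using hf.admV.integrable one_pos 0
  refine (((gk_integrable (n := n) one_pos).const_mul (f x)).add (h1.const_mul r)).mono' ?_ ?_
  · have h2 : Continuous fun z => f (x + r • z) := hf.continuous.comp (by fun_prop)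
    exact (h2.mul (gk_continuous 1)).aestronglyMeasurable
  · filter_upwards with z
    have hg := gk_pos 1 z
    rw [Real.norm_of_nonneg (mul_nonneg (hf.1 _) hg.le)]
    have h3 := hf.add_le x (r • z)
    rw [hf.2.2 r hr] at h3
    simp only [Pi.add_apply]
    nlinarith

lemma deriv_nonpos_of_right {φ : ℝ → ℝ} {φ' r : ℝ} (h : HasDerivAt φ φ' r)
    (hφ : ∀ d, 0 < d → φ (r + d) ≤ φ r) : φ' ≤ 0 := by
  refine le_of_tendsto h.tendsto_slope_zero_right ?_
  filter_upwards [self_mem_nhdsWithin] with d hd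
  have hd' : 0 < d := hd
  have h1 := hφ d hd'
  have : 0 ≤ d⁻¹ := by positivity
  rw [smul_eq_mul]
  nlinarith

lemma deriv_nonneg_of_right {φ : ℝ → ℝ} {φ' r : ℝ} (h : HasDerivAt φ φ' r)
    (hφ : ∀ d, 0 < d → φ r ≤ φ (r + d)) : 0 ≤ φ' := by
  have := deriv_nonpos_of_right h.neg fun d hd => neg_le_neg (hφ d hd)
  linarith

/-- By subadditivity, increasing the standard deviation by `d` raises the smoothing `Mh f` by at
most `d ℓ`, where `ℓ` is the Gaussian mean of `f`. -/
lemma U_incr {f : Eu n → ℝ} (hf : IsGauge f) (x : Eu n) {r d : ℝ} (hr : 0 < r) (hd : 0 ≤ d) :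
    Mh f ((r + d) ^ 2) x ≤ Mh f (r ^ 2) x + d * ∫ z, f z ∂(stdGaussian n) := by
  have h1 : Integrable fun z => f z * gk 1 z := by simpa using hf.admV.integrable one_pos 0
  rw [Mh_scale f (by linarith), Mh_scale f hr, integral_stdGaussian, ← integral_const_mul,
    ← integral_add (hf.integrable_shift x hr.le) (h1.const_mul d)]
  refine integral_mono (hf.integrable_shift x (by linarith))
    ((hf.integrable_shift x hr.le).add (h1.const_mul d)) fun z => ?_
  have hg := gk_pos 1 z
  have h3 := hf.add_le (x + r • z) (d • z)
  rw [hf.2.2 d hd, add_assoc, ← add_smul] at h3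
  simp only [Pi.add_apply]
  nlinarith

lemma U_le {f : Eu n → ℝ} (hf : IsGauge f) (x : Eu n) {v : ℝ} (hv : 0 < v) :
    Mh f v x ≤ f x + √v * ∫ z, f z ∂(stdGaussian n) := by
  have h1 : Integrable fun z => f z * gk 1 z := by simpa using hf.admV.integrable one_pos 0
  have hr : 0 < √v := Real.sqrt_pos.2 hv
  obtain ⟨r, hrv⟩ : ∃ r, r = √v := ⟨_, rfl⟩
  have hv2 : v = r ^ 2 := by rw [hrv, Real.sq_sqrt hv.le]
  rw [← hrv] at hr ⊢
  rw [hv2, Mh_scale f hr, integral_stdGaussian, ← integral_const_mul]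
  calc ∫ z, f (x + r • z) * gk 1 z ≤ ∫ z, (f x * gk 1 z + r * (f z * gk 1 z)) := by
        refine integral_mono (hf.integrable_shift x hr.le)
          (((gk_integrable one_pos).const_mul _).add (h1.const_mul r)) fun z => ?_
        have hg := gk_pos 1 z
        have h3 := hf.add_le x (r • z)
        rw [hf.2.2 r hr.le] at h3
        simp only
        nlinarith
    _ = _ := by
        rw [integral_add ((gk_integrable one_pos).const_mul _) (h1.const_mul r),
          integral_const_mul, gk_integral one_pos, mul_one]

/-- Jensen's inequality for the Gaussian average. -/
lemma le_U {f : Eu n → ℝ} (hf : IsGauge f) (x : Eu n) {v : ℝ} (hv : 0 < v) : f x ≤ Mh f v x := by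
  have hr : 0 < √v := Real.sqrt_pos.2 hv
  obtain ⟨r, hrv⟩ : ∃ r, r = √v := ⟨_, rfl⟩
  have hv2 : v = r ^ 2 := by rw [hrv, Real.sq_sqrt hv.le]
  rw [← hrv] at hr
  have hi := hf.integrable_shift x hr.le
  have e : ∫ z, f (x + r • (-z)) * gk 1 z = ∫ z, f (x + r • z) * gk 1 z := by
    rw [← integral_neg_eq_self (fun z => f (x + r • z) * gk 1 z)]
    simp [gk_neg]
  have hi' : Integrable fun z => f (x + r • (-z)) * gk 1 z := by
    have := hi.comp_neg
    simpa [gk_neg] using this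
  rw [hv2, Mh_scale f hr]
  have key : ∫ z : Eu n, (2 * f x) * gk 1 z ≤
      ∫ z, (f (x + r • z) * gk 1 z + f (x + r • (-z)) * gk 1 z) := by
    refine integral_mono ((gk_integrable one_pos).const_mul _) (hi.add hi') fun z => ?_
    have hg := gk_pos 1 z
    have h3 := hf.add_le (x + r • z) (x + r • (-z))
    have h4 : (x + r • z) + (x + r • (-z)) = (2 : ℝ) • x := by module
    rw [h4, hf.2.2 2 (by norm_num)] at h3
    simp only
    nlinarith
  rw [integral_const_mul, gk_integral one_pos, integral_add hi hi', e] at key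
  linarith

/-- Subadditivity: `f z ≤ f (x + z) + f (-x)`. -/
lemma U_ge {f : Eu n → ℝ} (hf : IsGauge f) (x : Eu n) {v : ℝ} (hv : 0 < v) :
    √v * ∫ z, f z ∂(stdGaussian n) ≤ Mh f v x + f (-x) := by
  have h1 : Integrable fun z => f z * gk 1 z := by simpa using hf.admV.integrable one_pos 0
  have hr : 0 < √v := Real.sqrt_pos.2 hv
  obtain ⟨r, hrv⟩ : ∃ r, r = √v := ⟨_, rfl⟩
  have hv2 : v = r ^ 2 := by rw [hrv, Real.sq_sqrt hv.le]
  rw [← hrv] at hr ⊢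
  have hi := hf.integrable_shift x hr.le
  rw [hv2, Mh_scale f hr, integral_stdGaussian, ← integral_const_mul]
  have key : ∫ z, r * (f z * gk 1 z) ≤ ∫ z, (f (x + r • z) * gk 1 z + f (-x) * gk 1 z) := by
    refine integral_mono (h1.const_mul r) (hi.add ((gk_integrable one_pos).const_mul _))
      fun z => ?_
    have hg := gk_pos 1 z
    have h3 := hf.add_le (x + r • z) (-x)
    have h4 : (x + r • z) + (-x) = r • z := by module
    rw [h4, hf.2.2 r hr.le] at h3
    simp only
    nlinarith
  rwa [integral_add hi ((gk_integrable one_pos).const_mul _), integral_const_mul (f (-x)),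
    gk_integral one_pos, mul_one] at key

lemma U_nonneg {f : Eu n → ℝ} (hf : IsGauge f) (x : Eu n) (v : ℝ) : 0 ≤ Mh f v x :=
  integral_nonneg fun y => mul_nonneg (hf.1 y) (gk_pos _ _).le

lemma gaussian_nonneg {f : Eu n → ℝ} (hf : IsGauge f) : 0 ≤ ∫ z, f z ∂(stdGaussian n) := integral_nonneg hf.1

/-- The Laplacian of the Gaussian smoothing of a gauge is at most `ℓ / √v`. -/
lemma laplacian_U_le {f : Eu n → ℝ} (hf : IsGauge f) (x : Eu n) {v : ℝ} (hv : 0 < v) :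
    ∑ i, Mij i i f v x ≤ (∫ z, f z ∂(stdGaussian n)) / √v := by
  have hr : 0 < √v := Real.sqrt_pos.2 hv
  obtain ⟨r, hrv⟩ : ∃ r, r = √v := ⟨_, rfl⟩
  have hv2 : v = r ^ 2 := by rw [hrv, Real.sq_sqrt hv.le]
  rw [← hrv] at hr ⊢
  set ℓ := ∫ z, f z ∂(stdGaussian n)
  have hsq : HasDerivAt (fun r : ℝ => r ^ 2) (2 * r) r := by simpa using hasDerivAt_pow 2 r
  have hd := Mh_curve hf.admV hsq (hasDerivAt_const r x) (by positivity)
  simp only [PiLp.zero_apply, zero_mul, Finset.sum_const_zero, add_zero] at hd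
  rw [Mv_eq f (by positivity)] at hd
  have hd2 := hd.sub ((hasDerivAt_id r).const_mul ℓ)
  have hle : 2 * r * (1 / 2 * ∑ i, Mij i i f (r ^ 2) x) - ℓ * 1 ≤ 0 := by
    refine deriv_nonpos_of_right hd2 fun d hd => ?_
    have := U_incr hf x hr hd.le
    simp only [Pi.sub_apply, id]
    linarith
  rw [hv2, le_div_iff₀ hr]
  linarith

/-- The Gaussian smoothing of a convex function is convex. -/
lemma hessian_U_nonneg {f : Eu n → ℝ} (hf : IsGauge f) (x w : Eu n) {v : ℝ} (hv : 0 < v) :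
    0 ≤ ∑ i, ∑ j, w i * w j * Mij i j f v x := by
  obtain ⟨γ, hγd⟩ : ∃ γ : ℝ → Eu n, γ = fun r => x + r • w := ⟨_, rfl⟩
  have hγ : ∀ r, HasDerivAt γ w r := fun r => by
    rw [hγd]
    exact (((hasDerivAt_id r).smul_const w).const_add x).congr_deriv (one_smul _ _)
  have hd : ∀ r, HasDerivAt (fun r => Mh f v (γ r)) (∑ i, w i * Mi i f v (γ r)) r := fun r => by
    simpa using Mh_curve hf.admV (hasDerivAt_const r v) (hγ r) hv
  have hconv : ConvexOn ℝ Set.univ (fun r => Mh f v (γ r)) := by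
    have hr : 0 < √v := Real.sqrt_pos.2 hv
    obtain ⟨r, hrv⟩ : ∃ r, r = √v := ⟨_, rfl⟩
    have hv2 : v = r ^ 2 := by rw [hrv, Real.sq_sqrt hv.le]
    rw [← hrv] at hr
    refine ⟨convex_univ, fun a _ b _ p q hp hq hpq => ?_⟩
    simp only [hv2, Mh_scale f hr, smul_eq_mul]
    have ha := hf.integrable_shift (γ a) hr.le
    have hb := hf.integrable_shift (γ b) hr.le
    rw [← integral_const_mul, ← integral_const_mul,
      ← integral_add (ha.const_mul p) (hb.const_mul q)]
    refine integral_mono (hf.integrable_shift _ hr.le)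
      ((ha.const_mul p).add (hb.const_mul q)) fun z => ?_
    have hg := gk_pos 1 z
    have h := hf.2.1.2 (Set.mem_univ (γ a + r • z)) (Set.mem_univ (γ b + r • z)) hp hq hpq
    have e : p • (γ a + r • z) + q • (γ b + r • z) = γ (p * a + q * b) + r • z := by
      rw [hγd]
      have : q = 1 - p := by linarith
      subst this
      module
    rw [e] at h
    simp only [smul_eq_mul] at h ⊢
    nlinarith
  have hmono : Monotone fun r => ∑ i, w i * Mi i f v (γ r) := by
    have := hconv.monotoneOn_deriv fun r _ => (hd r).differentiableAt
    have e : deriv (fun r => Mh f v (γ r)) = fun r => ∑ i, w i * Mi i f v (γ r) :=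
      funext fun r => (hd r).deriv
    rwa [e, monotoneOn_univ] at this
  have hd2 : HasDerivAt (fun r => ∑ i, w i * Mi i f v (γ r))
      (∑ i, w i * ∑ j, w j * Mij i j f v (γ 0)) 0 :=
    HasDerivAt.fun_sum fun i _ => (Mi_curve hf.admV (hγ 0) hv i).const_mul (w i)
  have h0 := deriv_nonneg_of_right hd2 fun d hd => hmono (by linarith)
  have e0 : γ 0 = x := by simp [hγd]
  rw [e0] at h0
  refine h0.trans_eq (Finset.sum_congr rfl fun i _ => ?_)
  rw [Finset.mul_sum]
  exact Finset.sum_congr rfl fun j _ => by ring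

end

/-! ### Tilted expectations -/

section

variable {n : ℕ}

/-- A probability measure supported in the ball of radius `R` around the origin. -/
structure Tame (ν : Measure (Eu n)) (R : ℝ) : Prop where
  prob : IsProbabilityMeasure ν
  supp : ∀ᵐ x ∂ν, ‖x‖ ≤ R

lemma Tame.nonneg {ν : Measure (Eu n)} {R : ℝ} (hν : Tame ν R) : 0 ≤ R := by
  have := hν.prob
  obtain ⟨x, hx⟩ := hν.supp.exists
  exact (norm_nonneg x).trans hx

lemma exists_ball_bound {h : Eu n → ℝ} (hh : Continuous h) (R : ℝ) :
    ∃ B, 0 ≤ B ∧ ∀ x, ‖x‖ ≤ R → |h x| ≤ B := by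
  obtain ⟨C, hC⟩ := (isCompact_closedBall (0 : Eu n) R).bddAbove_image hh.abs.continuousOn
  refine ⟨max C 0, le_max_right _ _, fun x hx => (hC ⟨x, ?_, rfl⟩).trans (le_max_left _ _)⟩
  simpa using hx

lemma Tame.adm {ν : Measure (Eu n)} {R : ℝ} (hν : Tame ν R) {h : Eu n → ℝ} (hh : Continuous h)
    (s₁ : ℝ) : Adm ν h s₁ := by
  have := hν.prob
  refine ⟨hh.aestronglyMeasurable, fun r => ?_⟩
  have hc : Continuous fun x : Eu n => |h x| * Real.exp (r * ‖x‖ - s₁ * ‖x‖ ^ 2 / 2) := by fun_prop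
  obtain ⟨B, _, hB⟩ := exists_ball_bound hc R
  refine (integrable_const B).mono' hc.aestronglyMeasurable ?_
  filter_upwards [hν.supp] with x hx using hB x hx

lemma Tame.integrable {ν : Measure (Eu n)} {R : ℝ} (hν : Tame ν R) {h : Eu n → ℝ}
    (hh : Continuous h) (s : ℝ) (θ : Eu n) : Integrable (fun x => h x * ew s θ x) ν :=
  (hν.adm hh s).integrable le_rfl θ

lemma Psi_one_pos {ν : Measure (Eu n)} {R : ℝ} (hν : Tame ν R) (s : ℝ) (θ : Eu n) :
    0 < Psi ν (fun _ => 1) s θ := by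
  have := hν.prob
  have hi := hν.integrable (continuous_const (y := (1 : ℝ))) s θ
  refine (integral_pos_iff_support_of_nonneg (fun x => ?_) hi).2 ?_
  · simpa using (ew_pos s θ x).le
  · have : Function.support (fun x => (1 : ℝ) * ew s θ x) = Set.univ := by
      ext x; simp [(ew_pos s θ x).ne']
    rw [this]; simp

/-- Expectation of `h` under the tilted probability measure with density proportional to
`ew s θ` with respect to `ν`. -/
def mm (ν : Measure (Eu n)) (h : Eu n → ℝ) (s : ℝ) (θ : Eu n) : ℝ :=
  Psi ν h s θ / Psi ν (fun _ => 1) s θ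

lemma mm_mul_Z {ν : Measure (Eu n)} {R : ℝ} (hν : Tame ν R) (h : Eu n → ℝ) (s : ℝ) (θ : Eu n) :
    mm ν h s θ * Psi ν (fun _ => 1) s θ = Psi ν h s θ :=
  div_mul_cancel₀ _ (Psi_one_pos hν s θ).ne'

lemma mm_mono {ν : Measure (Eu n)} {R : ℝ} (hν : Tame ν R) {h h' : Eu n → ℝ}
    (hh : Continuous h) (hh' : Continuous h') (hle : ∀ x, ‖x‖ ≤ R → h x ≤ h' x) (s : ℝ) (θ : Eu n) :
    mm ν h s θ ≤ mm ν h' s θ := by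
  refine div_le_div_of_nonneg_right ?_ (Psi_one_pos hν s θ).le
  refine integral_mono_ae (hν.integrable hh s θ) (hν.integrable hh' s θ) ?_
  filter_upwards [hν.supp] with x hx
  exact mul_le_mul_of_nonneg_right (hle x hx) (ew_pos s θ x).le

lemma mm_const {ν : Measure (Eu n)} {R : ℝ} (hν : Tame ν R) (c : ℝ) (s : ℝ) (θ : Eu n) :
    mm ν (fun _ => c) s θ = c := by
  have h1 : Psi ν (fun _ => c) s θ = c * Psi ν (fun _ => 1) s θ := by
    simp only [Psi]; rw [← integral_const_mul]; simp
  rw [mm, h1, mul_div_assoc, div_self (Psi_one_pos hν s θ).ne', mul_one]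

lemma mm_add {ν : Measure (Eu n)} {R : ℝ} (hν : Tame ν R) {h h' : Eu n → ℝ}
    (hh : Continuous h) (hh' : Continuous h') (s : ℝ) (θ : Eu n) :
    mm ν (fun x => h x + h' x) s θ = mm ν h s θ + mm ν h' s θ := by
  rw [mm, mm, mm, ← add_div]
  congr 1
  simp only [Psi]
  rw [← integral_add (hν.integrable hh s θ) (hν.integrable hh' s θ)]
  congr 1; ext x; ring

lemma mm_const_mul (ν : Measure (Eu n)) (c : ℝ) (h : Eu n → ℝ) (s : ℝ) (θ : Eu n) :
    mm ν (fun x => c * h x) s θ = c * mm ν h s θ := by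
  rw [mm, mm, ← mul_div_assoc]
  congr 1
  simp only [Psi]
  rw [← integral_const_mul]
  congr 1; ext x; ring

lemma mm_sub {ν : Measure (Eu n)} {R : ℝ} (hν : Tame ν R) {h h' : Eu n → ℝ}
    (hh : Continuous h) (hh' : Continuous h') (s : ℝ) (θ : Eu n) :
    mm ν (fun x => h x - h' x) s θ = mm ν h s θ - mm ν h' s θ := by
  have := mm_add hν hh (hh'.const_mul (-1)) s θ
  rw [mm_const_mul] at this
  rw [sub_eq_add_neg, ← neg_one_mul (mm ν h' s θ), ← this]
  congr 1; ext x; ring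

lemma mm_sum {ν : Measure (Eu n)} {R : ℝ} (hν : Tame ν R) {ι : Type*} (S : Finset ι)
    {h : ι → Eu n → ℝ} (hh : ∀ i, Continuous (h i)) (s : ℝ) (θ : Eu n) :
    mm ν (fun x => ∑ i ∈ S, h i x) s θ = ∑ i ∈ S, mm ν (h i) s θ := by
  classical
  induction S using Finset.induction_on with
  | empty => simpa using mm_const hν 0 s θ
  | insert i S hi ih =>
    rw [Finset.sum_insert hi, ← ih, ← mm_add hν (hh i) (by fun_prop)]
    congr 1; ext x; rw [Finset.sum_insert hi]

lemma mm_bdd {ν : Measure (Eu n)} {R : ℝ} (hν : Tame ν R) {h : Eu n → ℝ} (hh : Continuous h) :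
    ∃ B, 0 ≤ B ∧ ∀ s θ, |mm ν h s θ| ≤ B := by
  obtain ⟨B, hB0, hB⟩ := exists_ball_bound hh R
  refine ⟨B, hB0, fun s θ => abs_le.2 ⟨?_, ?_⟩⟩
  · have := mm_mono hν continuous_const hh (fun x hx => (abs_le.1 (hB x hx)).1) s θ
    rwa [mm_const hν] at this
  · have := mm_mono hν hh continuous_const (fun x hx => (abs_le.1 (hB x hx)).2) s θ
    rwa [mm_const hν] at this

lemma mm_continuous {ν : Measure (Eu n)} {R : ℝ} (hν : Tame ν R) {h : Eu n → ℝ}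
    (hh : Continuous h) : Continuous fun p : ℝ × Eu n => mm ν h p.1 p.2 := by
  refine continuous_iff_continuousAt.2 fun p => ?_
  exact (Psi_continuousAt (hν.adm hh (p.1 - 1)) (by linarith) p.2).div
    (Psi_continuousAt (hν.adm continuous_const (p.1 - 1)) (by linarith) p.2)
    (Psi_one_pos hν _ _).ne'

lemma mm_curve {ν : Measure (Eu n)} {R : ℝ} (hν : Tame ν R) {h : Eu n → ℝ} (hh : Continuous h)
    {σ : ℝ → ℝ} {τ : ℝ → Eu n} {σ' r : ℝ} {τ' : Eu n} (hσ : HasDerivAt σ σ' r)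
    (hτ : HasDerivAt τ τ' r) :
    HasDerivAt (fun r => mm ν h (σ r) (τ r))
      (-(1 / 2) * σ' * (mm ν (fun x => ‖x‖ ^ 2 * h x) (σ r) (τ r) -
          mm ν (fun x => ‖x‖ ^ 2) (σ r) (τ r) * mm ν h (σ r) (τ r)) +
        (mm ν (fun x => ⟪τ', x⟫ * h x) (σ r) (τ r) -
          mm ν (fun x => ⟪τ', x⟫) (σ r) (τ r) * mm ν h (σ r) (τ r))) r := by
  have hne := (Psi_one_pos hν (σ r) (τ r)).ne'
  have h1 := Psi_curve (hν.adm hh (σ r - 1)) hσ hτ (by linarith)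
  have h2 := Psi_curve (hν.adm (continuous_const (y := (1 : ℝ))) (σ r - 1)) hσ hτ (by linarith)
  refine (h1.div h2 hne).congr_deriv ?_
  simp only [mm, mul_one]
  field_simp
  ring

/-- Partial derivative of tilted expectations. -/
lemma mm_lineDeriv {ν : Measure (Eu n)} {R : ℝ} (hν : Tame ν R) {h : Eu n → ℝ}
    (hh : Continuous h) (s : ℝ) (θ : Eu n) (k : Fin n) :
    HasLineDerivAt ℝ (mm ν h s) (mm ν (fun x => x k * h x) s θ -
      mm ν (fun x => x k) s θ * mm ν h s θ) θ (EuclideanSpace.single k 1) := by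
  have hτ : HasDerivAt (fun r : ℝ => θ + r • EuclideanSpace.single k (1 : ℝ))
      (EuclideanSpace.single k 1) 0 :=
    (((hasDerivAt_id (0 : ℝ)).smul_const _).const_add θ).congr_deriv (one_smul _ _)
  have := mm_curve hν hh (hasDerivAt_const 0 s) hτ
  refine this.congr_deriv ?_
  simp [EuclideanSpace.inner_single_left]

lemma mm_sDeriv {ν : Measure (Eu n)} {R : ℝ} (hν : Tame ν R) {h : Eu n → ℝ}
    (hh : Continuous h) (s : ℝ) (θ : Eu n) :
    HasDerivAt (fun s => mm ν h s θ) (-(1 / 2) * ∑ k, (mm ν (fun x => x k * (x k * h x)) s θ -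
      mm ν (fun x => x k * x k) s θ * mm ν h s θ)) s := by
  have := mm_curve hν hh (hasDerivAt_id s) (hasDerivAt_const s θ)
  refine this.congr_deriv ?_
  have e1 : mm ν (fun x => ‖x‖ ^ 2 * h x) s θ = ∑ k, mm ν (fun x => x k * (x k * h x)) s θ := by
    rw [← mm_sum hν _ (fun k => by fun_prop)]
    congr 1; ext x
    simp only [EuclideanSpace.norm_sq_eq, Finset.sum_mul, Real.norm_eq_abs, sq_abs]
    exact Finset.sum_congr rfl fun k _ => by ring
  have e2 : mm ν (fun x => ‖x‖ ^ 2) s θ = ∑ k, mm ν (fun x => x k * x k) s θ := by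
    rw [← mm_sum hν _ (fun k => by fun_prop)]
    congr 1; ext x
    simp only [EuclideanSpace.norm_sq_eq, Real.norm_eq_abs, sq_abs]
    exact Finset.sum_congr rfl fun k _ => by ring
  simp only [id, e1, e2, Finset.sum_sub_distrib, Finset.sum_mul, inner_zero_left, zero_mul,
    mm_const hν]
  ring

/-! ### Jets and the generator -/

/-- A function of `(s, θ)` together with candidates for its `s`-derivative and its pure first
and second partial derivatives in `θ`. -/
structure Jet (n : ℕ) where
  F : ℝ → Eu n → ℝ
  Fs : ℝ → Eu n → ℝ
  F1 : Fin n → ℝ → Eu n → ℝ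
  F2 : Fin n → ℝ → Eu n → ℝ

/-- `Bd I G`: the function `G` is continuous in `θ` for each `s ∈ I`, and bounded on `I × ℝⁿ`. -/
def Bd (I : Set ℝ) (G : ℝ → Eu n → ℝ) : Prop :=
  (∀ s ∈ I, Continuous (G s)) ∧ ∃ K, ∀ s ∈ I, ∀ θ, |G s θ| ≤ K

/-- The components of the jet are the derivatives they stand for, when `s ∈ I`, and they are
continuous in `θ` and bounded. -/
structure IsJet (I : Set ℝ) (J : Jet n) : Prop where
  ds : ∀ s ∈ I, ∀ θ, HasDerivAt (fun s => J.F s θ) (J.Fs s θ) s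
  d1 : ∀ s ∈ I, ∀ θ k, HasLineDerivAt ℝ (J.F s) (J.F1 k s θ) θ (EuclideanSpace.single k 1)
  d2 : ∀ s ∈ I, ∀ θ k, HasLineDerivAt ℝ (J.F1 k s) (J.F2 k s θ) θ (EuclideanSpace.single k 1)
  b : Bd I J.F
  bs : Bd I J.Fs
  b1 : ∀ k, Bd I (J.F1 k)
  b2 : ∀ k, Bd I (J.F2 k)

/-- The space-time generator of the localization process, `∂ₛ + a ⬝ ∇ + Δ / 2`, where `a` is
the barycenter of the tilted measure. -/
def gen (ν : Measure (Eu n)) (J : Jet n) (s : ℝ) (θ : Eu n) : ℝ :=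
  J.Fs s θ + ∑ k, mm ν (fun x => x k) s θ * J.F1 k s θ + 1 / 2 * ∑ k, J.F2 k s θ

lemma Bd.const (I : Set ℝ) (c : ℝ) : Bd I (fun _ (_ : Eu n) => c) :=
  ⟨fun _ _ => continuous_const, |c|, fun _ _ _ => le_rfl⟩

lemma Bd.add {I : Set ℝ} {G H : ℝ → Eu n → ℝ} (hG : Bd I G) (hH : Bd I H) :
    Bd I (fun s θ => G s θ + H s θ) := by
  obtain ⟨K, hK⟩ := hG.2
  obtain ⟨K', hK'⟩ := hH.2
  exact ⟨fun s hs => (hG.1 s hs).add (hH.1 s hs), K + K', fun s hs θ =>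
    (abs_add_le _ _).trans (add_le_add (hK s hs θ) (hK' s hs θ))⟩

lemma Bd.mul {I : Set ℝ} {G H : ℝ → Eu n → ℝ} (hG : Bd I G) (hH : Bd I H) :
    Bd I (fun s θ => G s θ * H s θ) := by
  obtain ⟨K, hK⟩ := hG.2
  obtain ⟨K', hK'⟩ := hH.2
  refine ⟨fun s hs => (hG.1 s hs).mul (hH.1 s hs), K * K', fun s hs θ => ?_⟩
  rw [abs_mul]
  exact mul_le_mul (hK s hs θ) (hK' s hs θ) (abs_nonneg _) ((abs_nonneg _).trans (hK s hs θ))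

lemma Bd.sub {I : Set ℝ} {G H : ℝ → Eu n → ℝ} (hG : Bd I G) (hH : Bd I H) :
    Bd I (fun s θ => G s θ - H s θ) := by
  have := hG.add ((Bd.const I (-1)).mul hH)
  simpa [sub_eq_add_neg] using this

lemma Bd.sum {I : Set ℝ} {ι : Type*} (S : Finset ι) {G : ι → ℝ → Eu n → ℝ}
    (hG : ∀ i, Bd I (G i)) : Bd I (fun s θ => ∑ i ∈ S, G i s θ) := by
  classical
  induction S using Finset.induction_on with
  | empty => simpa using Bd.const I (0 : ℝ)
  | insert i S hi ih => simpa [Finset.sum_insert hi] using (hG i).add ih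

lemma Bd.mm {ν : Measure (Eu n)} {R : ℝ} (hν : Tame ν R) {h : Eu n → ℝ} (hh : Continuous h)
    (I : Set ℝ) : Bd I (mm ν h) := by
  obtain ⟨B, _, hB⟩ := mm_bdd hν hh
  exact ⟨fun s _ => (mm_continuous hν hh).comp (Continuous.prodMk_right s), B, fun s _ θ => hB s θ⟩

/-- The jet of a tilted expectation. -/
def mmJet (ν : Measure (Eu n)) (h : Eu n → ℝ) : Jet n where
  F := mm ν h
  Fs s θ := -(1 / 2) * ∑ k, (mm ν (fun x => x k * (x k * h x)) s θ -
      mm ν (fun x => x k * x k) s θ * mm ν h s θ)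
  F1 k s θ := mm ν (fun x => x k * h x) s θ - mm ν (fun x => x k) s θ * mm ν h s θ
  F2 k s θ := (mm ν (fun x => x k * (x k * h x)) s θ -
      mm ν (fun x => x k) s θ * mm ν (fun x => x k * h x) s θ) -
    ((mm ν (fun x => x k * x k) s θ - mm ν (fun x => x k) s θ * mm ν (fun x => x k) s θ) *
      mm ν h s θ + mm ν (fun x => x k) s θ * (mm ν (fun x => x k * h x) s θ -
        mm ν (fun x => x k) s θ * mm ν h s θ))

/-- The product rule for line derivatives of real functions. -/
lemma lineDeriv_mul {f g : Eu n → ℝ} {f' g' : ℝ} {x v : Eu n} (hf : HasLineDerivAt ℝ f f' x v)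
    (hg : HasLineDerivAt ℝ g g' x v) :
    HasLineDerivAt ℝ (fun y => f y * g y) (f' * g x + f x * g') x v := by
  have := HasDerivAt.fun_mul hf hg
  rw [zero_smul, add_zero] at this
  exact this

lemma lineDeriv_sub {f g : Eu n → ℝ} {f' g' : ℝ} {x v : Eu n} (hf : HasLineDerivAt ℝ f f' x v)
    (hg : HasLineDerivAt ℝ g g' x v) :
    HasLineDerivAt ℝ (fun y => f y - g y) (f' - g') x v :=
  HasDerivAt.sub hf hg

lemma lineDeriv_add {f g : Eu n → ℝ} {f' g' : ℝ} {x v : Eu n} (hf : HasLineDerivAt ℝ f f' x v)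
    (hg : HasLineDerivAt ℝ g g' x v) :
    HasLineDerivAt ℝ (fun y => f y + g y) (f' + g') x v :=
  HasDerivAt.add hf hg

lemma mmJet_isJet {ν : Measure (Eu n)} {R : ℝ} (hν : Tame ν R) {h : Eu n → ℝ}
    (hh : Continuous h) (I : Set ℝ) : IsJet I (mmJet ν h) where
  ds s _ θ := mm_sDeriv hν hh s θ
  d1 s _ θ k := mm_lineDeriv hν hh s θ k
  d2 s _ θ k := by
    have h1 := mm_lineDeriv hν (h := fun x => x k * h x) (by fun_prop) s θ k
    have h2 := mm_lineDeriv hν (h := fun x : Eu n => x k) (by fun_prop) s θ k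
    have h3 := mm_lineDeriv hν hh s θ k
    exact lineDeriv_sub h1 (lineDeriv_mul h2 h3)
  b := Bd.mm hν hh I
  bs := (Bd.const I _).mul (Bd.sum _ fun k => (Bd.mm hν (by fun_prop) I).sub
    ((Bd.mm hν (by fun_prop) I).mul (Bd.mm hν hh I)))
  b1 k := (Bd.mm hν (by fun_prop) I).sub ((Bd.mm hν (by fun_prop) I).mul (Bd.mm hν hh I))
  b2 k := by
    have b0 := Bd.mm hν hh I
    have b1 := Bd.mm hν (h := fun x : Eu n => x k) (by fun_prop) I
    have b2 := Bd.mm hν (h := fun x : Eu n => x k * h x) (by fun_prop) I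
    have b3 := Bd.mm hν (h := fun x : Eu n => x k * (x k * h x)) (by fun_prop) I
    have b4 := Bd.mm hν (h := fun x : Eu n => x k * x k) (by fun_prop) I
    exact (b3.sub (b1.mul b2)).sub (((b4.sub (b1.mul b1)).mul b0).add (b1.mul (b2.sub (b1.mul b0))))

/-- Tilted expectations are martingales. -/
lemma gen_mmJet (ν : Measure (Eu n)) (h : Eu n → ℝ) (s : ℝ) (θ : Eu n) :
    gen ν (mmJet ν h) s θ = 0 := by
  simp only [gen, mmJet]
  rw [Finset.mul_sum, Finset.mul_sum, ← Finset.sum_add_distrib, ← Finset.sum_add_distrib]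
  exact Finset.sum_eq_zero fun k _ => by ring

/-- Difference of jets. -/
def Jet.sub (J K : Jet n) : Jet n where
  F s θ := J.F s θ - K.F s θ
  Fs s θ := J.Fs s θ - K.Fs s θ
  F1 k s θ := J.F1 k s θ - K.F1 k s θ
  F2 k s θ := J.F2 k s θ - K.F2 k s θ

/-- Product of jets. -/
def Jet.mul (J K : Jet n) : Jet n where
  F s θ := J.F s θ * K.F s θ
  Fs s θ := J.Fs s θ * K.F s θ + J.F s θ * K.Fs s θ
  F1 k s θ := J.F1 k s θ * K.F s θ + J.F s θ * K.F1 k s θ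
  F2 k s θ := (J.F2 k s θ * K.F s θ + J.F1 k s θ * K.F1 k s θ) +
    (J.F1 k s θ * K.F1 k s θ + J.F s θ * K.F2 k s θ)

/-- Constant jet. -/
def Jet.const (n : ℕ) (c : ℝ) : Jet n where
  F _ _ := c
  Fs _ _ := 0
  F1 _ _ _ := 0
  F2 _ _ _ := 0

lemma IsJet.const (I : Set ℝ) (c : ℝ) : IsJet I (Jet.const n c) where
  ds s _ _ := hasDerivAt_const s c
  d1 _ _ _ _ := hasDerivAt_const 0 c
  d2 _ _ _ _ := hasDerivAt_const 0 0
  b := Bd.const I c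
  bs := Bd.const I 0
  b1 _ := Bd.const I 0
  b2 _ := Bd.const I 0

lemma gen_const (ν : Measure (Eu n)) (c s : ℝ) (θ : Eu n) : gen ν (Jet.const n c) s θ = 0 := by
  simp [gen, Jet.const]

lemma IsJet.sub {I : Set ℝ} {J K : Jet n} (hJ : IsJet I J) (hK : IsJet I K) :
    IsJet I (J.sub K) where
  ds s hs θ := (hJ.ds s hs θ).sub (hK.ds s hs θ)
  d1 s hs θ k := lineDeriv_sub (hJ.d1 s hs θ k) (hK.d1 s hs θ k)
  d2 s hs θ k := lineDeriv_sub (hJ.d2 s hs θ k) (hK.d2 s hs θ k)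
  b := hJ.b.sub hK.b
  bs := hJ.bs.sub hK.bs
  b1 k := (hJ.b1 k).sub (hK.b1 k)
  b2 k := (hJ.b2 k).sub (hK.b2 k)

lemma IsJet.mul {I : Set ℝ} {J K : Jet n} (hJ : IsJet I J) (hK : IsJet I K) :
    IsJet I (J.mul K) where
  ds s hs θ := (hJ.ds s hs θ).mul (hK.ds s hs θ)
  d1 s hs θ k := lineDeriv_mul (hJ.d1 s hs θ k) (hK.d1 s hs θ k)
  d2 s hs θ k := lineDeriv_add (lineDeriv_mul (hJ.d2 s hs θ k) (hK.d1 s hs θ k))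
    (lineDeriv_mul (hJ.d1 s hs θ k) (hK.d2 s hs θ k))
  b := hJ.b.mul hK.b
  bs := (hJ.bs.mul hK.b).add (hJ.b.mul hK.bs)
  b1 k := ((hJ.b1 k).mul hK.b).add (hJ.b.mul (hK.b1 k))
  b2 k := (((hJ.b2 k).mul hK.b).add ((hJ.b1 k).mul (hK.b1 k))).add
    (((hJ.b1 k).mul (hK.b1 k)).add (hJ.b.mul (hK.b2 k)))

lemma gen_sub (ν : Measure (Eu n)) (J K : Jet n) (s : ℝ) (θ : Eu n) :
    gen ν (J.sub K) s θ = gen ν J s θ - gen ν K s θ := by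
  simp only [gen, Jet.sub, mul_sub, Finset.sum_sub_distrib]
  ring

lemma gen_mul (ν : Measure (Eu n)) (J K : Jet n) (s : ℝ) (θ : Eu n) :
    gen ν (J.mul K) s θ = J.F s θ * gen ν K s θ + K.F s θ * gen ν J s θ +
      ∑ k, J.F1 k s θ * K.F1 k s θ := by
  simp only [gen, Jet.mul, mul_add, Finset.mul_sum, Finset.sum_add_distrib]
  have e : ∀ p : Fin n → ℝ, ∑ k, p k = 1 / 2 * ∑ k, p k + 1 / 2 * ∑ k, p k := fun p => by ring
  rw [e fun k => J.F1 k s θ * K.F1 k s θ]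
  simp only [Finset.mul_sum]
  have c : ∀ {p q : Fin n → ℝ}, (∀ k, p k = q k) → ∑ k, p k = ∑ k, q k :=
    fun h => Finset.sum_congr rfl fun k _ => h k
  rw [c fun k => (by ring : mm ν (fun x => x k) s θ * (J.F1 k s θ * K.F s θ) =
      K.F s θ * (mm ν (fun x => x k) s θ * J.F1 k s θ)),
    c fun k => (by ring : mm ν (fun x => x k) s θ * (J.F s θ * K.F1 k s θ) =
      J.F s θ * (mm ν (fun x => x k) s θ * K.F1 k s θ)),
    c fun k => (by ring : 1 / 2 * (J.F2 k s θ * K.F s θ) = K.F s θ * (1 / 2 * J.F2 k s θ)),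
    c fun k => (by ring : 1 / 2 * (J.F s θ * K.F2 k s θ) = J.F s θ * (1 / 2 * K.F2 k s θ))]
  ring

/-- The jet of the covariance entry `A i j` of the tilted measure. -/
def covJet (ν : Measure (Eu n)) (i j : Fin n) : Jet n :=
  (mmJet ν fun x => x i * x j).sub ((mmJet ν fun x => x i).mul (mmJet ν fun x => x j))

/-- The covariance matrix of the tilted measure. -/
def cov (ν : Measure (Eu n)) (s : ℝ) (θ : Eu n) : Matrix (Fin n) (Fin n) ℝ :=
  Matrix.of fun i j => (covJet ν i j).F s θ

lemma cov_apply (ν : Measure (Eu n)) (s : ℝ) (θ : Eu n) (i j : Fin n) : cov ν s θ i j =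
    mm ν (fun x => x i * x j) s θ - mm ν (fun x => x i) s θ * mm ν (fun x => x j) s θ := rfl

lemma covJet_isJet {ν : Measure (Eu n)} {R : ℝ} (hν : Tame ν R) (i j : Fin n) (I : Set ℝ) :
    IsJet I (covJet ν i j) :=
  (mmJet_isJet hν (by fun_prop) I).sub
    ((mmJet_isJet hν (by fun_prop) I).mul (mmJet_isJet hν (by fun_prop) I))

lemma cov_symm (ν : Measure (Eu n)) (s : ℝ) (θ : Eu n) (i j : Fin n) :
    cov ν s θ i j = cov ν s θ j i := by
  simp only [cov_apply, mul_comm]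

/-- The drift of the covariance `A` of the tilted measure is `-A²`. -/
lemma gen_covJet (ν : Measure (Eu n)) (s : ℝ) (θ : Eu n) (i j : Fin n) :
    gen ν (covJet ν i j) s θ = -(cov ν s θ * cov ν s θ) i j := by
  rw [covJet, gen_sub, gen_mul]
  simp only [gen_mmJet, mul_zero, zero_sub, zero_add, Matrix.mul_apply]
  congr 1
  refine Finset.sum_congr rfl fun k _ => ?_
  rw [cov_symm ν s θ i k]
  rfl

end

/-! ### The law of the localization process -/

section

variable {n : ℕ}

/-- Density at `θ` of the law of the localization process at time `s`. -/
def W (ν : Measure (Eu n)) (s : ℝ) (θ : Eu n) : ℝ := Psi ν (fun _ => 1) s θ * gk s θ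

/-- Expectation of a function of the localization process at time `s`. -/
def EE (ν : Measure (Eu n)) (s : ℝ) (G : Eu n → ℝ) : ℝ := ∫ θ, G θ * W ν s θ

lemma W_pos {ν : Measure (Eu n)} {R : ℝ} (hν : Tame ν R) (s : ℝ) (θ : Eu n) : 0 < W ν s θ :=
  mul_pos (Psi_one_pos hν s θ) (gk_pos s θ)

lemma W_continuous {ν : Measure (Eu n)} {R : ℝ} (hν : Tame ν R) (s : ℝ) : Continuous (W ν s) := by
  refine Continuous.mul (continuous_iff_continuousAt.2 fun θ => ?_) (gk_continuous s)
  exact (Psi_continuousAt (hν.adm continuous_const (s - 1)) (by linarith) θ).comp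
    (Continuous.prodMk_right s).continuousAt

lemma Psi_one_le {ν : Measure (Eu n)} {R : ℝ} (hν : Tame ν R) {s : ℝ} (hs : 0 ≤ s) (θ : Eu n) :
    Psi ν (fun _ => 1) s θ ≤ Real.exp (R * ‖θ‖) := by
  have := hν.prob
  calc Psi ν (fun _ => 1) s θ ≤ ∫ _, Real.exp (R * ‖θ‖) ∂ν := by
        refine integral_mono_ae (hν.integrable continuous_const s θ) (integrable_const _) ?_
        filter_upwards [hν.supp] with x hx
        simp only [one_mul, ew]
        refine Real.exp_le_exp.2 ?_
        have h1 := real_inner_le_norm θ x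
        have h2 : ‖θ‖ * ‖x‖ ≤ R * ‖θ‖ := by rw [mul_comm]; gcongr
        have h3 : 0 ≤ s * ‖x‖ ^ 2 / 2 := by positivity
        linarith
    _ = _ := by simp

/-- A Gaussian profile dominating `W ν s` for `s` near `s₀`. -/
lemma W_le {ν : Measure (Eu n)} {R : ℝ} (hν : Tame ν R) {s s₀ : ℝ} (h0 : 0 < s₀)
    (h1 : s₀ / 2 ≤ s) (h2 : s ≤ 2 * s₀) (θ : Eu n) :
    W ν s θ ≤ Real.exp (-(n / 2 * Real.log (π * s₀))) *
      Real.exp (R * ‖θ‖ - 1 / (2 * s₀) * ‖θ‖ ^ 2 / 2) := by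
  have hs : 0 < s := by linarith
  have h3 : gk s θ ≤ Real.exp (-(n / 2 * Real.log (π * s₀))) *
      Real.exp (- (1 / (2 * s₀) * ‖θ‖ ^ 2 / 2)) := by
    rw [gk, ← Real.exp_add]
    refine Real.exp_le_exp.2 ?_
    have h4 : Real.log (π * s₀) ≤ Real.log (2 * π * s) := by
      refine Real.log_le_log (by positivity) ?_
      nlinarith [Real.pi_pos]
    have h5 : (n : ℝ) / 2 * Real.log (π * s₀) ≤ n / 2 * Real.log (2 * π * s) := by gcongr
    have h6 : 1 / (2 * s₀) * ‖θ‖ ^ 2 / 2 ≤ ‖θ‖ ^ 2 / (2 * s) := by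
      have e : 1 / (2 * s₀) * ‖θ‖ ^ 2 / 2 = ‖θ‖ ^ 2 / (2 * (2 * s₀)) := by field_simp
      rw [e]; gcongr
    linarith
  calc W ν s θ ≤ Real.exp (R * ‖θ‖) * (Real.exp (-(n / 2 * Real.log (π * s₀))) *
      Real.exp (- (1 / (2 * s₀) * ‖θ‖ ^ 2 / 2))) :=
        mul_le_mul (Psi_one_le hν hs.le θ) h3 (gk_pos _ _).le (Real.exp_pos _).le
    _ = _ := by rw [mul_left_comm, ← Real.exp_add]; congr 2

lemma W_integrable {ν : Measure (Eu n)} {R : ℝ} (hν : Tame ν R) {s : ℝ} (hs : 0 < s)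
    {G : Eu n → ℝ} (hG : Continuous G) {C : ℝ} (hb : ∀ θ, |G θ| ≤ C * Real.exp ‖θ‖) :
    Integrable fun θ => G θ * W ν s θ := by
  have hi := ((admV_one (n := n) (1 / (2 * s)) (by positivity)).2 (R + 1)).const_mul
    (C * Real.exp (-(n / 2 * Real.log (π * s))))
  refine hi.mono' (hG.mul (W_continuous hν s)).aestronglyMeasurable ?_
  filter_upwards with θ
  have hW := W_le hν hs (by linarith : s / 2 ≤ s) (by linarith) θ
  rw [norm_mul, Real.norm_eq_abs, Real.norm_of_nonneg (W_pos hν s θ).le]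
  calc |G θ| * W ν s θ ≤ (C * Real.exp ‖θ‖) * (Real.exp (-(n / 2 * Real.log (π * s))) *
      Real.exp (R * ‖θ‖ - 1 / (2 * s) * ‖θ‖ ^ 2 / 2)) :=
        mul_le_mul (hb θ) hW (W_pos hν s θ).le ((abs_nonneg _).trans (hb θ))
    _ = _ := by
        have : (R + 1) * ‖θ‖ - 1 / (2 * s) * ‖θ‖ ^ 2 / 2 =
          ‖θ‖ + (R * ‖θ‖ - 1 / (2 * s) * ‖θ‖ ^ 2 / 2) := by ring
        rw [this, Real.exp_add, abs_one]; ring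

lemma one_le_exp_norm (θ : Eu n) : 1 ≤ Real.exp ‖θ‖ := Real.one_le_exp (norm_nonneg _)
lemma coord_le_exp (θ : Eu n) (k : Fin n) : |θ k| ≤ Real.exp ‖θ‖ := by
  have := Real.add_one_le_exp ‖θ‖
  have h2 : |θ k| ≤ ‖θ‖ := by simpa using PiLp.norm_apply_le θ k
  linarith
lemma coord_sq_le_exp (θ : Eu n) (k : Fin n) : |θ k ^ 2| ≤ 2 * Real.exp ‖θ‖ := by
  have := Real.quadratic_le_exp_of_nonneg (norm_nonneg θ)
  have h2 : |θ k| ≤ ‖θ‖ := by simpa using PiLp.norm_apply_le θ k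
  rw [abs_pow]
  have : |θ k| ^ 2 ≤ ‖θ‖ ^ 2 := by gcongr
  nlinarith [norm_nonneg θ]
lemma normSq_le_exp (θ : Eu n) : |‖θ‖ ^ 2| ≤ 2 * Real.exp ‖θ‖ := by
  have := Real.quadratic_le_exp_of_nonneg (norm_nonneg θ)
  rw [abs_of_nonneg (by positivity)]
  nlinarith [norm_nonneg θ]

/-- Functions with at most exponential growth of rate one, uniformly for `s ∈ I`. -/
def EG (I : Set ℝ) (G : ℝ → Eu n → ℝ) : Prop :=
  (∀ s ∈ I, Continuous (G s)) ∧ ∃ C, ∀ s ∈ I, ∀ θ, |G s θ| ≤ C * Real.exp ‖θ‖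

lemma Bd.eg {I : Set ℝ} {G : ℝ → Eu n → ℝ} (hG : Bd I G) : EG I G := by
  obtain ⟨K, hK⟩ := hG.2
  refine ⟨hG.1, K, fun s hs θ => (hK s hs θ).trans ?_⟩
  have : 0 ≤ K := (abs_nonneg _).trans (hK s hs θ)
  nlinarith [one_le_exp_norm θ]

lemma EG.add {I : Set ℝ} {G H : ℝ → Eu n → ℝ} (hG : EG I G) (hH : EG I H) :
    EG I (fun s θ => G s θ + H s θ) := by
  obtain ⟨K, hK⟩ := hG.2
  obtain ⟨K', hK'⟩ := hH.2
  refine ⟨fun s hs => (hG.1 s hs).add (hH.1 s hs), K + K', fun s hs θ =>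
    (abs_add_le _ _).trans ((add_le_add (hK s hs θ) (hK' s hs θ)).trans_eq (by ring))⟩

lemma Bd.mul_eg {I : Set ℝ} {G H : ℝ → Eu n → ℝ} (hG : Bd I G) (hH : EG I H) :
    EG I (fun s θ => G s θ * H s θ) := by
  obtain ⟨K, hK⟩ := hG.2
  obtain ⟨K', hK'⟩ := hH.2
  refine ⟨fun s hs => (hG.1 s hs).mul (hH.1 s hs), K * K', fun s hs θ => ?_⟩
  rw [abs_mul, mul_assoc]
  exact mul_le_mul (hK s hs θ) (hK' s hs θ) (abs_nonneg _) ((abs_nonneg _).trans (hK s hs θ))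

lemma EG.coord (I : Set ℝ) (k : Fin n) : EG I (fun _ (θ : Eu n) => θ k) :=
  ⟨fun _ _ => by fun_prop, 1, fun _ _ θ => by simpa using coord_le_exp θ k⟩
lemma EG.coord_sq (I : Set ℝ) (k : Fin n) : EG I (fun _ (θ : Eu n) => θ k ^ 2) :=
  ⟨fun _ _ => by fun_prop, 2, fun _ _ θ => coord_sq_le_exp θ k⟩
lemma EG.normSq (I : Set ℝ) : EG I (fun _ (θ : Eu n) => ‖θ‖ ^ 2) :=
  ⟨fun _ _ => by fun_prop, 2, fun _ _ θ => normSq_le_exp θ⟩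

lemma EG.integrable {ν : Measure (Eu n)} {R : ℝ} (hν : Tame ν R) {s : ℝ} (hs : 0 < s)
    {I : Set ℝ} (hI : s ∈ I) {G : ℝ → Eu n → ℝ} (hG : EG I G) :
    Integrable fun θ => G s θ * W ν s θ := by
  obtain ⟨K, hK⟩ := hG.2
  exact W_integrable hν hs (hG.1 s hI) (hK s hI)

lemma Bd.of_s {I : Set ℝ} {c : ℝ → ℝ} {K : ℝ} (h : ∀ s ∈ I, |c s| ≤ K) :
    Bd I (fun s (_ : Eu n) => c s) :=
  ⟨fun _ _ => continuous_const, K, fun s hs _ => h s hs⟩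

lemma W_sDeriv {ν : Measure (Eu n)} {R : ℝ} (hν : Tame ν R) {s : ℝ} (hs : 0 < s) (θ : Eu n) :
    HasDerivAt (fun s => W ν s θ) (((-(1 / 2) * ∑ k, mm ν (fun x => x k * x k) s θ +
      -(n / (2 * s))) + 1 / (2 * s ^ 2) * ‖θ‖ ^ 2) * W ν s θ) s := by
  have h1 := Psi_curve (hν.adm (continuous_const (y := (1 : ℝ))) (s - 1)) (hasDerivAt_id s)
    (hasDerivAt_const s θ) (by simp)
  have h2 := gk_curve (hasDerivAt_id s) (hasDerivAt_const s θ) hs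
  have e2 : mm ν (fun x => ‖x‖ ^ 2) s θ = ∑ k, mm ν (fun x => x k * x k) s θ := by
    rw [← mm_sum hν _ (fun k => by fun_prop)]
    congr 1; ext x
    simp only [EuclideanSpace.norm_sq_eq, Real.norm_eq_abs, sq_abs]
    exact Finset.sum_congr rfl fun k _ => by ring
  refine (h1.mul h2).congr_deriv ?_
  have e3 := mm_mul_Z hν (fun x => ‖x‖ ^ 2) s θ
  have e4 : Psi ν (fun _ => (0 : ℝ)) s θ = 0 := by simp [Psi]
  simp only [id, mul_one, inner_zero_left, inner_zero_right, zero_mul, e4]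
  rw [← e3, e2, W]
  ring

lemma line_hasDerivAt (θ v : Eu n) : HasDerivAt (fun r : ℝ => θ + r • v) v 0 :=
    (((hasDerivAt_id (0 : ℝ)).smul_const _).const_add θ).congr_deriv (one_smul _ _)

lemma gk_lineDeriv {s : ℝ} (hs : 0 < s) (θ : Eu n) (k : Fin n) :
    HasLineDerivAt ℝ (gk s) (-(1 / s) * θ k * gk s θ) θ (EuclideanSpace.single k 1) := by
  have := gk_curve (hasDerivAt_const 0 s) (line_hasDerivAt θ (EuclideanSpace.single k 1)) hs
  refine this.congr_deriv ?_
  simp [EuclideanSpace.inner_single_right]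
  ring

lemma Psi_lineDeriv {ν : Measure (Eu n)} {R : ℝ} (hν : Tame ν R) {h : Eu n → ℝ}
    (hh : Continuous h) (s : ℝ) (θ : Eu n) (k : Fin n) :
    HasLineDerivAt ℝ (Psi ν h s) (Psi ν (fun x => x k * h x) s θ) θ
      (EuclideanSpace.single k 1) := by
  have := Psi_curve (hν.adm hh (s - 1)) (hasDerivAt_const 0 s)
    (line_hasDerivAt θ (EuclideanSpace.single k 1)) (by linarith)
  refine this.congr_deriv ?_
  simp [EuclideanSpace.inner_single_left]

lemma W_lineDeriv {ν : Measure (Eu n)} {R : ℝ} (hν : Tame ν R) {s : ℝ} (hs : 0 < s) (θ : Eu n)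
    (k : Fin n) : HasLineDerivAt ℝ (W ν s) ((mm ν (fun x => x k) s θ + -(1 / s) * θ k) * W ν s θ) θ
      (EuclideanSpace.single k 1) := by
  have h1 := Psi_lineDeriv hν (continuous_const (y := (1 : ℝ))) s θ k
  have e3 := mm_mul_Z hν (fun x => x k) s θ
  simp only [mul_one] at h1
  rw [← e3] at h1
  refine HasDerivAt.congr_deriv (lineDeriv_mul h1 (gk_lineDeriv hs θ k)) ?_
  rw [W]; ring

/-- The derivative in direction `k` of the `k`-th component of the probability flux of the
localization process. -/
lemma flux_lineDeriv {ν : Measure (Eu n)} {R : ℝ} (hν : Tame ν R) {s : ℝ} (hs : 0 < s) (θ : Eu n)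
    (k : Fin n) : HasLineDerivAt ℝ
      (fun θ => (-(1 / 2) * (mm ν (fun x => x k) s θ + 1 / s * θ k)) * W ν s θ)
      ((-(1 / 2) * (mm ν (fun x => x k * x k) s θ + 1 / s) + 1 / (2 * s ^ 2) * θ k ^ 2) * W ν s θ) θ
      (EuclideanSpace.single k 1) := by
  have h1 := mm_lineDeriv hν (h := fun x : Eu n => x k) (by fun_prop) s θ k
  have h2 : HasLineDerivAt ℝ (fun θ : Eu n => θ k) 1 θ (EuclideanSpace.single k 1) := by
    have := (EuclideanSpace.proj (𝕜 := ℝ) k : Eu n →L[ℝ] ℝ).hasFDerivAt.comp_hasDerivAt 0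
      (line_hasDerivAt θ (EuclideanSpace.single k 1))
    refine HasDerivAt.congr_deriv this ?_
    simp
  have c : ∀ a : ℝ, HasLineDerivAt ℝ (fun _ : Eu n => a) 0 θ (EuclideanSpace.single k 1) :=
    fun a => hasDerivAt_const 0 a
  have h3 := lineDeriv_mul (lineDeriv_mul (c (-(1 / 2))) (lineDeriv_add h1
    (lineDeriv_mul (c (1 / s)) h2))) (W_lineDeriv hν hs θ k)
  refine HasDerivAt.congr_deriv h3 ?_
  field_simp
  ring

lemma integral_by_parts {F F' G G' : Eu n → ℝ} {v : Eu n}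
    (h1 : Integrable fun x => F' x * G x) (h2 : Integrable fun x => F x * G' x)
    (h3 : Integrable fun x => F x * G x) (hF : ∀ x, HasLineDerivAt ℝ F (F' x) x v)
    (hG : ∀ x, HasLineDerivAt ℝ G (G' x) x v) :
    ∫ x, F x * G' x = -∫ x, F' x * G x := by
  exact integral_bilinear_hasLineDerivAt_right_eq_neg_left_of_integrable
    (B := ContinuousLinearMap.mul ℝ ℝ) h1 h2 h3 (fun x _ => hF x) (fun x _ => hG x)

end

/-! ### Dynkin's formula -/

section

variable {n : ℕ}

lemma IsJet.mono {I I' : Set ℝ} {J : Jet n} (hJ : IsJet I J) (h : I' ⊆ I) : IsJet I' J where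
  ds s hs := hJ.ds s (h hs)
  d1 s hs := hJ.d1 s (h hs)
  d2 s hs := hJ.d2 s (h hs)
  b := ⟨fun s hs => hJ.b.1 s (h hs), hJ.b.2.imp fun _ hK s hs => hK s (h hs)⟩
  bs := ⟨fun s hs => hJ.bs.1 s (h hs), hJ.bs.2.imp fun _ hK s hs => hK s (h hs)⟩
  b1 k := ⟨fun s hs => (hJ.b1 k).1 s (h hs), (hJ.b1 k).2.imp fun _ hK s hs => hK s (h hs)⟩
  b2 k := ⟨fun s hs => (hJ.b2 k).1 s (h hs), (hJ.b2 k).2.imp fun _ hK s hs => hK s (h hs)⟩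

/-- The Kolmogorov equation `∂ₛ W = div (flux)`, integrated against a jet. -/
lemma integral_Ws {ν : Measure (Eu n)} {R : ℝ} (hν : Tame ν R) {I : Set ℝ} {J : Jet n}
    (hJ : IsJet I J) {s : ℝ} (hsI : s ∈ I) (hs : 0 < s) :
    ∫ θ, J.F s θ * (((-(1 / 2) * ∑ k, mm ν (fun x => x k * x k) s θ +
      -(n / (2 * s))) + 1 / (2 * s ^ 2) * ‖θ‖ ^ 2) * W ν s θ) =
    ∑ k, ∫ θ, (mm ν (fun x => x k) s θ * J.F1 k s θ + 1 / 2 * J.F2 k s θ) * W ν s θ := by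
  have hI : s ∈ ({s} : Set ℝ) := rfl
  have hJ' : IsJet {s} J := hJ.mono (by simpa using hsI)
  have bm : ∀ {h : Eu n → ℝ}, Continuous h → Bd {s} (mm ν h) := fun hh => Bd.mm hν hh _
  have bc : ∀ c : ℝ, Bd {s} (fun _ (_ : Eu n) => c) := fun c => Bd.const _ c
  -- the divergence of the flux, component by component
  have key : ∀ k, ∫ θ, J.F s θ * ((-(1 / 2) * (mm ν (fun x => x k * x k) s θ + 1 / s) +
      1 / (2 * s ^ 2) * θ k ^ 2) * W ν s θ) =
      ∫ θ, (mm ν (fun x => x k) s θ * J.F1 k s θ + 1 / 2 * J.F2 k s θ) * W ν s θ := by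
    intro k
    have hg1 : EG {s} (fun s θ => -(1 / 2) * (mm ν (fun x => x k) s θ + 1 / s * θ k)) :=
      (bc _).mul_eg ((bm (by fun_prop)).eg.add
        ((Bd.of_s (K := |1 / s|) (by simp)).mul_eg (EG.coord _ k)))
    have hg2 : EG {s} (fun s θ => -(1 / 2) * (mm ν (fun x => x k * x k) s θ + 1 / s) +
        1 / (2 * s ^ 2) * θ k ^ 2) :=
      ((bc _).mul ((bm (by fun_prop)).add (Bd.of_s (K := |1 / s|) (by simp)))).eg.add
        ((Bd.of_s (K := |1 / (2 * s ^ 2)|) (by simp)).mul_eg (EG.coord_sq _ k))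
    have hg3 : EG {s} (fun s θ => mm ν (fun x => x k) s θ + -(1 / s) * θ k) :=
      (bm (by fun_prop)).eg.add ((Bd.of_s (K := |1 / s|) (by simp)).mul_eg (EG.coord _ k))
    have i1 := ((hJ'.b1 k).mul_eg hg1).integrable hν hs hI
    have i2 := (hJ'.b.mul_eg hg2).integrable hν hs hI
    have i3 := (hJ'.b.mul_eg hg1).integrable hν hs hI
    have i4 := ((hJ'.b1 k).mul_eg hg3).integrable hν hs hI
    have i5 := (hJ'.b2 k).eg.integrable hν hs hI
    have i6 := (hJ'.b1 k).eg.integrable hν hs hI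
    have i7 := ((bm (h := fun x => x k) (by fun_prop)).mul (hJ'.b1 k)).eg.integrable hν hs hI
    simp only [mul_assoc] at i1 i2 i3 i4
    have p1 := integral_by_parts (F := J.F s) (F' := J.F1 k s) (by simpa only [mul_assoc] using i1)
      (by simpa only [mul_assoc] using i2) (by simpa only [mul_assoc] using i3)
      (fun θ => hJ.d1 s hsI θ k) (fun θ => flux_lineDeriv hν hs θ k)
    have p2 := integral_by_parts (F := J.F1 k s) (F' := J.F2 k s) i5
      (by simpa only [mul_assoc] using i4) i6
      (fun θ => hJ.d2 s hsI θ k) (fun θ => W_lineDeriv hν hs θ k)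
    rw [p1]
    have e1 : ∀ θ, J.F1 k s θ * (-(1 / 2) * (mm ν (fun x => x k) s θ + 1 / s * θ k) * W ν s θ) =
        1 / 2 * (J.F1 k s θ * ((mm ν (fun x => x k) s θ + -(1 / s) * θ k) * W ν s θ)) -
        (mm ν (fun x => x k) s θ * J.F1 k s θ) * W ν s θ := fun θ => by ring
    have e2 : ∀ θ, (mm ν (fun x => x k) s θ * J.F1 k s θ + 1 / 2 * J.F2 k s θ) * W ν s θ =
        (mm ν (fun x => x k) s θ * J.F1 k s θ) * W ν s θ + 1 / 2 * (J.F2 k s θ * W ν s θ) :=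
      fun θ => by ring
    simp only [e1, e2]
    have i4' : Integrable fun θ =>
        1 / 2 * (J.F1 k s θ * ((mm ν (fun x => x k) s θ + -(1 / s) * θ k) * W ν s θ)) := by
      refine Integrable.const_mul ?_ _
      simpa only [mul_assoc] using i4
    have i7' : Integrable fun θ => mm ν (fun x => x k) s θ * J.F1 k s θ * W ν s θ := i7
    have i5' : Integrable fun θ => 1 / 2 * (J.F2 k s θ * W ν s θ) := i5.const_mul _
    rw [integral_sub i4' i7', integral_add i7' i5', integral_const_mul, integral_const_mul, p2]
    ring
  simp only [← key]
  rw [← integral_finsetSum]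
  · congr 1; ext θ
    rw [← Finset.mul_sum, ← Finset.sum_mul]
    congr 2
    rw [EuclideanSpace.norm_sq_eq]
    simp only [Real.norm_eq_abs, sq_abs, Finset.sum_add_distrib, ← Finset.mul_sum]
    simp
    field_simp
    ring
  · intro k _
    have hg2 : EG {s} (fun s θ => -(1 / 2) * (mm ν (fun x => x k * x k) s θ + 1 / s) +
        1 / (2 * s ^ 2) * θ k ^ 2) :=
      ((bc _).mul ((bm (by fun_prop)).add (Bd.of_s (K := |1 / s|) (by simp)))).eg.add
        ((Bd.of_s (K := |1 / (2 * s ^ 2)|) (by simp)).mul_eg (EG.coord_sq _ k))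
    have i2 := (hJ'.b.mul_eg hg2).integrable hν hs hI
    simpa only [mul_assoc] using i2

/-- Dynkin's formula: `d/ds E_s F = E_s (gen F)`. -/
theorem dynkin {ν : Measure (Eu n)} {R : ℝ} (hν : Tame ν R) {I : Set ℝ} (hIo : IsOpen I)
    {J : Jet n} (hJ : IsJet I J) {s₀ : ℝ} (hs₀ : s₀ ∈ I) (h0 : 0 < s₀) :
    HasDerivAt (fun s => EE ν s (J.F s)) (EE ν s₀ (gen ν J s₀)) s₀ := by
  set I' : Set ℝ := I ∩ Set.Ioo (s₀ / 2) (2 * s₀) with hI'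
  have hI'o : I' ∈ nhds s₀ :=
    (hIo.inter isOpen_Ioo).mem_nhds ⟨hs₀, by constructor <;> linarith⟩
  have hmem : s₀ ∈ I' := mem_of_mem_nhds hI'o
  have hJ' : IsJet I' J := hJ.mono Set.inter_subset_left
  have hw : EG I' (fun s θ => ((-(1 / 2) * ∑ k, mm ν (fun x => x k * x k) s θ +
      -(n / (2 * s))) + 1 / (2 * s ^ 2) * ‖θ‖ ^ 2)) := by
    refine EG.add (Bd.eg (Bd.add ((Bd.const _ _).mul (Bd.sum _ fun k => Bd.mm hν (by fun_prop) _))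
      (Bd.of_s (K := n / s₀) fun s hs => ?_)))
      (Bd.mul_eg (Bd.of_s (K := 1 / (s₀ ^ 2 / 2)) fun s hs => ?_) (EG.normSq _))
    · have h1 : s₀ / 2 < s := hs.2.1
      have : 0 < s := by linarith
      rw [abs_neg, abs_of_nonneg (by positivity)]
      gcongr; linarith
    · have h1 : s₀ / 2 < s := hs.2.1
      have : 0 < s := by linarith
      rw [abs_of_nonneg (by positivity)]
      gcongr
      nlinarith
  have hD : EG I' (fun s θ => J.Fs s θ + J.F s θ * ((-(1 / 2) * ∑ k, mm ν (fun x => x k * x k) s θ +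
      -(n / (2 * s))) + 1 / (2 * s ^ 2) * ‖θ‖ ^ 2)) := hJ'.bs.eg.add (hJ'.b.mul_eg hw)
  obtain ⟨C, hC⟩ := hD.2
  have hi := ((admV_one (n := n) (1 / (2 * s₀)) (by positivity)).2 (R + 1)).const_mul
    (C * Real.exp (-(n / 2 * Real.log (π * s₀))))
  have main := hasDerivAt_integral_of_dominated_loc_of_deriv_le (μ := (volume : Measure (Eu n)))
    (F := fun s θ => J.F s θ * W ν s θ)
    (F' := fun s θ => (J.Fs s θ + J.F s θ * ((-(1 / 2) * ∑ k, mm ν (fun x => x k * x k) s θ +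
      -(n / (2 * s))) + 1 / (2 * s ^ 2) * ‖θ‖ ^ 2)) * W ν s θ) hI'o ?_
    (hJ'.b.eg.integrable hν h0 hmem)
    ((hD.1 s₀ hmem).mul (W_continuous hν s₀)).aestronglyMeasurable ?_ hi ?_
  · refine main.2.congr_deriv ?_
    have i1 := hJ'.bs.eg.integrable hν h0 hmem
    have i2 := (hJ'.b.mul_eg hw).integrable hν h0 hmem
    simp only [add_mul]
    have e : ∫ θ, (J.Fs s₀ θ + J.F s₀ θ * ((-(1 / 2) * ∑ k, mm ν (fun x => x k * x k) s₀ θ +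
      -(n / (2 * s₀))) + 1 / (2 * s₀ ^ 2) * ‖θ‖ ^ 2)) * W ν s₀ θ =
      (∫ θ, J.Fs s₀ θ * W ν s₀ θ) + ∫ θ, J.F s₀ θ * (((-(1 / 2) * ∑ k, mm ν (fun x => x k * x k) s₀ θ +
      -(n / (2 * s₀))) + 1 / (2 * s₀ ^ 2) * ‖θ‖ ^ 2) * W ν s₀ θ) := by
      rw [← integral_add i1 (by simpa only [mul_assoc] using i2)]
      congr 1; ext θ; ring
    have i3 : ∀ k, Integrable fun θ =>
        (mm ν (fun x => x k) s₀ θ * J.F1 k s₀ θ + 1 / 2 * J.F2 k s₀ θ) * W ν s₀ θ := fun k =>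
      (((Bd.mm hν (by fun_prop) I').mul (hJ'.b1 k)).add
        ((Bd.const I' (1 / 2)).mul (hJ'.b2 k))).eg.integrable hν h0 hmem
    simp only [← add_mul]
    rw [e, integral_Ws hν hJ hs₀ h0, ← integral_finsetSum _ fun k _ => i3 k,
      ← integral_add i1 (integrable_finsetSum _ fun k _ => i3 k), EE]
    congr 1; ext θ
    simp only [gen]
    rw [← Finset.sum_mul, ← add_mul, Finset.sum_add_distrib, ← Finset.mul_sum]
    ring
  · filter_upwards [hI'o] with s hs
    exact ((hJ'.b.1 s hs).mul (W_continuous hν s)).aestronglyMeasurable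
  · filter_upwards with θ s hs
    have hW := W_le hν h0 hs.2.1.le hs.2.2.le θ
    rw [norm_mul, Real.norm_eq_abs, Real.norm_of_nonneg (W_pos hν s θ).le]
    calc _ ≤ (C * Real.exp ‖θ‖) * (Real.exp (-(n / 2 * Real.log (π * s₀))) *
        Real.exp (R * ‖θ‖ - 1 / (2 * s₀) * ‖θ‖ ^ 2 / 2)) :=
          mul_le_mul (hC s hs θ) hW (W_pos hν s θ).le ((abs_nonneg _).trans (hC s hs θ))
      _ = _ := by
          have : (R + 1) * ‖θ‖ - 1 / (2 * s₀) * ‖θ‖ ^ 2 / 2 =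
            ‖θ‖ + (R * ‖θ‖ - 1 / (2 * s₀) * ‖θ‖ ^ 2 / 2) := by ring
          rw [this, Real.exp_add, abs_one]; ring
  · filter_upwards with θ s hs
    have h1 : s₀ / 2 < s := hs.2.1
    have hs0 : 0 < s := by linarith
    refine ((hJ'.ds s hs θ).mul (W_sDeriv hν hs0 θ)).congr_deriv ?_
    ring

lemma EE_mono {ν : Measure (Eu n)} {R : ℝ} (hν : Tame ν R) {s : ℝ} (hs : 0 < s)
    {G H : ℝ → Eu n → ℝ} (hG : Bd {s} G) (hH : Bd {s} H) (h : ∀ θ, G s θ ≤ H s θ) :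
    EE ν s (G s) ≤ EE ν s (H s) :=
  integral_mono (hG.eg.integrable hν hs (Set.mem_singleton s)) (hH.eg.integrable hν hs (Set.mem_singleton s))
    fun θ => mul_le_mul_of_nonneg_right (h θ) (W_pos hν s θ).le

lemma EE_add {ν : Measure (Eu n)} {R : ℝ} (hν : Tame ν R) {s : ℝ} (hs : 0 < s)
    {G H : ℝ → Eu n → ℝ} (hG : Bd {s} G) (hH : Bd {s} H) :
    EE ν s (fun θ => G s θ + H s θ) = EE ν s (G s) + EE ν s (H s) := by
  simp only [EE]
  rw [← integral_add (hG.eg.integrable hν hs (Set.mem_singleton s)) (hH.eg.integrable hν hs (Set.mem_singleton s))]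
  congr 1; ext θ; ring

lemma EE_const_mul (ν : Measure (Eu n)) (s c : ℝ) (G : Eu n → ℝ) :
    EE ν s (fun θ => c * G θ) = c * EE ν s G := by
  simp only [EE]
  rw [← integral_const_mul]
  congr 1; ext θ; ring

open Filter Topology in
/-- At time zero the process starts from the origin. -/
lemma EE_tendsto {ν : Measure (Eu n)} {R : ℝ} (hν : Tame ν R) {G : ℝ → Eu n → ℝ} {δ : ℝ}
    (hδ : 0 < δ) (hG : Bd (Set.Ioo 0 δ) G)
    (hc : ContinuousAt (fun p : ℝ × Eu n => G p.1 p.2) (0, 0)) :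
    Tendsto (fun s => EE ν s (G s)) (𝓝[>] 0) (𝓝 (G 0 0)) := by
  have := hν.prob
  obtain ⟨K, hK⟩ := hG.2
  have hR := hν.nonneg
  have e : ∀ s, 0 < s → EE ν s (G s) =
      ∫ z : Eu n, G s (√s • z) * Psi ν (fun _ => 1) s (√s • z) * gk 1 z := by
    intro s hs
    have := Mh_scale (fun θ => G s θ * Psi ν (fun _ => 1) s θ) (Real.sqrt_pos.2 hs) (0 : Eu n)
    simp only [zero_add, Mh, sub_zero, Real.sq_sqrt hs.le] at this
    rw [← this, EE]
    congr 1; ext θ; rw [W]; ring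
  have hZ0 : Psi ν (fun _ => 1) 0 (0 : Eu n) = 1 := by simp [Psi, ew]
  have lim : Tendsto (fun s => ∫ z : Eu n, G s (√s • z) * Psi ν (fun _ => 1) s (√s • z) * gk 1 z)
      (𝓝[>] 0) (𝓝 (∫ z : Eu n, G 0 0 * 1 * gk 1 z)) := by
    have hi := (((admV_one (n := n) 1 one_pos).2 R).const_mul
      (K * Real.exp (-(n / 2 * Real.log (2 * π * 1)))))
    have hev : ∀ᶠ s in 𝓝[>] (0 : ℝ), s ∈ Set.Ioo 0 (min δ 1) :=
      Ioo_mem_nhdsGT (by positivity)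
    refine tendsto_integral_filter_of_dominated_convergence _ ?_ ?_ hi ?_
    · filter_upwards [hev] with s hs
      have hs' : s ∈ Set.Ioo 0 δ := ⟨hs.1, hs.2.trans_le (min_le_left _ _)⟩
      have hZ : Continuous (Psi ν (fun _ => 1) s) := continuous_iff_continuousAt.2 fun θ =>
        (Psi_continuousAt (hν.adm continuous_const (s - 1)) (by linarith) θ).comp
          (Continuous.prodMk_right s).continuousAt
      have c1 : Continuous fun z : Eu n => √s • z := by fun_prop
      exact ((((hG.1 s hs').comp c1).mul (hZ.comp c1)).mul (gk_continuous 1)).aestronglyMeasurable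
    · filter_upwards [hev] with s hs
      filter_upwards with z
      have hs' : s ∈ Set.Ioo 0 δ := ⟨hs.1, hs.2.trans_le (min_le_left _ _)⟩
      have hs1 : s ≤ 1 := (hs.2.trans_le (min_le_right _ _)).le
      have hsq : √s ≤ 1 := Real.sqrt_le_one.2 hs1
      have h1 := hK s hs' (√s • z)
      have h2 := Psi_one_le hν hs.1.le (√s • z)
      have h3 : Real.exp (R * ‖√s • z‖) ≤ Real.exp (R * ‖z‖) := by
        refine Real.exp_le_exp.2 ?_
        rw [norm_smul, Real.norm_of_nonneg (Real.sqrt_nonneg _)]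
        gcongr
        nlinarith [norm_nonneg z]
      rw [norm_mul, norm_mul, Real.norm_eq_abs, Real.norm_of_nonneg (Psi_one_pos hν _ _).le,
        Real.norm_of_nonneg (gk_pos _ _).le]
      calc _ ≤ K * Real.exp (R * ‖z‖) * gk 1 z := by
            refine mul_le_mul_of_nonneg_right ?_ (gk_pos _ _).le
            exact mul_le_mul h1 (h2.trans h3) (Psi_one_pos hν _ _).le ((abs_nonneg _).trans h1)
        _ = _ := by
            rw [gk_eq, abs_one, one_mul, sub_eq_add_neg, Real.exp_add]
            have : -(1 / (2 * 1)) * ‖z‖ ^ 2 = -(1 * ‖z‖ ^ 2 / 2) := by ring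
            rw [this]; ring
    · filter_upwards with z
      refine Tendsto.mul_const _ ?_
      have ht : Tendsto (fun s : ℝ => (s, √s • z)) (𝓝[>] 0) (𝓝 ((0 : ℝ), (0 : Eu n))) := by
        have : Continuous fun s : ℝ => (s, √s • z) := by fun_prop
        have h := this.tendsto 0
        simp only [Real.sqrt_zero, zero_smul] at h
        exact h.mono_left nhdsWithin_le_nhds
      have hZ := (Psi_continuousAt (hν.adm (continuous_const (y := (1 : ℝ))) (-1)) (s := 0)
        (by norm_num) (0 : Eu n)).tendsto.comp ht
      simp only [hZ0] at hZ
      exact (hc.tendsto.comp ht).mul hZ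
  rw [integral_const_mul, gk_integral one_pos, mul_one, mul_one] at lim
  refine lim.congr' ?_
  filter_upwards [self_mem_nhdsWithin] with s hs
  exact (e s hs).symm

end

/-! ### Log-concavity of tilted measures -/

section

variable {n : ℕ}

/-- Affine bijections preserve log-concavity of measures. -/
lemma logConcave_map {ν : Measure (Eu n)} (hν : IsLogConcaveMeasure ν)
    {B B' : Matrix (Fin n) (Fin n) ℝ} (hB : B * B' = 1) (a : Eu n) :
    IsLogConcaveMeasure (ν.map fun x => Matrix.toEuclideanLin B (x - a)) := by
  obtain ⟨p, hpm, ⟨hp0, hp⟩, rfl⟩ := hν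
  have hB' : B' * B = 1 := mul_eq_one_comm.1 hB
  have hcB : Continuous (Matrix.toEuclideanLin B) := LinearMap.continuous_of_finiteDimensional _
  have hcB' : Continuous (Matrix.toEuclideanLin B') := LinearMap.continuous_of_finiteDimensional _
  have hl : ∀ x, Matrix.toEuclideanLin B' (Matrix.toEuclideanLin B x) = x := fun x => by
    ext i; simp [Matrix.toEuclideanLin, Matrix.mulVec_mulVec, hB']
  have hr : ∀ x, Matrix.toEuclideanLin B (Matrix.toEuclideanLin B' x) = x := fun x => by
    ext i; simp [Matrix.toEuclideanLin, Matrix.mulVec_mulVec, hB]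
  have hdet : LinearMap.det (Matrix.toEuclideanLin B) ≠ 0 := by
    have h : Matrix.toEuclideanLin B ∘ₗ Matrix.toEuclideanLin B' = LinearMap.id :=
      LinearMap.ext hr
    intro h0
    have := congrArg LinearMap.det h
    rw [LinearMap.det_comp, h0, zero_mul, LinearMap.det_id] at this
    exact zero_ne_one this
  set c : ℝ := |(LinearMap.det (Matrix.toEuclideanLin B))⁻¹| with hc
  have hc0 : 0 ≤ c := abs_nonneg _
  set Φ : Eu n → Eu n := fun x => Matrix.toEuclideanLin B (x - a)
  have hΦ : Measurable Φ := by
    have : Continuous Φ := hcB.comp (by fun_prop)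
    exact this.measurable
  have hvol : (volume : Measure (Eu n)).map Φ = ENNReal.ofReal c • volume := by
    have h1 : (volume : Measure (Eu n)).map (fun x => x - a) = volume :=
      (measurePreserving_sub_right volume a).map_eq
    have h2 := Measure.map_linearMap_addHaar_eq_smul_addHaar (volume : Measure (Eu n)) hdet
    rw [← h2, ← h1, Measure.map_map hcB.measurable (by fun_prop), h1]
    rfl
  refine ⟨fun y => c * p (Matrix.toEuclideanLin B' y + a),
    (hpm.comp (hcB'.measurable.add_const a)).const_mul c, ⟨fun y => mul_nonneg hc0 (hp0 _), ?_⟩, ?_⟩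
  · intro x y t ht0 ht1
    rw [Real.mul_rpow hc0 (hp0 _), Real.mul_rpow hc0 (hp0 _)]
    have e : Matrix.toEuclideanLin B' (t • x + (1 - t) • y) + a =
        t • (Matrix.toEuclideanLin B' x + a) + (1 - t) • (Matrix.toEuclideanLin B' y + a) := by
      rw [map_add, map_smul, map_smul]; module
    simp only [e]
    have hcc : c ^ t * c ^ (1 - t) = c := by
      rw [← Real.rpow_add_of_nonneg hc0 ht0 (by linarith)]; simp
    calc _ = (c ^ t * c ^ (1 - t)) * (p (Matrix.toEuclideanLin B' x + a) ^ t *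
        p (Matrix.toEuclideanLin B' y + a) ^ (1 - t)) := by ring
      _ ≤ _ := by rw [hcc]; exact mul_le_mul_of_nonneg_left (hp _ _ t ht0 ht1) hc0
  · have hm : Measurable fun y => ENNReal.ofReal (p (Matrix.toEuclideanLin B' y + a)) :=
      (hpm.comp (hcB'.measurable.add_const a)).ennreal_ofReal
    refine Measure.ext fun s hs => ?_
    rw [Measure.map_apply hΦ hs, withDensity_apply _ (hΦ hs), withDensity_apply _ hs]
    simp_rw [ENNReal.ofReal_mul hc0]
    rw [lintegral_const_mul _ hm]
    have : ∫⁻ y in s, ENNReal.ofReal (p (Matrix.toEuclideanLin B' y + a))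
        ∂((volume : Measure (Eu n)).map Φ) = ∫⁻ x in Φ ⁻¹' s, ENNReal.ofReal (p x) := by
      rw [setLIntegral_map hs hm hΦ]
      refine lintegral_congr fun x => ?_
      simp only [Φ, hl, sub_add_cancel]
    rw [← this, hvol, Measure.restrict_smul, lintegral_smul_measure, smul_eq_mul]

/-- The tilted probability measure, with density proportional to `ew s θ`. -/
def tl (ν : Measure (Eu n)) (s : ℝ) (θ : Eu n) : Measure (Eu n) :=
  ν.withDensity fun x => ENNReal.ofReal (ew s θ x / Psi ν (fun _ => 1) s θ)

lemma integral_tl {ν : Measure (Eu n)} (h : Eu n → ℝ) (s : ℝ) (θ : Eu n) :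
    ∫ x, h x ∂(tl ν s θ) = mm ν h s θ := by
  have hZ : 0 ≤ Psi ν (fun _ => 1) s θ := by
    refine integral_nonneg fun x => ?_
    simpa using (ew_pos s θ x).le
  have hm : Measurable fun x => ew s θ x / Psi ν (fun _ => 1) s θ :=
    (ew_continuous_x s θ).measurable.div_const _
  rw [tl, integral_withDensity_eq_integral_toReal_smul hm.ennreal_ofReal (by simp), mm]
  have e : Psi ν h s θ = ∫ x, h x * ew s θ x ∂ν := rfl
  rw [e, ← integral_div]
  refine integral_congr_ae (Filter.Eventually.of_forall fun x => ?_)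
  simp only [smul_eq_mul]
  rw [ENNReal.toReal_ofReal (div_nonneg (ew_pos s θ x).le hZ)]
  ring

lemma tl_prob {ν : Measure (Eu n)} {R : ℝ} (hν : Tame ν R) (s : ℝ) (θ : Eu n) :
    IsProbabilityMeasure (tl ν s θ) := by
  have hZ := Psi_one_pos hν s θ
  refine ⟨?_⟩
  rw [tl, withDensity_apply _ MeasurableSet.univ, Measure.restrict_univ,
    ← ofReal_integral_eq_lintegral_ofReal]
  · rw [integral_div]
    have : ∫ x, ew s θ x ∂ν = Psi ν (fun _ => 1) s θ := by simp [Psi]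
    rw [this, div_self hZ.ne', ENNReal.ofReal_one]
  · have := (hν.integrable (continuous_const (y := (1 : ℝ))) s θ).div_const (Psi ν (fun _ => 1) s θ)
    simpa using this
  · exact Filter.Eventually.of_forall fun x => div_nonneg (ew_pos s θ x).le hZ.le

lemma ew_logConcave {s : ℝ} (hs : 0 ≤ s) (θ x y : Eu n) {t : ℝ} (h0 : 0 ≤ t) (h1 : t ≤ 1) :
    ew s θ x ^ t * ew s θ y ^ (1 - t) ≤ ew s θ (t • x + (1 - t) • y) := by
  simp only [ew, ← Real.exp_mul]
  rw [← Real.exp_add]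
  refine Real.exp_le_exp.2 ?_
  have h : ‖t • x + (1 - t) • y‖ ^ 2 ≤ t * ‖x‖ ^ 2 + (1 - t) * ‖y‖ ^ 2 := by
    have e : t * ‖x‖ ^ 2 + (1 - t) * ‖y‖ ^ 2 - ‖t • x + (1 - t) • y‖ ^ 2 =
        t * (1 - t) * ‖x - y‖ ^ 2 := by
      simp only [← real_inner_self_eq_norm_sq, inner_add_left, inner_add_right, inner_sub_left,
        inner_sub_right, real_inner_smul_left, real_inner_smul_right, real_inner_comm x y]
      ring
    have : 0 ≤ t * (1 - t) * ‖x - y‖ ^ 2 :=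
      mul_nonneg (mul_nonneg h0 (by linarith)) (by positivity)
    linarith
  rw [inner_add_right, real_inner_smul_right, real_inner_smul_right]
  nlinarith

lemma tl_logConcave {ν : Measure (Eu n)} {R : ℝ} (hν : Tame ν R) (hl : IsLogConcaveMeasure ν)
    {s : ℝ} (hs : 0 ≤ s) (θ : Eu n) : IsLogConcaveMeasure (tl ν s θ) := by
  have hZ := Psi_one_pos hν s θ
  set Z := Psi ν (fun _ => 1) s θ with hZd
  obtain ⟨p, hpm, ⟨hp0, hp⟩, hpe⟩ := hl
  have hm : Measurable fun x => ew s θ x / Z :=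
    (ew_continuous_x s θ).measurable.div_const _
  refine ⟨fun x => p x * (ew s θ x / Z), hpm.mul hm,
    ⟨fun x => mul_nonneg (hp0 x) (div_nonneg (ew_pos _ _ _).le hZ.le), ?_⟩, ?_⟩
  · intro x y t h0 h1
    have he := fun x => (div_nonneg (ew_pos s θ x).le hZ.le)
    rw [Real.mul_rpow (hp0 _) (he _), Real.mul_rpow (hp0 _) (he _)]
    have h2 : (ew s θ x / Z) ^ t * (ew s θ y / Z) ^ (1 - t) ≤ ew s θ (t • x + (1 - t) • y) / Z := by
      rw [Real.div_rpow (ew_pos _ _ _).le hZ.le, Real.div_rpow (ew_pos _ _ _).le hZ.le,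
        div_mul_div_comm, ← Real.rpow_add hZ, add_sub_cancel, Real.rpow_one]
      exact div_le_div_of_nonneg_right (ew_logConcave hs θ x y h0 h1) hZ.le
    calc _ = (p x ^ t * p y ^ (1 - t)) * ((ew s θ x / Z) ^ t * (ew s θ y / Z) ^ (1 - t)) := by ring
      _ ≤ _ := mul_le_mul (hp x y t h0 h1) h2
        (mul_nonneg (Real.rpow_nonneg (he _) _) (Real.rpow_nonneg (he _) _)) (hp0 _)
  · rw [tl, ← hZd]
    conv_lhs => rw [hpe]
    rw [← withDensity_mul _ hpm.ennreal_ofReal hm.ennreal_ofReal]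
    congr 1; ext x
    rw [Pi.mul_apply, ENNReal.ofReal_mul (hp0 x)]

end

/-! ### Centered linear functionals and covariance -/

section

variable {n : ℕ}

lemma exists_diag {A : Matrix (Fin n) (Fin n) ℝ} (hA : ∀ i j, A i j = A j i) :
    ∃ (U : Matrix (Fin n) (Fin n) ℝ) (lam : Fin n → ℝ), U.transpose * U = 1 ∧
      U * U.transpose = 1 ∧ A = U * Matrix.diagonal lam * U.transpose := by
  have hH : A.IsHermitian := by
    ext i j; simp [hA i j]
  have h1 := Unitary.coe_star_mul_self hH.eigenvectorUnitary
  have h2 := Unitary.coe_mul_star_self hH.eigenvectorUnitary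
  have h3 := hH.spectral_theorem
  rw [Unitary.conjStarAlgAut_apply] at h3
  refine ⟨hH.eigenvectorUnitary, hH.eigenvalues, ?_, ?_, ?_⟩
  · simpa [Matrix.star_eq_conjTranspose] using h1
  · simpa [Matrix.star_eq_conjTranspose] using h2
  · have e : (RCLike.ofReal ∘ hH.eigenvalues : Fin n → ℝ) = hH.eigenvalues := rfl
    rw [e, Matrix.star_eq_conjTranspose, Matrix.conjTranspose_eq_transpose_of_trivial] at h3
    exact h3

/-- The linear functional `w`, centered at the barycenter of the tilted measure. -/
def ctr (ν : Measure (Eu n)) (s : ℝ) (θ : Eu n) (w : Fin n → ℝ) (x : Eu n) : ℝ :=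
  ∑ i, w i * (x i - mm ν (fun x => x i) s θ)

lemma ctr_continuous (ν : Measure (Eu n)) (s : ℝ) (θ : Eu n) (w : Fin n → ℝ) :
    Continuous (ctr ν s θ w) := by
  unfold ctr; fun_prop

lemma mm_sub_mul {ν : Measure (Eu n)} {R : ℝ} (hν : Tame ν R) {h g : Eu n → ℝ}
    (hh : Continuous h) (hg : Continuous g) (c : ℝ) (s : ℝ) (θ : Eu n) :
    mm ν (fun x => (h x - c) * g x) s θ = mm ν (fun x => h x * g x) s θ - c * mm ν g s θ := by
  rw [← mm_const_mul, ← mm_sub hν (h := fun x => h x * g x) (h' := fun x => c * g x) (by fun_prop) (by fun_prop)]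
  congr 1; ext x; ring

lemma mm_ctr_mul {ν : Measure (Eu n)} {R : ℝ} (hν : Tame ν R) (s : ℝ) (θ : Eu n)
    (w : Fin n → ℝ) {g : Eu n → ℝ} (hg : Continuous g) :
    mm ν (fun x => ctr ν s θ w x * g x) s θ =
      ∑ i, w i * mm ν (fun x => (x i - mm ν (fun x => x i) s θ) * g x) s θ := by
  simp only [ctr, Finset.sum_mul, mul_assoc]
  rw [mm_sum hν _ (by fun_prop)]
  simp only [mm_const_mul]

lemma mm_centered {ν : Measure (Eu n)} {R : ℝ} (hν : Tame ν R) (s : ℝ) (θ : Eu n) (i j : Fin n) :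
    mm ν (fun x => (x i - mm ν (fun x => x i) s θ) * (x j - mm ν (fun x => x j) s θ)) s θ =
      cov ν s θ i j := by
  rw [mm_sub_mul hν (by fun_prop) (by fun_prop), mm_sub hν (by fun_prop) (by fun_prop), mm_const hν,
    cov_apply]
  have : (fun x : Eu n => x i * (x j - mm ν (fun x => x j) s θ)) =
      fun x => (x j - mm ν (fun x => x j) s θ) * x i := by ext x; ring
  rw [this, mm_sub_mul hν (by fun_prop) (by fun_prop)]
  have : (fun x : Eu n => x j * x i) = fun x => x i * x j := by ext x; ring
  rw [this]; ring

/-- First derivatives of the covariance are centred third moments. -/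
lemma F1_covJet {ν : Measure (Eu n)} {R : ℝ} (hν : Tame ν R) (s : ℝ) (θ : Eu n) (i j k : Fin n) :
    (covJet ν i j).F1 k s θ =
    mm ν (fun x => (x i - mm ν (fun x => x i) s θ) *
      ((x j - mm ν (fun x => x j) s θ) * (x k - mm ν (fun x => x k) s θ))) s θ := by
  have e : ∀ x : Eu n, x i * ((x j - mm ν (fun x => x j) s θ) * (x k - mm ν (fun x => x k) s θ)) =
      (x k * (x i * x j) - mm ν (fun x => x k) s θ * (x i * x j)) -
      (mm ν (fun x => x j) s θ * (x k * x i) - mm ν (fun x => x j) s θ * (mm ν (fun x => x k) s θ * x i)) :=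
    fun x => by ring
  rw [mm_sub_mul hν (by fun_prop) (by fun_prop), mm_centered hν]
  simp only [e]
  rw [mm_sub hν (by fun_prop) (by fun_prop), mm_sub hν (by fun_prop) (by fun_prop),
    mm_sub hν (by fun_prop) (by fun_prop)]
  simp only [mm_const_mul, cov_apply]
  have e2 : (fun x : Eu n => x j * x k) = fun x => x k * x j := by ext x; ring
  rw [e2]
  simp only [covJet, Jet.sub, Jet.mul, mmJet]
  ring

lemma mm_ctr_ctr {ν : Measure (Eu n)} {R : ℝ} (hν : Tame ν R) (s : ℝ) (θ : Eu n)
    (u v : Fin n → ℝ) : mm ν (fun x => ctr ν s θ u x * ctr ν s θ v x) s θ =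
      ∑ i, ∑ j, u i * v j * cov ν s θ i j := by
  rw [mm_ctr_mul hν s θ u (ctr_continuous ν s θ v)]
  refine Finset.sum_congr rfl fun i _ => ?_
  have : (fun x : Eu n => (x i - mm ν (fun x => x i) s θ) * ctr ν s θ v x) =
    fun x => ctr ν s θ v x * (x i - mm ν (fun x => x i) s θ) := by ext x; ring
  rw [this, mm_ctr_mul hν s θ v (by fun_prop), Finset.mul_sum]
  refine Finset.sum_congr rfl fun j _ => ?_
  rw [mm_centered hν, cov_symm]; ring

lemma conj_entry (U A : Matrix (Fin n) (Fin n) ℝ) (α β : Fin n) :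
    (U.transpose * A * U) α β = ∑ i, ∑ j, U i α * U j β * A i j := by
  simp only [Matrix.mul_apply, Matrix.transpose_apply, Finset.sum_mul]
  rw [Finset.sum_comm]
  refine Finset.sum_congr rfl fun i _ => Finset.sum_congr rfl fun j _ => by ring

lemma volume_hyperplane {u : Fin n → ℝ} (hu : u ≠ 0) (a : Fin n → ℝ) :
    (volume : Measure (Eu n)) {x | ∑ i, u i * (x i - a i) = 0} = 0 := by
  let L : Eu n →ₗ[ℝ] ℝ :=
    { toFun := fun x => ∑ i, u i * x i
      map_add' := fun x y => by simp [mul_add, Finset.sum_add_distrib]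
      map_smul' := fun c x => by simp [Finset.mul_sum, mul_left_comm] }
  have h0 : (volume : Measure (Eu n)) (LinearMap.ker L : Set (Eu n)) = 0 := by
    refine Measure.addHaar_submodule _ _ fun h => hu ?_
    rw [LinearMap.ker_eq_top] at h
    ext i
    have := congrArg (fun f => f (EuclideanSpace.single i 1)) h
    simpa [L, PiLp.single_apply] using this
  rw [← measure_preimage_add_right volume (-(WithLp.toLp 2 a))] at h0
  convert h0 using 2
  ext x
  simp [L, sub_eq_add_neg]

/-- The tilted measure has a density, so that no nonzero linear functional is degenerate. -/
lemma ctr_sq_pos {ν : Measure (Eu n)} {R : ℝ} (hν : Tame ν R) (hl : IsLogConcaveMeasure ν)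
    (s : ℝ) (θ : Eu n) {u : Fin n → ℝ} (hu : u ≠ 0) :
    0 < mm ν (fun x => ctr ν s θ u x * ctr ν s θ u x) s θ := by
  have hZ := Psi_one_pos hν s θ
  have hc := ctr_continuous ν s θ u
  refine div_pos ?_ hZ
  have hnn : 0 ≤ fun x => ctr ν s θ u x * ctr ν s θ u x * ew s θ x := fun x =>
    mul_nonneg (mul_self_nonneg _) (ew_pos _ _ _).le
  refine lt_of_le_of_ne (integral_nonneg hnn) fun h0 => ?_
  have h1 := (integral_eq_zero_iff_of_nonneg hnn (hν.integrable (hc.mul hc) s θ)).1 h0.symm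
  have hac : ν ≪ volume := by
    obtain ⟨p, -, -, rfl⟩ := hl
    exact withDensity_absolutelyContinuous _ _
  have h2 : ν {x | ctr ν s θ u x = 0} = 0 := hac (volume_hyperplane hu _)
  have h3 : ∀ᵐ x ∂ν, ¬ ctr ν s θ u x = 0 := by
    rw [ae_iff]; simpa using h2
  have := hν.prob
  have h4 : ∀ᵐ x ∂ν, False := by
    filter_upwards [h1, h3] with x hx hx'
    have hx1 : ctr ν s θ u x * ctr ν s θ u x * ew s θ x = 0 := hx
    exact hx' (mul_self_eq_zero.1 ((mul_eq_zero.1 hx1).resolve_right (ew_pos _ _ _).ne'))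
  simp at h4
  exact NeZero.ne ν h4

end

/-! ### The covariance bound `A ≤ 1 / s` -/

section

variable {n : ℕ}

/-- The Gaussian-normalized partition function `θ ↦ Z(s, θ) exp (-‖θ‖² / (2 s))`
is log-concave, being a marginal of a log-concave function of `(θ, x)`. -/
lemma Z_logConcave {ν : Measure (Eu n)} {R : ℝ} (hν : Tame ν R) (hl : IsLogConcaveMeasure ν)
    {s : ℝ} (hs : 0 < s) (θ₁ θ₂ : Eu n) {t : ℝ} (h0 : 0 < t) (h1 : t < 1) :
    (Psi ν (fun _ => 1) s θ₁ * Real.exp (-‖θ₁‖ ^ 2 / (2 * s))) ^ t *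
      (Psi ν (fun _ => 1) s θ₂ * Real.exp (-‖θ₂‖ ^ 2 / (2 * s))) ^ (1 - t) ≤
    Psi ν (fun _ => 1) s (t • θ₁ + (1 - t) • θ₂) *
      Real.exp (-‖t • θ₁ + (1 - t) • θ₂‖ ^ 2 / (2 * s)) := by
  obtain ⟨p, hpm, ⟨hp0, hp⟩, hpe⟩ := hl
  have hew : ∀ θ x : Eu n, ew s θ x * Real.exp (-‖θ‖ ^ 2 / (2 * s)) = ew s 0 (x - (1 / s) • θ) := by
    intro θ x
    simp only [ew]
    rw [← Real.exp_add, norm_sub_sq_real, real_inner_smul_right, norm_smul, inner_zero_left,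
      real_inner_comm, Real.norm_of_nonneg (by positivity)]
    congr 1
    field_simp
    ring
  have hcont : ∀ θ : Eu n, Measurable fun x => ew s 0 (x - (1 / s) • θ) := fun θ =>
    ((ew_continuous_x s 0).comp (by fun_prop)).measurable
  have key : ∀ θ : Eu n, ENNReal.ofReal (Psi ν (fun _ => 1) s θ * Real.exp (-‖θ‖ ^ 2 / (2 * s))) =
      ∫⁻ x, ENNReal.ofReal (p x * ew s 0 (x - (1 / s) • θ)) := by
    intro θ
    have i1 := hν.integrable (continuous_const (y := (1 : ℝ))) s θ
    rw [Psi, ← integral_mul_const, ofReal_integral_eq_lintegral_ofReal (i1.mul_const _)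
      (Filter.Eventually.of_forall fun x => ?_)]
    · simp only [one_mul, hew]
      conv_lhs => rw [hpe]
      rw [lintegral_withDensity_eq_lintegral_mul _ hpm.ennreal_ofReal (hcont θ).ennreal_ofReal]
      refine lintegral_congr fun x => ?_
      rw [Pi.mul_apply, ENNReal.ofReal_mul (hp0 x)]
    · have := ew_pos s θ x
      simp only [one_mul, Pi.zero_apply]
      positivity
  have hZ := fun θ => (mul_pos (Psi_one_pos hν s θ) (Real.exp_pos (-‖θ‖ ^ 2 / (2 * s)))).le
  have := prekopa_leindler h0 h1 (f := fun x => ENNReal.ofReal (p x * ew s 0 (x - (1 / s) • θ₁)))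
    (g := fun x => ENNReal.ofReal (p x * ew s 0 (x - (1 / s) • θ₂)))
    (h := fun x => ENNReal.ofReal (p x * ew s 0 (x - (1 / s) • (t • θ₁ + (1 - t) • θ₂))))
    (hpm.mul (hcont _)).ennreal_ofReal (hpm.mul (hcont _)).ennreal_ofReal
    (hpm.mul (hcont _)).ennreal_ofReal ?_
  · rw [← key, ← key, ← key, ENNReal.ofReal_rpow_of_nonneg (hZ _) h0.le,
      ENNReal.ofReal_rpow_of_nonneg (hZ _) (by linarith),
      ← ENNReal.ofReal_mul (Real.rpow_nonneg (hZ _) _)] at this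
    exact (ENNReal.ofReal_le_ofReal_iff (hZ _)).1 this
  · intro x y
    have he := fun x : Eu n => (ew_pos s 0 x).le
    rw [ENNReal.ofReal_rpow_of_nonneg (mul_nonneg (hp0 _) (he _)) h0.le,
      ENNReal.ofReal_rpow_of_nonneg (mul_nonneg (hp0 _) (he _)) (by linarith),
      ← ENNReal.ofReal_mul (Real.rpow_nonneg (mul_nonneg (hp0 _) (he _)) _)]
    refine ENNReal.ofReal_le_ofReal ?_
    rw [Real.mul_rpow (hp0 _) (he _), Real.mul_rpow (hp0 _) (he _)]
    have e : t • x + (1 - t) • y - (1 / s) • (t • θ₁ + (1 - t) • θ₂) =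
      t • (x - (1 / s) • θ₁) + (1 - t) • (y - (1 / s) • θ₂) := by module
    rw [e]
    calc _ = (p x ^ t * p y ^ (1 - t)) * (ew s 0 (x - (1 / s) • θ₁) ^ t *
        ew s 0 (y - (1 / s) • θ₂) ^ (1 - t)) := by ring
      _ ≤ _ := mul_le_mul (hp x y t h0.le h1.le) (ew_logConcave hs.le 0 _ _ h0.le h1.le)
        (mul_nonneg (Real.rpow_nonneg (he _) _) (Real.rpow_nonneg (he _) _)) (hp0 _)

/-- The tilted measure is more log-concave than a Gaussian of covariance `1 / s`. -/
lemma ctr_sq_le {ν : Measure (Eu n)} {R : ℝ} (hν : Tame ν R) (hl : IsLogConcaveMeasure ν)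
    {s : ℝ} (hs : 0 < s) (θ : Eu n) (u : Fin n → ℝ) :
    mm ν (fun x => ctr ν s θ u x * ctr ν s θ u x) s θ ≤ (∑ i, u i ^ 2) / s := by
  set v : Eu n := WithLp.toLp 2 u with hv
  have hctr : ∀ x, ctr ν s θ u x = ⟪v, x⟫ - mm ν (fun x => ⟪v, x⟫) s θ := by
    intro x
    have h : ∀ x : Eu n, ⟪v, x⟫ = ∑ i, u i * x i := fun x => by
      simp [hv, PiLp.inner_apply, mul_comm]
    simp only [h, ctr, mul_sub, Finset.sum_sub_distrib]
    rw [mm_sum hν _ (by fun_prop)]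
    simp only [mm_const_mul]
  have hmm : mm ν (fun x => ctr ν s θ u x * ctr ν s θ u x) s θ =
      mm ν (fun x => ⟪v, x⟫ * ⟪v, x⟫) s θ - mm ν (fun x => ⟪v, x⟫) s θ * mm ν (fun x => ⟪v, x⟫) s θ := by
    simp only [hctr]
    rw [mm_sub_mul hν (by fun_prop) (by fun_prop), mm_sub hν (by fun_prop) (by fun_prop), mm_const hν]
    have : (fun x : Eu n => ⟪v, x⟫ * (⟪v, x⟫ - mm ν (fun x => ⟪v, x⟫) s θ)) =
      fun x => (⟪v, x⟫ - mm ν (fun x => ⟪v, x⟫) s θ) * ⟪v, x⟫ := by ext x; ring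
    rw [this, mm_sub_mul hν (by fun_prop) (by fun_prop)]
    ring
  have hnorm : ∑ i, u i ^ 2 = ‖v‖ ^ 2 := by
    rw [EuclideanSpace.norm_sq_eq]; simp [hv]
  set g : ℝ → ℝ := fun r => Real.log (Psi ν (fun _ => 1) s (θ + r • v)) - ‖θ + r • v‖ ^ 2 / (2 * s)
    with hg
  set g' : ℝ → ℝ := fun r => mm ν (fun x => ⟪v, x⟫) s (θ + r • v) - ⟪v, θ + r • v⟫ / s with hg'
  have hline : ∀ r, HasDerivAt (fun r : ℝ => θ + r • v) v r := fun r => by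
    simpa using ((hasDerivAt_id r).smul_const v).const_add θ
  have d1 : ∀ r, HasDerivAt g (g' r) r := by
    intro r
    have hZ := Psi_one_pos hν s (θ + r • v)
    have h1 := (Psi_curve (hν.adm (continuous_const (y := (1 : ℝ))) (s - 1)) (hasDerivAt_const r s)
      (hline r) (by linarith)).log hZ.ne'
    have h2 := ((hline r).norm_sq).div_const (2 * s)
    refine (h1.sub h2).congr_deriv ?_
    simp only [hg', mm, mul_one, mul_zero, zero_mul, zero_add]
    rw [real_inner_comm]
    field_simp
  have d2 : HasDerivAt g' (mm ν (fun x => ⟪v, x⟫ * ⟪v, x⟫) s θ -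
      mm ν (fun x => ⟪v, x⟫) s θ * mm ν (fun x => ⟪v, x⟫) s θ - ‖v‖ ^ 2 / s) 0 := by
    have h1 := mm_curve hν (h := fun x => ⟪v, x⟫) (by fun_prop) (hasDerivAt_const 0 s) (hline 0)
    have h2 := (((hasDerivAt_const (0 : ℝ) v).inner ℝ (hline 0))).div_const s
    refine (h1.sub h2).congr_deriv ?_
    simp
  have hconc : ConcaveOn ℝ Set.univ g := by
    refine ⟨convex_univ, fun x _ y _ a b ha hb hab => ?_⟩
    rcases ha.eq_or_lt with rfl | ha
    · obtain rfl : b = 1 := by linarith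
      simp
    rcases hb.eq_or_lt with rfl | hb
    · obtain rfl : a = 1 := by linarith
      simp
    obtain rfl : b = 1 - a := by linarith
    have h := Z_logConcave hν hl hs (θ + x • v) (θ + y • v) ha (by linarith)
    have hexp : ∀ r, Psi ν (fun _ => 1) s (θ + r • v) * Real.exp (-‖θ + r • v‖ ^ 2 / (2 * s)) =
        Real.exp (g r) := by
      intro r
      rw [hg]; simp only
      rw [sub_eq_add_neg, Real.exp_add, Real.exp_log (Psi_one_pos hν _ _), neg_div]
    have e : a • (θ + x • v) + (1 - a) • (θ + y • v) = θ + (a * x + (1 - a) * y) • v := by module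
    rw [e, hexp, hexp, hexp, ← Real.exp_mul, ← Real.exp_mul, ← Real.exp_add, Real.exp_le_exp] at h
    simp only [smul_eq_mul]
    linarith
  have hanti : Antitone g' := by
    have h := hconc.antitoneOn_deriv fun x _ => (d1 x).differentiableAt
    have : deriv g = g' := funext fun r => (d1 r).deriv
    rw [this, antitoneOn_univ] at h
    exact h
  have := hanti.deriv_nonpos (x := 0)
  rw [d2.deriv] at this
  rw [hmm, hnorm]
  linarith

lemma parseval {U : Matrix (Fin n) (Fin n) ℝ} (hU : U * U.transpose = 1) (w : Fin n → ℝ) :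
    ∑ γ, (∑ k, U k γ * w k) ^ 2 = ∑ k, w k ^ 2 := by
  have h : ∀ γ, ∑ k, U k γ * w k = (U.transpose.mulVec w) γ := fun γ => by
    simp [Matrix.mulVec, dotProduct]
  have : ∑ γ, (U.transpose.mulVec w) γ ^ 2 = dotProduct (U.transpose.mulVec w) (U.transpose.mulVec w) := by
    simp [dotProduct, sq]
  simp only [h]
  rw [this, Matrix.dotProduct_mulVec, Matrix.vecMul_mulVec, Matrix.transpose_transpose, hU]
  simp [dotProduct, sq]

end

/-! ### Third moments and `κₙ` -/

section

variable {n : ℕ}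

/-- An orthogonal diagonalization `A = U diag(lam) Uᵀ`. -/
structure Diag (A U : Matrix (Fin n) (Fin n) ℝ) (lam : Fin n → ℝ) : Prop where
  left : U.transpose * U = 1
  right : U * U.transpose = 1
  eq : A = U * Matrix.diagonal lam * U.transpose

lemma Diag.conj {A U : Matrix (Fin n) (Fin n) ℝ} {lam : Fin n → ℝ} (h : Diag A U lam) :
    U.transpose * A * U = Matrix.diagonal lam := by
  rw [h.eq]
  calc _ = (U.transpose * U) * Matrix.diagonal lam * (U.transpose * U) := by
        simp only [Matrix.mul_assoc]
    _ = _ := by rw [h.left]; simp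

lemma cov_diag (ν : Measure (Eu n)) (s : ℝ) (θ : Eu n) :
    ∃ U lam, Diag (cov ν s θ) U lam := by
  obtain ⟨U, lam, h1, h2, h3⟩ := exists_diag (cov_symm ν s θ)
  exact ⟨U, lam, h1, h2, h3⟩

lemma Diag.mm_eq {ν : Measure (Eu n)} {R : ℝ} (hν : Tame ν R) {s : ℝ} {θ : Eu n}
    {U : Matrix (Fin n) (Fin n) ℝ} {lam : Fin n → ℝ} (h : Diag (cov ν s θ) U lam) (α β : Fin n) :
    mm ν (fun x => ctr ν s θ (fun i => U i α) x * ctr ν s θ (fun i => U i β) x) s θ =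
      if α = β then lam α else 0 := by
  rw [mm_ctr_ctr hν, ← conj_entry, h.conj, Matrix.diagonal_apply]

lemma Diag.sum_sq {A U : Matrix (Fin n) (Fin n) ℝ} {lam : Fin n → ℝ} (h : Diag A U lam)
    (α : Fin n) : ∑ i, U i α ^ 2 = 1 := by
  have := congrFun (congrFun h.left α) α
  simpa [Matrix.mul_apply, sq] using this

lemma Diag.pos {ν : Measure (Eu n)} {R : ℝ} (hν : Tame ν R) (hl : IsLogConcaveMeasure ν) {s : ℝ}
    {θ : Eu n} {U : Matrix (Fin n) (Fin n) ℝ} {lam : Fin n → ℝ} (h : Diag (cov ν s θ) U lam)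
    (α : Fin n) : 0 < lam α := by
  have h1 := h.mm_eq hν α α
  rw [if_pos rfl] at h1
  rw [← h1]
  refine ctr_sq_pos hν hl s θ fun h0 => ?_
  have := h.sum_sq α
  simp [fun i => congrFun h0 i] at this

lemma Diag.le {ν : Measure (Eu n)} {R : ℝ} (hν : Tame ν R) (hl : IsLogConcaveMeasure ν) {s : ℝ}
    (hs : 0 < s) {θ : Eu n} {U : Matrix (Fin n) (Fin n) ℝ} {lam : Fin n → ℝ}
    (h : Diag (cov ν s θ) U lam) (α : Fin n) : lam α ≤ 1 / s := by
  have h1 := h.mm_eq hν α α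
  rw [if_pos rfl] at h1
  rw [← h1, ← h.sum_sq α]
  exact ctr_sq_le hν hl hs θ _

/-- The derivative of the covariance matrix in the direction `k`. -/
def Nk (ν : Measure (Eu n)) (s : ℝ) (θ : Eu n) (k : Fin n) : Matrix (Fin n) (Fin n) ℝ :=
  Matrix.of fun i j => (covJet ν i j).F1 k s θ

/-- The derivative of the covariance, expressed in the basis given by the columns of `U`. -/
lemma conj_Nk {ν : Measure (Eu n)} {R : ℝ} (hν : Tame ν R) (s : ℝ) (θ : Eu n)
    (U : Matrix (Fin n) (Fin n) ℝ) (k α β : Fin n) :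
    (U.transpose * Nk ν s θ k * U) α β = mm ν (fun x => ctr ν s θ (fun i => U i α) x *
      (ctr ν s θ (fun i => U i β) x * (x k - mm ν (fun x => x k) s θ))) s θ := by
  have hc := ctr_continuous ν s θ
  rw [conj_entry, mm_ctr_mul hν s θ _ (by have := hc (fun i => U i β); fun_prop)]
  refine Finset.sum_congr rfl fun i _ => ?_
  have e : ∀ x : Eu n, (x i - mm ν (fun x => x i) s θ) *
      (ctr ν s θ (fun i => U i β) x * (x k - mm ν (fun x => x k) s θ)) =
      ctr ν s θ (fun i => U i β) x *
      ((x i - mm ν (fun x => x i) s θ) * (x k - mm ν (fun x => x k) s θ)) := fun x => by ring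
  simp only [e]
  rw [mm_ctr_mul hν s θ _ (by fun_prop), Finset.mul_sum]
  refine Finset.sum_congr rfl fun j _ => ?_
  rw [Nk, Matrix.of_apply, F1_covJet hν]
  have e2 : ∀ x : Eu n, (x j - mm ν (fun x => x j) s θ) *
      ((x i - mm ν (fun x => x i) s θ) * (x k - mm ν (fun x => x k) s θ)) =
      (x i - mm ν (fun x => x i) s θ) *
      ((x j - mm ν (fun x => x j) s θ) * (x k - mm ν (fun x => x k) s θ)) := fun x => by ring
  simp only [e2]; ring

/-- The third moments of the normalized tilted measure are controlled by `κₙ`. -/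
lemma third_moment_le {ν : Measure (Eu n)} {R : ℝ} (hν : Tame ν R)
    (hl : IsLogConcaveMeasure ν) {s : ℝ} (hs : 0 ≤ s) {θ : Eu n}
    {U : Matrix (Fin n) (Fin n) ℝ} {lam : Fin n → ℝ} (h : Diag (cov ν s θ) U lam) (α : Fin n) :
    ∑ β, ∑ γ, (mm ν (fun x => ctr ν s θ (fun i => U i α) x *
      (ctr ν s θ (fun i => U i β) x * ctr ν s θ (fun i => U i γ) x)) s θ /
        (√(lam α) * (√(lam β) * √(lam γ)))) ^ 2 ≤ kappaConst n ^ 2 := by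
  have hn : 0 < n := α.pos
  have hpos := h.pos hν hl
  have hsq : ∀ β, 0 < √(lam β) := fun β => Real.sqrt_pos.2 (hpos β)
  set σ : Equiv.Perm (Fin n) := Equiv.swap ⟨0, hn⟩ α with hσ
  have hσ0 : σ ⟨0, hn⟩ = α := Equiv.swap_apply_left _ _
  set y : Fin n → Eu n → ℝ := fun β => ctr ν s θ (fun i => U i β) with hy
  have hyc : ∀ β, Continuous (y β) := fun β => ctr_continuous _ _ _ _
  set a : Eu n := WithLp.toLp 2 fun i => mm ν (fun x => x i) s θ with ha
  set B : Matrix (Fin n) (Fin n) ℝ := Matrix.of fun β i => U i (σ β) / √(lam (σ β)) with hB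
  set B' : Matrix (Fin n) (Fin n) ℝ := Matrix.of fun i β => U i (σ β) * √(lam (σ β)) with hB'
  have hBB : B * B' = 1 := by
    ext β γ
    have h1 := congrFun (congrFun h.left (σ β)) (σ γ)
    simp only [Matrix.mul_apply, Matrix.transpose_apply] at h1
    simp only [Matrix.mul_apply, hB, hB', Matrix.of_apply]
    have : ∀ i, U i (σ β) / √(lam (σ β)) * (U i (σ γ) * √(lam (σ γ))) =
        (√(lam (σ γ)) / √(lam (σ β))) * (U i (σ β) * U i (σ γ)) := fun i => by ring
    simp only [this, ← Finset.mul_sum, h1, Matrix.one_apply, σ.injective.eq_iff]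
    split_ifs with hc
    · subst hc; rw [div_self (hsq _).ne', mul_one]
    · rw [mul_zero]
  set Φ : Eu n → Eu n := fun x => Matrix.toEuclideanLin B (x - a) with hΦ
  have hΦc : Continuous Φ :=
    (LinearMap.continuous_of_finiteDimensional (Matrix.toEuclideanLin B)).comp (by fun_prop)
  have hΦa : ∀ x β, Φ x β = y (σ β) x / √(lam (σ β)) := by
    intro x β
    simp only [hΦ, hy, ctr, ha, hB, Finset.sum_div, Matrix.toEuclideanLin, Matrix.toLpLin_apply,
      Matrix.mulVec, dotProduct, Matrix.of_apply, PiLp.sub_apply]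
    exact Finset.sum_congr rfl fun i _ => by ring
  have := tl_prob hν s θ
  have hP : IsProbabilityMeasure ((tl ν s θ).map Φ) := Measure.isProbabilityMeasure_map hΦc.aemeasurable
  have hL : IsLogConcaveMeasure ((tl ν s θ).map Φ) := logConcave_map (tl_logConcave hν hl hs θ) hBB a
  have h_integ : ∀ {g : Eu n → ℝ}, Continuous g → ∫ z, g z ∂((tl ν s θ).map Φ) =
      mm ν (fun x => g (Φ x)) s θ := fun hg => by
    rw [integral_map hΦc.aemeasurable hg.aestronglyMeasurable, integral_tl]
  have hiso : IsIsotropicMeasure ((tl ν s θ).map Φ) := by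
    refine ⟨fun β => ?_, fun β γ => ?_⟩
    · rw [h_integ (by fun_prop)]
      have e : ∀ x, Φ x β = (√(lam (σ β)))⁻¹ * (y (σ β) x * 1) := fun x => by rw [hΦa]; ring
      simp only [e]
      rw [mm_const_mul, mm_ctr_mul hν s θ _ continuous_const]
      simp only [mul_one]
      rw [Finset.sum_eq_zero, mul_zero]
      intro i _
      rw [mm_sub hν (by fun_prop) (by fun_prop), mm_const hν, sub_self, mul_zero]
    · rw [h_integ (by fun_prop)]
      have e : ∀ x, Φ x β * Φ x γ = (√(lam (σ β)) * √(lam (σ γ)))⁻¹ * (y (σ β) x * y (σ γ) x) :=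
        fun x => by rw [hΦa, hΦa, mul_inv]; ring
      simp only [e]
      rw [mm_const_mul, h.mm_eq hν]
      simp only [σ.injective.eq_iff]
      split_ifs with hc
      · subst hc
        rw [Real.mul_self_sqrt (hpos _).le, inv_mul_cancel₀ (hpos _).ne']
      · rw [mul_zero]
  have hk := hsNorm_le_kappa hn hP hL hiso
  have hkn : 0 ≤ hsNorm (Matrix.of fun i j => ∫ x, x ⟨0, hn⟩ * (x i * x j) ∂((tl ν s θ).map Φ)) :=
    Real.sqrt_nonneg _
  have hk2 := pow_le_pow_left₀ hkn hk 2
  rw [hsNorm, Real.sq_sqrt (by positivity)] at hk2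
  refine le_trans (le_of_eq ?_) hk2
  rw [← Equiv.sum_comp σ]
  refine Finset.sum_congr rfl fun β _ => ?_
  rw [← Equiv.sum_comp σ]
  refine Finset.sum_congr rfl fun γ _ => ?_
  congr 1
  rw [Matrix.of_apply, h_integ (by fun_prop)]
  have e : ∀ x, Φ x ⟨0, hn⟩ * (Φ x β * Φ x γ) = (√(lam α) * (√(lam (σ β)) * √(lam (σ γ))))⁻¹ *
      (y α x * (y (σ β) x * y (σ γ) x)) := fun x => by
    rw [hΦa, hΦa, hΦa, hσ0, mul_inv, mul_inv]; ring
  simp only [e]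
  rw [mm_const_mul, div_eq_inv_mul]

/-- `third_moment_le` without the normalization by the covariance, whose eigenvalues are at
most `Λ`. -/
lemma T_bound {ν : Measure (Eu n)} {R : ℝ} (hν : Tame ν R)
    (hl : IsLogConcaveMeasure ν) {s : ℝ} (hs : 0 ≤ s) {θ : Eu n}
    {U : Matrix (Fin n) (Fin n) ℝ} {lam : Fin n → ℝ} (h : Diag (cov ν s θ) U lam) {Λ : ℝ}
    (hΛ : ∀ α, lam α ≤ Λ) (α : Fin n) :
    ∑ β, ∑ k, ((U.transpose * Nk ν s θ k * U) α β) ^ 2 ≤ kappaConst n ^ 2 * Λ ^ 3 := by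
  have hpos := h.pos hν hl
  have hsq : ∀ β, 0 < √(lam β) := fun β => Real.sqrt_pos.2 (hpos β)
  have hΛ0 : 0 < Λ := (hpos α).trans_le (hΛ α)
  have hc := fun β => ctr_continuous ν s θ fun i => U i β
  have hP : ∀ β, ∑ k, ((U.transpose * Nk ν s θ k * U) α β) ^ 2 =
      ∑ γ, (mm ν (fun x => ctr ν s θ (fun i => U i α) x *
        (ctr ν s θ (fun i => U i β) x * ctr ν s θ (fun i => U i γ) x)) s θ) ^ 2 := by
    intro β
    rw [← parseval h.right]
    refine Finset.sum_congr rfl fun γ _ => ?_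
    congr 1
    have e : ∀ x, ctr ν s θ (fun i => U i α) x *
        (ctr ν s θ (fun i => U i β) x * ctr ν s θ (fun i => U i γ) x) =
        ctr ν s θ (fun i => U i γ) x * (ctr ν s θ (fun i => U i α) x *
        ctr ν s θ (fun i => U i β) x) := fun x => by ring
    simp only [e]
    rw [mm_ctr_mul hν s θ _ (g := fun x => ctr ν s θ (fun i => U i α) x *
        ctr ν s θ (fun i => U i β) x) ((hc α).mul (hc β))]
    refine Finset.sum_congr rfl fun k _ => ?_
    rw [conj_Nk hν]
    congr 2; ext x; ring
  simp only [hP]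
  calc _ ≤ ∑ β, ∑ γ, Λ ^ 3 * (mm ν (fun x => ctr ν s θ (fun i => U i α) x *
      (ctr ν s θ (fun i => U i β) x * ctr ν s θ (fun i => U i γ) x)) s θ /
        (√(lam α) * (√(lam β) * √(lam γ)))) ^ 2 := by
        refine Finset.sum_le_sum fun β _ => Finset.sum_le_sum fun γ _ => ?_
        rw [div_pow, mul_pow, mul_pow, Real.sq_sqrt (hpos _).le, Real.sq_sqrt (hpos _).le,
          Real.sq_sqrt (hpos _).le, ← mul_div_assoc,
          le_div_iff₀ (mul_pos (hpos _) (mul_pos (hpos _) (hpos _))), mul_comm (Λ ^ 3)]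
        refine mul_le_mul_of_nonneg_left ?_ (sq_nonneg _)
        calc lam α * (lam β * lam γ) ≤ Λ * (Λ * Λ) :=
              mul_le_mul (hΛ _) (mul_le_mul (hΛ _) (hΛ _) (hpos _).le hΛ0.le)
                (mul_pos (hpos _) (hpos _)).le hΛ0.le
          _ = Λ ^ 3 := by ring
    _ ≤ _ := by
        simp only [← Finset.mul_sum]
        rw [mul_comm]
        exact mul_le_mul_of_nonneg_right (third_moment_le hν hl hs h α) (by positivity)

end

/-! ### Martingales and the barycenter -/

section

variable {n : ℕ}

open Filter Topology in
/-- A function that decreases on `(0, T]` stays below its limit at `0`. -/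
lemma le_limit {φ φ' : ℝ → ℝ} {T L : ℝ} (hT : 0 < T)
    (hd : ∀ s, 0 < s → s ≤ T → HasDerivAt φ (φ' s) s) (hn : ∀ s, 0 < s → s < T → φ' s ≤ 0)
    (hl : Tendsto φ (𝓝[>] 0) (𝓝 L)) : φ T ≤ L := by
  have ha : AntitoneOn φ (Set.Ioc 0 T) := by
    refine antitoneOn_of_deriv_nonpos (convex_Ioc 0 T)
      (fun s hs => (hd s hs.1 hs.2).continuousAt.continuousWithinAt) ?_ ?_
    · rw [interior_Ioc]
      exact fun s hs => (hd s hs.1 hs.2.le).differentiableAt.differentiableWithinAt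
    · rw [interior_Ioc]
      intro s hs
      rw [(hd s hs.1 hs.2.le).deriv]
      exact hn s hs.1 hs.2
  refine ge_of_tendsto hl ?_
  filter_upwards [Ioo_mem_nhdsGT hT] with s hs
  exact ha ⟨hs.1, hs.2.le⟩ ⟨hT, le_rfl⟩ hs.2.le

/-- Expectations of conditional means do not depend on time. -/
lemma EE_mm {ν : Measure (Eu n)} {R : ℝ} (hν : Tame ν R) {h : Eu n → ℝ} (hh : Continuous h)
    {s : ℝ} (hs : 0 < s) : EE ν s (mm ν h s) = ∫ x, h x ∂ν := by
  have hd : ∀ r, 0 < r → r ≤ s → HasDerivAt (fun s => EE ν s (mm ν h s)) 0 r := by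
    intro r hr _
    have := dynkin hν isOpen_univ (mmJet_isJet hν hh Set.univ) (Set.mem_univ r) hr
    refine this.congr_deriv ?_
    simp [EE, gen_mmJet]
  have hl := EE_tendsto hν one_pos (Bd.mm hν hh _) (mm_continuous hν hh).continuousAt
  have h0 : mm ν h 0 0 = ∫ x, h x ∂ν := by
    have := hν.prob
    simp [mm, Psi, ew]
  rw [h0] at hl
  refine le_antisymm (le_limit hs hd (fun _ _ _ => le_rfl) hl) ?_
  have := le_limit (φ := fun s => -EE ν s (mm ν h s)) hs (fun r h1 h2 => (hd r h1 h2).neg)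
    (fun _ _ _ => by simp) hl.neg
  linarith

lemma EE_const {ν : Measure (Eu n)} {R : ℝ} (hν : Tame ν R) (c : ℝ)
    {s : ℝ} (hs : 0 < s) : EE ν s (fun _ => c) = c := by
  have := hν.prob
  have h := EE_mm hν (continuous_const (y := c)) hs
  rw [funext (mm_const hν c s)] at h
  rw [h]; simp

/-- The barycenter of the tilted measure. -/
def bary (ν : Measure (Eu n)) (s : ℝ) (θ : Eu n) : Eu n :=
  WithLp.toLp 2 fun i => mm ν (fun x => x i) s θ

lemma bary_apply (ν : Measure (Eu n)) (s : ℝ) (θ : Eu n) (i : Fin n) :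
    bary ν s θ i = mm ν (fun x => x i) s θ := rfl

lemma tl_supp {ν : Measure (Eu n)} {R : ℝ} (hν : Tame ν R) (s : ℝ) (θ : Eu n) :
    ∀ᵐ x ∂(tl ν s θ), ‖x‖ ≤ R :=
  (withDensity_absolutelyContinuous ν _).ae_le hν.supp

lemma tl_integrable {ν : Measure (Eu n)} {R : ℝ} (hν : Tame ν R) {h : Eu n → ℝ}
    (hh : Continuous h) (s : ℝ) (θ : Eu n) : Integrable h (tl ν s θ) := by
  have := tl_prob hν s θ
  obtain ⟨B, -, hB⟩ := exists_ball_bound hh R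
  refine Integrable.of_bound hh.aestronglyMeasurable B ?_
  filter_upwards [tl_supp hν s θ] with x hx
  exact hB x hx

lemma bary_eq {ν : Measure (Eu n)} {R : ℝ} (hν : Tame ν R) (s : ℝ) (θ : Eu n) :
    bary ν s θ = ∫ x, x ∂(tl ν s θ) := by
  have := tl_prob hν s θ
  have hi : Integrable (fun x : Eu n => x) (tl ν s θ) :=
    Integrable.of_bound continuous_id.aestronglyMeasurable R (tl_supp hν s θ)
  ext i
  have : ∫ x : Eu n, x i ∂(tl ν s θ) = (∫ x, x ∂(tl ν s θ)) i :=
    ContinuousLinearMap.integral_comp_comm (EuclideanSpace.proj (𝕜 := ℝ) i) hi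
  rw [← this, bary_apply, integral_tl]

/-- Jensen's inequality for the tilted measure. -/
lemma gauge_bary_le {ν : Measure (Eu n)} {R : ℝ} (hν : Tame ν R) {f : Eu n → ℝ} (hf : IsGauge f)
    (s : ℝ) (θ : Eu n) : f (bary ν s θ) ≤ mm ν f s θ := by
  have := tl_prob hν s θ
  rw [bary_eq hν, ← integral_tl]
  exact hf.2.1.map_integral_le hf.continuous.continuousOn isClosed_univ (by simp)
    (Integrable.of_bound continuous_id.aestronglyMeasurable R (tl_supp hν s θ))
    (tl_integrable hν hf.continuous s θ)

lemma bary_norm_le {ν : Measure (Eu n)} {R : ℝ} (hν : Tame ν R) (s : ℝ) (θ : Eu n) :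
    ‖bary ν s θ‖ ≤ R := by
  have := tl_prob hν s θ
  rw [bary_eq hν]
  simpa using norm_integral_le_of_norm_le_const (tl_supp hν s θ)

lemma cov_diag_le {ν : Measure (Eu n)} {R : ℝ} (hν : Tame ν R) (hl : IsLogConcaveMeasure ν)
    {s : ℝ} (hs : 0 < s) (θ : Eu n) (i : Fin n) : cov ν s θ i i ≤ 1 / s := by
  have h := ctr_sq_le hν hl hs θ (Pi.single i 1)
  rw [mm_ctr_ctr hν] at h
  simpa [Pi.single_apply, ite_pow] using h

/-- The tilted measure concentrates about its barycenter, its covariance being at most `1 / s`. -/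
lemma mm_le_gauge_bary {ν : Measure (Eu n)} {R : ℝ} (hν : Tame ν R) (hl : IsLogConcaveMeasure ν)
    {f : Eu n → ℝ} (hf : IsGauge f) : ∃ C, ∀ s, 0 < s → ∀ θ,
      mm ν f s θ ≤ f (bary ν s θ) + C / √s := by
  obtain ⟨C, hC0, hC⟩ := hf.exists_le
  refine ⟨C * ((1 + n) / 2), fun s hs θ => ?_⟩
  set a := bary ν s θ with ha
  have hsq := Real.sqrt_pos.2 hs
  have hfc := hf.continuous
  have h1 : mm ν f s θ ≤ mm ν (fun x => (f a + C / (2 * √s)) + C * √s / 2 *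
      ∑ i, (x i - a i) * (x i - a i)) s θ := by
    refine mm_mono hν hfc (by fun_prop) (fun x _ => ?_) s θ
    have h2 : f x ≤ f a + f (x - a) := by
      have := hf.add_le a (x - a)
      rwa [add_sub_cancel] at this
    have h3 := hC (x - a)
    have h4 : ∑ i, (x i - a i) * (x i - a i) = ‖x - a‖ ^ 2 := by
      rw [EuclideanSpace.norm_sq_eq]; simp [sq]
    have h5 : ‖x - a‖ ≤ 1 / (2 * √s) + √s / 2 * ‖x - a‖ ^ 2 := by
      have : 1 / (2 * √s) + √s / 2 * ‖x - a‖ ^ 2 - ‖x - a‖ =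
        (1 - √s * ‖x - a‖) ^ 2 / (2 * √s) := by field_simp; ring
      have : 0 ≤ (1 - √s * ‖x - a‖) ^ 2 / (2 * √s) := by positivity
      linarith
    rw [h4]
    calc f x ≤ f a + C * ‖x - a‖ := by linarith
      _ ≤ f a + C * (1 / (2 * √s) + √s / 2 * ‖x - a‖ ^ 2) := by gcongr
      _ = _ := by ring
  refine h1.trans ?_
  rw [mm_add hν (by fun_prop) (by fun_prop), mm_const hν, mm_const_mul, mm_sum hν _ (by fun_prop)]
  have h6 : ∑ i, mm ν (fun x => (x i - a i) * (x i - a i)) s θ ≤ n / s := by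
    calc _ ≤ ∑ _i : Fin n, 1 / s := Finset.sum_le_sum fun i _ => by
          have := mm_centered hν s θ i i
          simp only [ha, bary_apply]
          rw [this]; exact cov_diag_le hν hl hs θ i
      _ = n / s := by simp [div_eq_mul_inv]
  have h7 : C * √s / 2 * (n / s) = C * (n / 2) / √s := by
    have : s = √s * √s := (Real.mul_self_sqrt hs.le).symm
    rw [div_mul_div_comm, div_eq_div_iff (by positivity) (by positivity)]
    linear_combination (-(C * n)) * this
  calc _ ≤ f a + C / (2 * √s) + C * √s / 2 * (n / s) := by gcongr
    _ = _ := by rw [h7]; field_simp; ring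

end

/-! ### Jets of powers of `A - 1` -/

section

variable {n : ℕ}

lemma Bd.gen {ν : Measure (Eu n)} {R : ℝ} (hν : Tame ν R) {I : Set ℝ} {J : Jet n}
    (hJ : IsJet I J) : Bd I (gen ν J) :=
  (hJ.bs.add (Bd.sum _ fun k => (Bd.mm hν (by fun_prop) I).mul (hJ.b1 k))).add
    ((Bd.const I _).mul (Bd.sum _ fun k => hJ.b2 k))

/-- Finite sum of jets. -/
def Jet.sum (J : Fin n → Jet n) : Jet n where
  F s θ := ∑ i, (J i).F s θ
  Fs s θ := ∑ i, (J i).Fs s θ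
  F1 k s θ := ∑ i, (J i).F1 k s θ
  F2 k s θ := ∑ i, (J i).F2 k s θ

lemma IsJet.sum {I : Set ℝ} {J : Fin n → Jet n} (hJ : ∀ i, IsJet I (J i)) :
    IsJet I (Jet.sum J) where
  ds s hs θ := HasDerivAt.fun_sum (u := Finset.univ) fun i _ => (hJ i).ds s hs θ
  d1 s hs θ k := HasDerivAt.fun_sum (u := Finset.univ) fun i _ => (hJ i).d1 s hs θ k
  d2 s hs θ k := HasDerivAt.fun_sum (u := Finset.univ) fun i _ => (hJ i).d2 s hs θ k
  b := Bd.sum Finset.univ fun i => (hJ i).b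
  bs := Bd.sum Finset.univ fun i => (hJ i).bs
  b1 k := Bd.sum Finset.univ fun i => (hJ i).b1 k
  b2 k := Bd.sum Finset.univ fun i => (hJ i).b2 k

lemma gen_sum (ν : Measure (Eu n)) (J : Fin n → Jet n) (s : ℝ) (θ : Eu n) :
    gen ν (Jet.sum J) s θ = ∑ i, gen ν (J i) s θ := by
  simp only [gen, Jet.sum, Finset.sum_add_distrib, Finset.mul_sum]
  rw [Finset.sum_comm (γ := Fin n), Finset.sum_comm (γ := Fin n) (f := fun i k => 1 / 2 * _)]

/-- Reciprocal of a jet. -/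
def Jet.inv (J : Jet n) : Jet n where
  F s θ := (J.F s θ)⁻¹
  Fs s θ := -1 * J.Fs s θ * ((J.F s θ)⁻¹ * (J.F s θ)⁻¹)
  F1 k s θ := -1 * J.F1 k s θ * ((J.F s θ)⁻¹ * (J.F s θ)⁻¹)
  F2 k s θ := -1 * J.F2 k s θ * ((J.F s θ)⁻¹ * (J.F s θ)⁻¹) +
    2 * (J.F1 k s θ * J.F1 k s θ) * ((J.F s θ)⁻¹ * ((J.F s θ)⁻¹ * (J.F s θ)⁻¹))

lemma lineDeriv_inv {f : Eu n → ℝ} {f' : ℝ} {x v : Eu n} (hf : HasLineDerivAt ℝ f f' x v)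
    (h0 : f x ≠ 0) :
    HasLineDerivAt ℝ (fun y => (f y)⁻¹) (-1 * f' * ((f x)⁻¹ * (f x)⁻¹)) x v := by
  have h1 : f (x + (0 : ℝ) • v) ≠ 0 := by simpa using h0
  have := HasDerivAt.fun_inv hf h1
  refine HasDerivAt.congr_deriv this ?_
  rw [zero_smul, add_zero]; field_simp

lemma IsJet.inv {I : Set ℝ} {J : Jet n} (hJ : IsJet I J) (h1 : ∀ s ∈ I, ∀ θ, 1 ≤ J.F s θ) :
    IsJet I J.inv := by
  have h0 : ∀ s ∈ I, ∀ θ, J.F s θ ≠ 0 := fun s hs θ => by have := h1 s hs θ; positivity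
  have b : Bd I (fun s θ => (J.F s θ)⁻¹) := by
    refine ⟨fun s hs => (hJ.b.1 s hs).inv₀ (h0 s hs), 1, fun s hs θ => ?_⟩
    have := h1 s hs θ
    rw [abs_of_nonneg (by positivity)]
    exact inv_le_one_of_one_le₀ this
  refine ⟨fun s hs θ => ?_, fun s hs θ k => lineDeriv_inv (hJ.d1 s hs θ k) (h0 s hs θ),
    fun s hs θ k => ?_, b, ((Bd.const I _).mul hJ.bs).mul (b.mul b),
    fun k => ((Bd.const I _).mul (hJ.b1 k)).mul (b.mul b), fun k =>
    (((Bd.const I _).mul (hJ.b2 k)).mul (b.mul b)).add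
      (((Bd.const I _).mul ((hJ.b1 k).mul (hJ.b1 k))).mul (b.mul (b.mul b)))⟩
  · refine ((hJ.ds s hs θ).fun_inv (h0 s hs θ)).congr_deriv ?_
    have := h0 s hs θ
    simp only [Jet.inv]; field_simp
  · have hi := lineDeriv_inv (hJ.d1 s hs θ k) (h0 s hs θ)
    have hc : HasLineDerivAt ℝ (fun _ : Eu n => (-1 : ℝ)) 0 θ (EuclideanSpace.single k 1) :=
      hasDerivAt_const 0 _
    have h2 := lineDeriv_mul (lineDeriv_mul hc (hJ.d2 s hs θ k)) (lineDeriv_mul hi hi)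
    refine HasDerivAt.congr_deriv h2 ?_
    simp only [Jet.inv]; ring

/-- The generator of `1 / F`; the second-order term has a sign. -/
lemma gen_inv_ge (ν : Measure (Eu n)) (J : Jet n) (s : ℝ) (θ : Eu n) (h : 0 < J.F s θ) :
    -(gen ν J s θ) * ((J.F s θ)⁻¹ * (J.F s θ)⁻¹) ≤ gen ν J.inv s θ := by
  have : gen ν J.inv s θ = -(gen ν J s θ) * ((J.F s θ)⁻¹ * (J.F s θ)⁻¹) +
      (∑ k, J.F1 k s θ * J.F1 k s θ) * ((J.F s θ)⁻¹ * ((J.F s θ)⁻¹ * (J.F s θ)⁻¹)) := by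
    simp only [gen, Jet.inv, Finset.sum_add_distrib, ← Finset.sum_mul, ← Finset.mul_sum,
      ← mul_assoc, mul_add, add_mul, neg_add]
    have e : ∑ k, mm ν (fun x => x k) s θ * -1 * J.F1 k s θ =
      -∑ k, mm ν (fun x => x k) s θ * J.F1 k s θ := by
      rw [← Finset.sum_neg_distrib]; exact Finset.sum_congr rfl fun k _ => by ring
    have e2 : ∑ k, 2 * J.F1 k s θ * J.F1 k s θ = 2 * ∑ k, J.F1 k s θ * J.F1 k s θ := by
      rw [Finset.mul_sum]; exact Finset.sum_congr rfl fun k _ => by ring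
    rw [e, e2]; ring
  rw [this]
  have : 0 ≤ ∑ k, J.F1 k s θ * J.F1 k s θ := Finset.sum_nonneg fun k _ => mul_self_nonneg _
  have : 0 ≤ (∑ k, J.F1 k s θ * J.F1 k s θ) *
    ((J.F s θ)⁻¹ * ((J.F s θ)⁻¹ * (J.F s θ)⁻¹)) := by positivity
  linarith

/-- The jet of the `(i, j)` entry of `(A - 1) ^ m`, `A` the covariance of the tilted measure. -/
def powJet (ν : Measure (Eu n)) : ℕ → Fin n → Fin n → Jet n
  | 0, i, j => Jet.const n ((1 : Matrix (Fin n) (Fin n) ℝ) i j)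
  | m + 1, i, j => Jet.sum fun l => (powJet ν m i l).mul
      ((covJet ν l j).sub (Jet.const n ((1 : Matrix (Fin n) (Fin n) ℝ) l j)))

lemma powJet_isJet {ν : Measure (Eu n)} {R : ℝ} (hν : Tame ν R) (I : Set ℝ) (m : ℕ) :
    ∀ i j, IsJet I (powJet ν m i j) := by
  induction m with
  | zero => exact fun i j => IsJet.const I _
  | succ m ih => exact fun i j => IsJet.sum fun l =>
      (ih i l).mul ((covJet_isJet hν l j I).sub (IsJet.const I _))

lemma powJet_F (ν : Measure (Eu n)) (s : ℝ) (θ : Eu n) (m : ℕ) :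
    Matrix.of (fun i j => (powJet ν m i j).F s θ) = (cov ν s θ - 1) ^ m := by
  induction m with
  | zero => ext i j; simp [powJet, Jet.const]
  | succ m ih =>
    rw [pow_succ, ← ih]
    ext i j
    simp [powJet, Jet.sum, Jet.mul, Jet.sub, Jet.const, Matrix.mul_apply, cov]

/-- First derivatives of the entries of `(A - 1) ^ m`. -/
def powD (ν : Measure (Eu n)) (s : ℝ) (θ : Eu n) (m : ℕ) (k : Fin n) :
    Matrix (Fin n) (Fin n) ℝ := Matrix.of fun i j => (powJet ν m i j).F1 k s θ

/-- Generator applied to the entries of `(A - 1) ^ m`. -/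
def powG (ν : Measure (Eu n)) (s : ℝ) (θ : Eu n) (m : ℕ) :
    Matrix (Fin n) (Fin n) ℝ := Matrix.of fun i j => gen ν (powJet ν m i j) s θ

lemma powD_zero (ν : Measure (Eu n)) (s : ℝ) (θ : Eu n) (k : Fin n) : powD ν s θ 0 k = 0 := by
  ext i j; simp [powD, powJet, Jet.const]

lemma powG_zero (ν : Measure (Eu n)) (s : ℝ) (θ : Eu n) : powG ν s θ 0 = 0 := by
  ext i j; simp [powG, powJet, gen_const]

lemma powD_succ (ν : Measure (Eu n)) (s : ℝ) (θ : Eu n) (m : ℕ) (k : Fin n) :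
    powD ν s θ (m + 1) k = powD ν s θ m k * (cov ν s θ - 1) +
      (cov ν s θ - 1) ^ m * Nk ν s θ k := by
  rw [← powJet_F]
  ext i j
  simp [powD, powJet, Jet.sum, Jet.mul, Jet.sub, Jet.const, Matrix.mul_apply, cov, Nk,
    Finset.sum_add_distrib]

lemma powG_succ (ν : Measure (Eu n)) (s : ℝ) (θ : Eu n) (m : ℕ) :
    powG ν s θ (m + 1) = powG ν s θ m * (cov ν s θ - 1) -
      (cov ν s θ - 1) ^ m * (cov ν s θ * cov ν s θ) + ∑ k, powD ν s θ m k * Nk ν s θ k := by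
  rw [← powJet_F]
  ext i j
  have e : ∀ l, gen ν ((covJet ν l j).sub (Jet.const n ((1 : Matrix (Fin n) (Fin n) ℝ) l j))) s θ =
      -(cov ν s θ * cov ν s θ) l j := fun l => by rw [gen_sub, gen_const, gen_covJet, sub_zero]
  simp only [powG, powJet, Matrix.of_apply, gen_sum, gen_mul, e, Finset.sum_add_distrib,
    Matrix.add_apply, Matrix.sub_apply, Matrix.mul_apply (M := Matrix.of _), Matrix.sum_apply,
    Matrix.mul_apply (M := powD ν s θ m _)]
  rw [Finset.sum_comm (γ := Fin n) (f := fun l k => (powJet ν m i l).F1 k s θ * _)]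
  simp only [powD, Nk, Jet.sub, Jet.const, Matrix.of_apply, sub_zero, mul_neg,
    Finset.sum_neg_distrib]
  have : ∀ l, (covJet ν l j).F s θ - (1 : Matrix (Fin n) (Fin n) ℝ) l j =
    cov ν s θ l j - (1 : Matrix (Fin n) (Fin n) ℝ) l j := fun l => rfl
  simp only [this, mul_comm (gen ν _ s θ)]
  ring

end

/-! ### The generator on traces of powers -/

section

variable {n : ℕ}

/-- The divided difference `∑ x ^ i * y ^ j` over `i + j = m - 1`. -/
def pc : ℕ → ℝ → ℝ → ℝ
  | 0, _, _ => 0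
  | m + 1, x, y => pc m x y * y + x ^ m

/-- The second divided difference `∑ x ^ i * y ^ j * x ^ l` over `i + j + l = m - 2`. -/
def pd : ℕ → ℝ → ℝ → ℝ
  | 0, _, _ => 0
  | m + 1, x, y => pd m x y * x + pc m x y

lemma pc_le {x y z : ℝ} (hx : |x| ≤ z) (hy : |y| ≤ z) (m : ℕ) :
    |pc (m + 1) x y| ≤ (m + 1) * z ^ m := by
  have hz : 0 ≤ z := (abs_nonneg x).trans hx
  induction m with
  | zero => simp [pc]
  | succ m ih =>
    rw [pc]
    calc _ ≤ |pc (m + 1) x y| * |y| + |x| ^ (m + 1) := by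
          rw [← abs_mul, ← abs_pow]; exact abs_add_le _ _
      _ ≤ (m + 1) * z ^ m * z + z ^ (m + 1) := by gcongr
      _ = _ := by push_cast; ring

lemma pd_le {x y z : ℝ} (hx : |x| ≤ z) (hy : |y| ≤ z) (m : ℕ) :
    |pd (m + 2) x y| ≤ (m + 2) ^ 2 * z ^ m := by
  have hz : 0 ≤ z := (abs_nonneg x).trans hx
  induction m with
  | zero => simp [pd, pc]
  | succ m ih =>
    rw [pd]
    have := pc_le hx hy (m + 1)
    calc _ ≤ |pd (m + 2) x y| * |x| + |pc (m + 2) x y| := by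
          rw [← abs_mul]; exact abs_add_le _ _
      _ ≤ (m + 2) ^ 2 * z ^ m * z + ((m + 1 : ℕ) + 1) * z ^ (m + 1) := by gcongr
      _ = ((m + 2) ^ 2 + (m + 2)) * z ^ (m + 1) := by push_cast; ring
      _ ≤ _ := by gcongr; push_cast; nlinarith

/-- Conjugation by `U`. -/
def cj (U X : Matrix (Fin n) (Fin n) ℝ) : Matrix (Fin n) (Fin n) ℝ := U.transpose * X * U

lemma cj_mul {U : Matrix (Fin n) (Fin n) ℝ} (h : U * U.transpose = 1)
    (X Y : Matrix (Fin n) (Fin n) ℝ) : cj U (X * Y) = cj U X * cj U Y := by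
  calc _ = U.transpose * X * 1 * Y * U := by simp [cj, Matrix.mul_assoc]
    _ = _ := by rw [← h]; simp [cj, Matrix.mul_assoc]

lemma cj_add (U X Y : Matrix (Fin n) (Fin n) ℝ) : cj U (X + Y) = cj U X + cj U Y := by
  simp [cj, Matrix.mul_add, Matrix.add_mul]

lemma cj_sub (U X Y : Matrix (Fin n) (Fin n) ℝ) : cj U (X - Y) = cj U X - cj U Y := by
  simp [cj, Matrix.mul_sub, Matrix.sub_mul]

lemma cj_sum {ι : Type*} (S : Finset ι) (U : Matrix (Fin n) (Fin n) ℝ)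
    (X : ι → Matrix (Fin n) (Fin n) ℝ) : cj U (∑ k ∈ S, X k) = ∑ k ∈ S, cj U (X k) := by
  simp [cj, Matrix.mul_sum, Matrix.sum_mul]

lemma trace_cj {U : Matrix (Fin n) (Fin n) ℝ} (h : U * U.transpose = 1)
    (X : Matrix (Fin n) (Fin n) ℝ) : (cj U X).trace = X.trace := by
  rw [cj, Matrix.trace_mul_comm, ← Matrix.mul_assoc, h, Matrix.one_mul]

lemma Diag.cj_sub_one {A U : Matrix (Fin n) (Fin n) ℝ} {lam : Fin n → ℝ} (h : Diag A U lam) :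
    cj U (A - 1) = Matrix.diagonal fun α => lam α - 1 := by
  rw [cj_sub, cj, h.conj, cj, Matrix.mul_one, h.left]
  ext i j
  simp only [Matrix.sub_apply, Matrix.diagonal_apply, Matrix.one_apply]
  split_ifs <;> simp

lemma Diag.cj_pow {A U : Matrix (Fin n) (Fin n) ℝ} {lam : Fin n → ℝ} (h : Diag A U lam) (m : ℕ) :
    cj U ((A - 1) ^ m) = Matrix.diagonal fun α => (lam α - 1) ^ m := by
  induction m with
  | zero => simp [cj, h.left]
  | succ m ih =>
    rw [pow_succ, cj_mul h.right, ih, h.cj_sub_one, Matrix.diagonal_mul_diagonal]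
    simp only [pow_succ]

/-- In the eigenbasis of `A`, differentiating a power of `A - 1` multiplies the derivative of `A`
by divided differences. -/
lemma cj_powD {ν : Measure (Eu n)} {s : ℝ} {θ : Eu n} {U : Matrix (Fin n) (Fin n) ℝ}
    {lam : Fin n → ℝ} (h : Diag (cov ν s θ) U lam) (m : ℕ) (k α β : Fin n) :
    cj U (powD ν s θ m k) α β = pc m (lam α - 1) (lam β - 1) * cj U (Nk ν s θ k) α β := by
  induction m with
  | zero => simp [powD_zero, cj, pc]
  | succ m ih =>
    rw [powD_succ, cj_add, cj_mul h.right, cj_mul h.right, h.cj_sub_one, h.cj_pow,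
      Matrix.add_apply, Matrix.mul_diagonal, Matrix.diagonal_mul, ih, pc]
    ring

/-- The generator on the diagonal of a power of `A - 1`, in the eigenbasis of `A`: the first term
comes from the drift `-A²`, the second from the quadratic variation of `A`. -/
lemma cj_powG {ν : Measure (Eu n)} {R : ℝ} (hν : Tame ν R) {s : ℝ} {θ : Eu n}
    {U : Matrix (Fin n) (Fin n) ℝ} {lam : Fin n → ℝ} (h : Diag (cov ν s θ) U lam) (m : ℕ)
    (α : Fin n) : cj U (powG ν s θ m) α α =
      -(pc m (lam α - 1) (lam α - 1) * lam α ^ 2) +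
        ∑ β, pd m (lam α - 1) (lam β - 1) * ∑ k, cj U (Nk ν s θ k) α β ^ 2 := by
  induction m with
  | zero => simp [powG_zero, cj, pc, pd]
  | succ m ih =>
    have hs : ∀ k α β, cj U (Nk ν s θ k) β α = cj U (Nk ν s θ k) α β := by
      intro k α β
      rw [cj, conj_Nk hν, conj_Nk hν]
      congr 1; funext x; ring
    have hA : cj U (cov ν s θ) = Matrix.diagonal lam := h.conj
    rw [powG_succ, cj_add, cj_sub, cj_mul h.right, cj_mul h.right, cj_mul h.right, cj_sum, hA,
      h.cj_sub_one, h.cj_pow, Matrix.diagonal_mul_diagonal, Matrix.diagonal_mul_diagonal]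
    simp only [cj_mul h.right, Matrix.add_apply, Matrix.sub_apply, Matrix.mul_diagonal, ih,
      Matrix.diagonal_apply_eq, Matrix.sum_apply, Matrix.mul_apply (M := cj U (powD ν s θ m _)),
      cj_powD h, hs, pc, pd]
    rw [Finset.sum_comm, add_mul, Finset.sum_mul]
    have : ∀ β, (pd m (lam α - 1) (lam β - 1) * (lam α - 1) + pc m (lam α - 1) (lam β - 1)) *
        ∑ k, cj U (Nk ν s θ k) α β ^ 2 =
        pd m (lam α - 1) (lam β - 1) * (∑ k, cj U (Nk ν s θ k) α β ^ 2) * (lam α - 1) +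
        ∑ k, pc m (lam α - 1) (lam β - 1) * cj U (Nk ν s θ k) α β * cj U (Nk ν s θ k) α β := by
      intro β
      rw [add_mul, Finset.mul_sum (a := pc m _ _)]
      congr 1
      · ring
      · exact Finset.sum_congr rfl fun k _ => by ring
    simp only [this, Finset.sum_add_distrib]
    ring

/-- The jet of `tr (A - 1) ^ m`. -/
def trJet (ν : Measure (Eu n)) (m : ℕ) : Jet n := Jet.sum fun i => powJet ν m i i

lemma trJet_F {ν : Measure (Eu n)} {s : ℝ} {θ : Eu n} {U : Matrix (Fin n) (Fin n) ℝ}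
    {lam : Fin n → ℝ} (h : Diag (cov ν s θ) U lam) (m : ℕ) :
    (trJet ν m).F s θ = ∑ α, (lam α - 1) ^ m := by
  have : (trJet ν m).F s θ = ((cov ν s θ - 1) ^ m).trace := by
    rw [← powJet_F]; rfl
  rw [this, ← trace_cj h.right, h.cj_pow, Matrix.trace_diagonal]

/-- The drift of `tr (A - 1) ^ (m + 2)` is bounded in terms of `κₙ` and lower moments of the
eigenvalues. -/
lemma gen_trJet_le {ν : Measure (Eu n)} {R : ℝ} (hν : Tame ν R) (hl : IsLogConcaveMeasure ν)
    {s : ℝ} (hs : 0 ≤ s) {θ : Eu n} {U : Matrix (Fin n) (Fin n) ℝ} {lam : Fin n → ℝ}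
    (h : Diag (cov ν s θ) U lam) {Λ : ℝ} (hΛ : ∀ α, lam α ≤ Λ) (m : ℕ) :
    gen ν (trJet ν (m + 2)) s θ ≤ (m + 2) * Λ ^ 2 * ∑ α, |lam α - 1| ^ (m + 1) +
      2 * (m + 2) ^ 2 * (kappaConst n ^ 2 * Λ ^ 3) * ∑ α, |lam α - 1| ^ m := by
  set w : Fin n → Fin n → ℝ := fun α β => ∑ k, cj U (Nk ν s θ k) α β ^ 2 with hw
  have hw0 : ∀ α β, 0 ≤ w α β := fun α β => Finset.sum_nonneg fun k _ => sq_nonneg _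
  have hwT : ∀ α, ∑ β, w α β ≤ kappaConst n ^ 2 * Λ ^ 3 := fun α => T_bound hν hl hs h hΛ α
  have hsym : ∀ α β, w β α = w α β := by
    intro α β
    refine Finset.sum_congr rfl fun k _ => ?_
    rw [cj, conj_Nk hν, conj_Nk hν]
    congr 2; funext x; ring
  have e : gen ν (trJet ν (m + 2)) s θ = ∑ α, cj U (powG ν s θ (m + 2)) α α := by
    have : gen ν (trJet ν (m + 2)) s θ = (powG ν s θ (m + 2)).trace := by
      rw [trJet, gen_sum]; rfl
    rw [this, ← trace_cj h.right]; rfl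
  have hpos := h.pos hν hl
  rw [e]
  calc _ ≤ ∑ α, ((m + 2) * Λ ^ 2 * |lam α - 1| ^ (m + 1) +
        ((m + 2) ^ 2 * (|lam α - 1| ^ m * ∑ β, w α β) +
          ∑ β, (m + 2) ^ 2 * (|lam β - 1| ^ m * w α β))) := by
        refine Finset.sum_le_sum fun α _ => ?_
        rw [cj_powG hν h]
        refine add_le_add ?_ ?_
        · have h1 := pc_le (le_refl |lam α - 1|) (le_refl |lam α - 1|) (m + 1)
          have h2 := hΛ α
          have h3 := (hpos α).le
          calc _ ≤ |pc (m + 1 + 1) (lam α - 1) (lam α - 1)| * lam α ^ 2 := by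
                rw [← neg_mul]; gcongr; exact neg_le_abs _
            _ ≤ ((m + 1 : ℕ) + 1) * |lam α - 1| ^ (m + 1) * Λ ^ 2 := by gcongr
            _ = _ := by push_cast; ring
        · rw [Finset.mul_sum, Finset.mul_sum, ← Finset.sum_add_distrib]
          refine Finset.sum_le_sum fun β _ => ?_
          have h1 := pd_le (le_max_left |lam α - 1| |lam β - 1|)
            (le_max_right |lam α - 1| |lam β - 1|) m
          have h2 : max |lam α - 1| |lam β - 1| ^ m ≤ |lam α - 1| ^ m + |lam β - 1| ^ m := by
            rcases max_cases |lam α - 1| |lam β - 1| with ⟨h, -⟩ | ⟨h, -⟩ <;> rw [h]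
            · have : 0 ≤ |lam β - 1| ^ m := by positivity
              linarith
            · have : 0 ≤ |lam α - 1| ^ m := by positivity
              linarith
          have h3 := hw0 α β
          calc _ ≤ |pd (m + 2) (lam α - 1) (lam β - 1)| * w α β := by
                gcongr; exact le_abs_self _
            _ ≤ ((m + 2) ^ 2 * (|lam α - 1| ^ m + |lam β - 1| ^ m)) * w α β := by
                gcongr; exact h1.trans (by gcongr)
            _ = _ := by ring
    _ = (m + 2) * Λ ^ 2 * ∑ α, |lam α - 1| ^ (m + 1) +
        2 * (m + 2) ^ 2 * ∑ α, |lam α - 1| ^ m * ∑ β, w α β := by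
        simp only [Finset.sum_add_distrib, ← Finset.mul_sum]
        rw [Finset.sum_comm (f := fun α β => |lam β - 1| ^ m * w α β)]
        simp only [← Finset.mul_sum, fun α β => hsym β α]
        ring
    _ ≤ (m + 2) * Λ ^ 2 * ∑ α, |lam α - 1| ^ (m + 1) +
        2 * (m + 2) ^ 2 * ∑ α, |lam α - 1| ^ m * (kappaConst n ^ 2 * Λ ^ 3) := by
        gcongr with α _; exact hwT α
    _ = _ := by rw [← Finset.sum_mul]; ring

end

/-! ### The potential -/

section

variable {n : ℕ}

/-- The regularization `64⁻ᵠ` lets the power `2 q` control the two powers below it. -/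
lemma pow_le_shift {r : ℝ} (hr : 0 ≤ r) (p : ℕ) :
    r ^ (2 * p) ≤ 64 * (r ^ (2 * (p + 1)) + (1 / 64) ^ (p + 1)) ∧
    r ^ (2 * p + 1) ≤ 8 * (r ^ (2 * (p + 1)) + (1 / 64) ^ (p + 1)) := by
  have e : ((1 : ℝ) / 64) ^ (p + 1) = (1 / 8) ^ (2 * p) / 64 := by
    rw [pow_mul, pow_succ]; norm_num; ring
  have e2 : ((1 : ℝ) / 64) ^ (p + 1) = (1 / 8) ^ (2 * p + 1) / 8 := by
    rw [e, pow_succ]; ring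
  have e3 : r ^ (2 * (p + 1)) = r ^ (2 * p) * r ^ 2 := by rw [← pow_add]; rfl
  have e4 : r ^ (2 * (p + 1)) = r ^ (2 * p + 1) * r := by rw [← pow_succ]; rfl
  have h0 : 0 ≤ r ^ (2 * p) := by positivity
  have h0' : 0 ≤ r ^ (2 * p + 1) := by positivity
  have h1 : (0 : ℝ) < (1 / 64) ^ (p + 1) := by positivity
  rcases le_total (1 / 8) r with h | h
  · constructor
    · rw [e3]
      have : (1 / 64 : ℝ) ≤ r ^ 2 := by nlinarith
      nlinarith
    · rw [e4]; nlinarith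
  · constructor
    · have : r ^ (2 * p) ≤ (1 / 8) ^ (2 * p) := by gcongr
      have h2 : 0 ≤ r ^ (2 * (p + 1)) := by positivity
      linarith
    · have : r ^ (2 * p + 1) ≤ (1 / 8) ^ (2 * p + 1) := by gcongr
      have h2 : 0 ≤ r ^ (2 * (p + 1)) := by positivity
      linarith

/-- The jet of `1 + S`, where `S = tr (A - 1) ^ (2 q) + n / 64 ^ q`. -/
def dnJet (ν : Measure (Eu n)) (q : ℕ) : Jet n :=
  (trJet ν (2 * q)).sub (Jet.const n (-(1 + n * (1 / 64) ^ q)))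

/-- The jet of the bounded potential `S / (1 + S)`, where `S = tr (A - 1) ^ (2 q) + n / 64 ^ q`
measures the distance between the covariance `A` of the tilted measure and the identity. -/
def VJet (ν : Measure (Eu n)) (q : ℕ) : Jet n := (Jet.const n 1).sub (dnJet ν q).inv

lemma dnJet_F {ν : Measure (Eu n)} {s : ℝ} {θ : Eu n} {U : Matrix (Fin n) (Fin n) ℝ}
    {lam : Fin n → ℝ} (h : Diag (cov ν s θ) U lam) (q : ℕ) :
    (dnJet ν q).F s θ = 1 + ∑ α, (|lam α - 1| ^ (2 * q) + (1 / 64) ^ q) := by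
  have : (dnJet ν q).F s θ = (trJet ν (2 * q)).F s θ - (-(1 + n * (1 / 64) ^ q)) := rfl
  rw [this, trJet_F h, Finset.sum_add_distrib]
  have e : ∀ x : ℝ, |x| ^ (2 * q) = x ^ (2 * q) := fun x => by rw [pow_mul, sq_abs, ← pow_mul]
  simp [e]; ring

lemma dnJet_one_le (ν : Measure (Eu n)) (s : ℝ) (θ : Eu n) (q : ℕ) :
    1 ≤ (dnJet ν q).F s θ := by
  obtain ⟨U, lam, h⟩ := cov_diag ν s θ
  rw [dnJet_F h]
  have : 0 ≤ ∑ α, (|lam α - 1| ^ (2 * q) + (1 / 64 : ℝ) ^ q) :=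
    Finset.sum_nonneg fun α _ => by positivity
  linarith

lemma VJet_isJet {ν : Measure (Eu n)} {R : ℝ} (hν : Tame ν R) (q : ℕ) (I : Set ℝ) :
    IsJet I (VJet ν q) :=
  (IsJet.const I 1).sub (((IsJet.sum fun i => powJet_isJet hν I _ i i).sub
    (IsJet.const I _)).inv fun s _ θ => dnJet_one_le ν s θ q)

lemma VJet_F (ν : Measure (Eu n)) (s : ℝ) (θ : Eu n) (q : ℕ) :
    (VJet ν q).F s θ = 1 - ((dnJet ν q).F s θ)⁻¹ := rfl

lemma VJet_nonneg (ν : Measure (Eu n)) (s : ℝ) (θ : Eu n) (q : ℕ) : 0 ≤ (VJet ν q).F s θ := by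
  rw [VJet_F]
  have := inv_le_one_of_one_le₀ (dnJet_one_le ν s θ q)
  linarith

/-- The drift of the potential `V = S / (1 + S)` is at most a multiple of `V`. The factor
`‖A‖³` in the drift of `S` is absorbed by the denominator `1 + S`. -/
lemma gen_VJet_le {ν : Measure (Eu n)} {R : ℝ} (hν : Tame ν R) (hl : IsLogConcaveMeasure ν)
    (hn : 0 < n) {s : ℝ} (hs : 0 ≤ s) (θ : Eu n) {q : ℕ} (hq : 2 ≤ q) :
    gen ν (VJet ν q) s θ ≤ 4224 * q ^ 2 * kappaConst n ^ 2 * (VJet ν q).F s θ := by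
  obtain ⟨p, rfl⟩ : ∃ p, q = p + 1 := ⟨q - 1, by omega⟩
  obtain ⟨U, lam, h⟩ := cov_diag ν s θ
  set d := (dnJet ν (p + 1)).F s θ with hd
  set S := ∑ α, (|lam α - 1| ^ (2 * (p + 1)) + (1 / 64 : ℝ) ^ (p + 1)) with hS
  have hdS : d = 1 + S := dnJet_F h _
  have hS0 : 0 ≤ S := Finset.sum_nonneg fun α _ => by positivity
  have hκ := one_le_kappa hn
  have : Nonempty (Fin n) := ⟨⟨0, hn⟩⟩
  obtain ⟨α₀, hα₀⟩ := Finite.exists_max fun α => |lam α - 1|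
  set x := |lam α₀ - 1| with hx
  have hx0 : 0 ≤ x := abs_nonneg _
  have hΛ : ∀ α, lam α ≤ 1 + x := fun α => by
    have := (le_abs_self _).trans (hα₀ α)
    linarith
  have hxS : x ^ (2 * (p + 1)) ≤ S := by
    have := Finset.single_le_sum (f := fun α => |lam α - 1| ^ (2 * (p + 1)) + (1 / 64 : ℝ) ^ (p + 1))
      (fun α _ => by positivity) (Finset.mem_univ α₀)
    have h2 : (0 : ℝ) < (1 / 64 : ℝ) ^ (p + 1) := by positivity
    simp only [← hx] at this
    linarith
  have hΛ3 : (1 + x) ^ 3 ≤ 8 * d := by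
    have h3 : x ^ 3 ≤ 1 + x ^ (2 * (p + 1)) := by
      rcases le_total x 1 with h | h
      · have : x ^ 3 ≤ 1 := pow_le_one₀ hx0 h
        have : 0 ≤ x ^ (2 * (p + 1)) := by positivity
        linarith
      · have : x ^ 3 ≤ x ^ (2 * (p + 1)) := pow_le_pow_right₀ h (by omega)
        linarith
    have h4 : (1 + x) ^ 3 ≤ 4 * (1 + x ^ 3) := by nlinarith [mul_nonneg (by linarith : 0 ≤ 1 + x) (sq_nonneg (1 - x))]
    rw [hdS]; linarith
  have hg : gen ν (trJet ν (2 * (p + 1))) s θ ≤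
      528 * ((p + 1 : ℕ) : ℝ) ^ 2 * kappaConst n ^ 2 * (1 + x) ^ 3 * S := by
    have h1 := gen_trJet_le hν hl hs h hΛ (2 * p)
    have h2 : ∑ α, |lam α - 1| ^ (2 * p + 1) ≤ 8 * S := by
      rw [hS, Finset.mul_sum]
      exact Finset.sum_le_sum fun α _ => (pow_le_shift (abs_nonneg _) p).2
    have h3 : ∑ α, |lam α - 1| ^ (2 * p) ≤ 64 * S := by
      rw [hS, Finset.mul_sum]
      exact Finset.sum_le_sum fun α _ => (pow_le_shift (abs_nonneg _) p).1
    refine h1.trans ?_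
    have e : ((2 * p : ℕ) : ℝ) + 2 = 2 * ((p + 1 : ℕ) : ℝ) := by push_cast; ring
    rw [e]
    set Q := ((p + 1 : ℕ) : ℝ) with hQ
    have hQ1 : 1 ≤ Q := by rw [hQ]; push_cast; linarith [(Nat.cast_nonneg p : (0 : ℝ) ≤ p)]
    calc _ ≤ 2 * Q * (1 + x) ^ 2 * (8 * S) +
          2 * (2 * Q) ^ 2 * (kappaConst n ^ 2 * (1 + x) ^ 3) * (64 * S) := by gcongr
      _ ≤ 2 * (Q * Q) * (1 * ((1 + x) ^ 2 * (1 + x))) * (8 * S) +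
          2 * (2 * Q) ^ 2 * (kappaConst n ^ 2 * (1 + x) ^ 3) * (64 * S) := by
            gcongr ?_ * _ + _
            have : Q ≤ Q * Q := by nlinarith
            have : (1 + x) ^ 2 ≤ 1 * ((1 + x) ^ 2 * (1 + x)) := by nlinarith [sq_nonneg (1 + x)]
            gcongr
      _ ≤ 2 * (Q * Q) * (kappaConst n ^ 2 * ((1 + x) ^ 2 * (1 + x))) * (8 * S) +
          2 * (2 * Q) ^ 2 * (kappaConst n ^ 2 * (1 + x) ^ 3) * (64 * S) := by
            gcongr; nlinarith
      _ = _ := by ring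
  have hgd : gen ν (dnJet ν (p + 1)) s θ = gen ν (trJet ν (2 * (p + 1))) s θ := by
    rw [dnJet, gen_sub, gen_const, sub_zero]
  have hd1 : 1 ≤ d := by rw [hdS]; linarith
  have hinv := gen_inv_ge ν (dnJet ν (p + 1)) s θ (by linarith)
  rw [VJet_F, VJet, gen_sub, gen_const, zero_sub]
  rw [hgd] at hinv
  rw [← hd] at hinv ⊢
  calc _ ≤ gen ν (trJet ν (2 * (p + 1))) s θ * (d⁻¹ * d⁻¹) := by linarith
    _ ≤ (528 * ((p + 1 : ℕ) : ℝ) ^ 2 * kappaConst n ^ 2 * (8 * d) * S) * (d⁻¹ * d⁻¹) := by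
        gcongr; refine hg.trans ?_; gcongr
    _ = _ := by
        rw [hdS]
        have : (1 + S) ≠ 0 := by positivity
        field_simp; ring

lemma cov_continuous {ν : Measure (Eu n)} {R : ℝ} (hν : Tame ν R) :
    Continuous fun p : ℝ × Eu n => cov ν p.1 p.2 := by
  refine continuous_matrix fun i j => ?_
  have h1 := mm_continuous hν (h := fun x : Eu n => x i * x j) (by fun_prop)
  have h2 := mm_continuous hν (h := fun x : Eu n => x i) (by fun_prop)
  have h3 := mm_continuous hν (h := fun x : Eu n => x j) (by fun_prop)
  exact h1.sub (h2.mul h3)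

lemma VJet_continuous {ν : Measure (Eu n)} {R : ℝ} (hν : Tame ν R) (q : ℕ) :
    Continuous fun p : ℝ × Eu n => (VJet ν q).F p.1 p.2 := by
  have h1 : Continuous fun p : ℝ × Eu n => ((cov ν p.1 p.2 - 1) ^ (2 * q)).trace :=
    Continuous.matrix_trace (((cov_continuous hν).sub continuous_const).pow _)
  have h2 : ∀ p : ℝ × Eu n, (dnJet ν q).F p.1 p.2 =
      ((cov ν p.1 p.2 - 1) ^ (2 * q)).trace - (-(1 + n * (1 / 64) ^ q)) := by
    intro p; rw [← powJet_F]; rfl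
  have h3 : Continuous fun p : ℝ × Eu n => (dnJet ν q).F p.1 p.2 := by
    simp only [h2]; exact h1.sub continuous_const
  exact continuous_const.sub (h3.inv₀ fun p => by have := dnJet_one_le ν p.1 p.2 q; positivity)

/-- The expected potential grows at most exponentially. -/
lemma EE_VJet_le {ν : Measure (Eu n)} {R : ℝ} (hν : Tame ν R) (hl : IsLogConcaveMeasure ν)
    (hn : 0 < n) {s : ℝ} (hs : 0 < s) {q : ℕ} (hq : 2 ≤ q) :
    EE ν s ((VJet ν q).F s) ≤
      Real.exp (4224 * q ^ 2 * kappaConst n ^ 2 * s) * (VJet ν q).F 0 0 := by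
  set K := 4224 * (q : ℝ) ^ 2 * kappaConst n ^ 2 with hK
  have hd : ∀ r, 0 < r → r ≤ s → HasDerivAt (fun r => Real.exp (-(K * r)) * EE ν r ((VJet ν q).F r))
      (Real.exp (-(K * r)) * (-(K * 1)) * EE ν r ((VJet ν q).F r) +
        Real.exp (-(K * r)) * EE ν r (gen ν (VJet ν q) r)) r := by
    intro r hr _
    exact ((((hasDerivAt_id r).const_mul K).fun_neg).exp).fun_mul
      (dynkin hν isOpen_univ (VJet_isJet hν q Set.univ) (Set.mem_univ r) hr)
  have hneg : ∀ r, 0 < r → r < s → Real.exp (-(K * r)) * (-(K * 1)) * EE ν r ((VJet ν q).F r) +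
        Real.exp (-(K * r)) * EE ν r (gen ν (VJet ν q) r) ≤ 0 := by
    intro r hr _
    have hJ := VJet_isJet hν q {r}
    have h1 := EE_mono hν hr (Bd.gen hν hJ) ((Bd.const _ K).mul hJ.b)
      fun θ => gen_VJet_le hν hl hn hr.le θ hq
    rw [EE_const_mul] at h1
    have := mul_le_mul_of_nonneg_left h1 (Real.exp_pos (-(K * r))).le
    linarith
  have hlim : Filter.Tendsto (fun r => Real.exp (-(K * r)) * EE ν r ((VJet ν q).F r))
      (nhdsWithin 0 (Set.Ioi 0)) (nhds (1 * (VJet ν q).F 0 0)) := by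
    refine Filter.Tendsto.mul ?_ (EE_tendsto hν one_pos (VJet_isJet hν q _).b ?_)
    · have : Continuous fun r : ℝ => Real.exp (-(K * r)) := by fun_prop
      have := this.tendsto 0
      simp only [mul_zero, neg_zero, Real.exp_zero] at this
      exact this.mono_left nhdsWithin_le_nhds
    · exact (VJet_continuous hν q).continuousAt
  have := le_limit hs hd hneg hlim
  rw [one_mul, Real.exp_neg] at this
  rwa [inv_mul_le_iff₀ (Real.exp_pos _)] at this


/-- The initial potential, when the covariance starts close to the identity. -/
lemma VJet_zero_le {ν : Measure (Eu n)} 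
    (h0 : ∑ i, ∑ j, (cov ν 0 0 i j - (1 : Matrix (Fin n) (Fin n) ℝ) i j) ^ 2 ≤ 1 / 64) (q : ℕ) :
    (VJet ν q).F 0 0 ≤ 2 * n * (1 / 64) ^ q := by
  obtain ⟨U, lam, h⟩ := cov_diag ν 0 0
  have h1 := dnJet_one_le ν 0 0 q
  have hs : ∑ α, |lam α - 1| ^ 2 ≤ 1 / 64 := by
    have e := trJet_F h 2
    have e2 : (trJet ν 2).F 0 0 = ((cov ν 0 0 - 1) ^ 2).trace := by rw [← powJet_F]; rfl
    simp only [sq_abs]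
    rw [← e, e2]
    convert h0 using 1
    simp only [pow_two, Matrix.trace, Matrix.diag, Matrix.mul_apply, Matrix.sub_apply]
    refine Finset.sum_congr rfl fun i _ => Finset.sum_congr rfl fun j _ => ?_
    rw [cov_symm ν 0 0 j i, Matrix.one_apply, Matrix.one_apply]
    simp only [eq_comm]
  have h2 : (dnJet ν q).F 0 0 ≤ 1 + 2 * n * (1 / 64) ^ q := by
    rw [dnJet_F h]
    have : ∑ α, (|lam α - 1| ^ (2 * q) + (1 / 64 : ℝ) ^ q) ≤ ∑ _α : Fin n, 2 * (1 / 64 : ℝ) ^ q := by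
      refine Finset.sum_le_sum fun α _ => ?_
      have := (Finset.single_le_sum (f := fun α => |lam α - 1| ^ 2) (fun α _ => by positivity)
        (Finset.mem_univ α)).trans hs
      have : |lam α - 1| ^ (2 * q) ≤ (1 / 64 : ℝ) ^ q := by rw [pow_mul]; gcongr
      linarith
    simp only [Finset.sum_const, Finset.card_univ, Fintype.card_fin, nsmul_eq_mul] at this
    linarith
  rw [VJet_F]
  set d := (dnJet ν q).F 0 0
  have : 1 - d⁻¹ ≤ d - 1 := by
    have h3 : 2 ≤ d + d⁻¹ := by
      have : d + d⁻¹ - 2 = (d - 1) ^ 2 / d := by field_simp; ring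
      have : 0 ≤ (d - 1) ^ 2 / d := by positivity
      linarith
    linarith
  linarith

/-- Outside of the event where the potential is large, the covariance is comparable to the
identity. -/
lemma eig_good {ν : Measure (Eu n)} {s : ℝ} {θ : Eu n} {U : Matrix (Fin n) (Fin n) ℝ}
    {lam : Fin n → ℝ} (h : Diag (cov ν s θ) U lam) {q : ℕ}
    (hV : 2 * 4 ^ q * (VJet ν q).F s θ < 1) (α : Fin n) : 1 / 2 ≤ lam α ∧ lam α ≤ 3 / 2 := by
  have h1 := dnJet_one_le ν s θ q
  have hd := dnJet_F h q
  rw [VJet_F] at hV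
  set d := (dnJet ν q).F s θ
  have h4 : (1 : ℝ) ≤ 4 ^ q := one_le_pow₀ (by norm_num)
  have hx : |lam α - 1| ^ (2 * q) ≤ d - 1 := by
    have := Finset.single_le_sum (f := fun α => |lam α - 1| ^ (2 * q) + (1 / 64 : ℝ) ^ q)
      (fun α _ => by positivity) (Finset.mem_univ α)
    have h2 : (0 : ℝ) < (1 / 64 : ℝ) ^ q := by positivity
    linarith
  have h5 : 2 * 4 ^ q * (d - 1) < d := by
    have : 2 * 4 ^ q * (1 - d⁻¹) * d < 1 * d := by gcongr
    have e : 2 * 4 ^ q * (1 - d⁻¹) * d = 2 * 4 ^ q * (d - 1) := by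
      have : d ≠ 0 := by positivity
      field_simp
    linarith
  have h6 : |lam α - 1| < 1 / 2 := by
    by_contra hc
    push Not at hc
    have h7 : ((1 : ℝ) / 2) ^ (2 * q) ≤ |lam α - 1| ^ (2 * q) := by gcongr
    have e : ((1 : ℝ) / 2) ^ (2 * q) * 4 ^ q = 1 := by
      rw [pow_mul, ← mul_pow]; norm_num
    have h8 : 1 ≤ 4 ^ q * (d - 1) := by
      have := mul_le_mul_of_nonneg_right (h7.trans hx) (by linarith : (0 : ℝ) ≤ 4 ^ q)
      linarith
    nlinarith
  rw [abs_lt] at h6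
  constructor <;> linarith

/-- Quantitative bound for the bad event, at a time `s` with `4224 κ² q s ≤ 1`. -/
lemma EE_bad_le {ν : Measure (Eu n)} {R : ℝ} (hν : Tame ν R) (hl : IsLogConcaveMeasure ν)
    (hn : 0 < n) (h0 : ∑ i, ∑ j, (cov ν 0 0 i j - (1 : Matrix (Fin n) (Fin n) ℝ) i j) ^ 2 ≤ 1 / 64)
    {s : ℝ} (hs : 0 < s) {q : ℕ} (hq : 2 ≤ q) (hnq : (n : ℝ) ≤ 2 ^ q)
    (hqs : 4224 * kappaConst n ^ 2 * q * s ≤ 1) :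
    EE ν s (fun θ => 2 * 4 ^ q * (VJet ν q).F s θ) ≤ 4 * (1 / 2) ^ q := by
  rw [EE_const_mul]
  have h1 := EE_VJet_le hν hl hn hs hq
  have h2 := VJet_zero_le h0 q
  have h3 : Real.exp (4224 * q ^ 2 * kappaConst n ^ 2 * s) ≤ 3 ^ q := by
    have e : Real.exp (q * 1) = Real.exp 1 ^ q := Real.exp_nat_mul 1 q
    calc _ ≤ Real.exp (q * 1) := by
          refine Real.exp_le_exp.2 ?_
          calc 4224 * (q : ℝ) ^ 2 * kappaConst n ^ 2 * s = (q : ℝ) * (4224 * kappaConst n ^ 2 * q * s) := by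
                ring
            _ ≤ (q : ℝ) * 1 := by gcongr
      _ = Real.exp 1 ^ q := e
      _ ≤ 3 ^ q := by
          have := Real.exp_one_lt_three
          gcongr
  calc _ ≤ (2 : ℝ) * 4 ^ q * (3 ^ q * (2 * 2 ^ q * (1 / 64) ^ q)) := by
        gcongr
        refine h1.trans ?_
        refine mul_le_mul h3 (h2.trans (by gcongr)) (VJet_nonneg _ _ _ _) (by positivity)
    _ = 4 * (4 * 3 * 2 * (1 / 64)) ^ q := by simp only [mul_pow]; ring
    _ ≤ _ := by gcongr; norm_num

end

/-! ### The smoothed gauge at the barycenter -/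

section

variable {n : ℕ}

lemma hasDerivAt_eu {x : ℝ → Eu n} {x' : Eu n} {r : ℝ}
    (h : ∀ i, HasDerivAt (fun r => x r i) (x' i) r) : HasDerivAt x x' r :=
  ((PiLp.continuousLinearEquiv 2 ℝ fun _ : Fin n => ℝ).symm.hasFDerivAt.comp_hasDerivAt r
    (hasDerivAt_pi.2 h))

lemma Mh_continuousOn {h : Eu n → ℝ} (hh : AdmV h) :
    ContinuousOn (fun p : ℝ × Eu n => Mh h p.1 p.2) (Set.Ioi 0 ×ˢ Set.univ) :=
  fun p hp => (Mh_continuousAt hh hp.1 p.2).continuousWithinAt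

lemma coord_continuousOn (i : Fin n) (S : Set (ℝ × Eu n)) :
    ContinuousOn (fun p : ℝ × Eu n => p.2 i) S := by fun_prop

lemma inv_continuousOn :
    ContinuousOn (fun p : ℝ × Eu n => 1 / p.1) (Set.Ioi 0 ×ˢ Set.univ) := by
  refine continuousOn_const.div continuousOn_fst fun p hp => ?_
  have h : 0 < p.1 := hp.1
  exact h.ne'

lemma Mi_continuousOn {h : Eu n → ℝ} (hh : AdmV h) (i : Fin n) :
    ContinuousOn (fun p : ℝ × Eu n => Mi i h p.1 p.2) (Set.Ioi 0 ×ˢ Set.univ) :=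
  inv_continuousOn.mul ((Mh_continuousOn (hh.coord i)).sub
    ((coord_continuousOn i _).mul (Mh_continuousOn hh)))

lemma Mij_continuousOn {h : Eu n → ℝ} (hh : AdmV h) (i j : Fin n) :
    ContinuousOn (fun p : ℝ × Eu n => Mij i j h p.1 p.2) (Set.Ioi 0 ×ˢ Set.univ) :=
  inv_continuousOn.mul ((Mi_continuousOn (hh.coord i) j).sub
    ((continuousOn_const.mul (Mh_continuousOn hh)).add
      ((coord_continuousOn i _).mul (Mi_continuousOn hh j))))

lemma bary_continuous {ν : Measure (Eu n)} {R : ℝ} (hν : Tame ν R) :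
    Continuous fun p : ℝ × Eu n => bary ν p.1 p.2 :=
  (PiLp.continuous_toLp 2 _).comp (continuous_pi fun i => mm_continuous hν (by fun_prop))

lemma Bd.comp_bary {ν : Measure (Eu n)} {R : ℝ} (hν : Tame ν R) {I : Set ℝ} {v : ℝ → ℝ}
    {v₀ v₁ : ℝ} (h0 : 0 < v₀) (hv : ∀ s ∈ I, v s ∈ Set.Icc v₀ v₁) {Φ : ℝ × Eu n → ℝ}
    (hΦ : ContinuousOn Φ (Set.Ioi 0 ×ˢ Set.univ)) :
    Bd I fun s θ => Φ (v s, bary ν s θ) := by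
  have hsub : Set.Icc v₀ v₁ ×ˢ Metric.closedBall (0 : Eu n) R ⊆ Set.Ioi 0 ×ˢ Set.univ :=
    fun p hp => ⟨lt_of_lt_of_le h0 hp.1.1, trivial⟩
  refine ⟨fun s hs => ?_, ?_⟩
  · have hb : Continuous fun θ => bary ν s θ :=
      Continuous.comp (f := fun θ : Eu n => (s, θ)) (bary_continuous hν)
        (continuous_const.prodMk continuous_id)
    have hvs : 0 < v s := lt_of_lt_of_le h0 (hv s hs).1
    have hc : Continuous fun θ => (v s, bary ν s θ) := continuous_const.prodMk hb
    exact ContinuousOn.comp_continuous hΦ hc fun θ => Set.mem_prod.2 ⟨hvs, Set.mem_univ _⟩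
  · obtain ⟨K, hK⟩ := (isCompact_Icc.prod (isCompact_closedBall (0 : Eu n) R)).exists_bound_of_continuousOn
      (hΦ.mono hsub)
    exact ⟨K, fun s hs θ => hK _ ⟨hv s hs, by simpa using bary_norm_le hν s θ⟩⟩

/-- The jet of `U (v s) a`, where `U v` is the smoothing of `f` by the Gaussian of variance `v`,
and `a` is the barycenter of the tilted measure. -/
def UJet (ν : Measure (Eu n)) (f : Eu n → ℝ) (v v' : ℝ → ℝ) : Jet n where
  F s θ := Mh f (v s) (bary ν s θ)
  Fs s θ := v' s * (1 / 2 * ∑ i, Mij i i f (v s) (bary ν s θ)) +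
    ∑ i, (mmJet ν fun x => x i).Fs s θ * Mi i f (v s) (bary ν s θ)
  F1 k s θ := ∑ i, (mmJet ν fun x => x i).F1 k s θ * Mi i f (v s) (bary ν s θ)
  F2 k s θ := ∑ i, ((mmJet ν fun x => x i).F2 k s θ * Mi i f (v s) (bary ν s θ) +
    (mmJet ν fun x => x i).F1 k s θ *
      ∑ j, (mmJet ν fun x => x j).F1 k s θ * Mij i j f (v s) (bary ν s θ))

lemma bary_lineDeriv {ν : Measure (Eu n)} {R : ℝ} (hν : Tame ν R) (s : ℝ) (θ : Eu n) (k : Fin n) :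
    HasDerivAt (fun t : ℝ => bary ν s (θ + t • EuclideanSpace.single k 1))
      (WithLp.toLp 2 fun i => (mmJet ν fun x => x i).F1 k s θ) 0 :=
  hasDerivAt_eu fun i => (mmJet_isJet hν (h := fun x : Eu n => x i) (by fun_prop)
    Set.univ).d1 s (Set.mem_univ s) θ k

lemma UJet_isJet {ν : Measure (Eu n)} {R : ℝ} (hν : Tame ν R) {f : Eu n → ℝ} (hf : AdmV f)
    {I : Set ℝ} {v v' : ℝ → ℝ} {v₀ v₁ K : ℝ} (h0 : 0 < v₀) (hv : ∀ s ∈ I, v s ∈ Set.Icc v₀ v₁)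
    (hd : ∀ s ∈ I, HasDerivAt v (v' s) s) (hK : ∀ s ∈ I, |v' s| ≤ K) :
    IsJet I (UJet ν f v v') := by
  have hpos : ∀ s ∈ I, 0 < v s := fun s hs => lt_of_lt_of_le h0 (hv s hs).1
  have hm : ∀ i, IsJet I (mmJet ν fun x => x i) := fun i => mmJet_isJet hν (by fun_prop) I
  have bi : ∀ i, Bd I fun s θ => Mi i f (v s) (bary ν s θ) := fun i =>
    Bd.comp_bary hν h0 hv (Mi_continuousOn hf i)
  have bij : ∀ i j, Bd I fun s θ => Mij i j f (v s) (bary ν s θ) := fun i j =>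
    Bd.comp_bary hν h0 hv (Mij_continuousOn hf i j)
  refine ⟨fun s hs θ => ?_, fun s hs θ k => ?_, fun s hs θ k => ?_,
    Bd.comp_bary hν h0 hv (Mh_continuousOn hf),
    ((Bd.of_s hK).mul ((Bd.const I _).mul (Bd.sum _ fun i => bij i i))).add
      (Bd.sum Finset.univ fun i => (hm i).bs.mul (bi i)),
    fun k => Bd.sum Finset.univ fun i => ((hm i).b1 k).mul (bi i),
    fun k => Bd.sum Finset.univ fun i => (((hm i).b2 k).mul (bi i)).add (((hm i).b1 k).mul
      (Bd.sum Finset.univ fun j => ((hm j).b1 k).mul (bij i j)))⟩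
  · have hb : HasDerivAt (fun s => bary ν s θ)
      (WithLp.toLp 2 fun i => (mmJet ν fun x => x i).Fs s θ) s :=
      hasDerivAt_eu fun i => (hm i).ds s hs θ
    refine (Mh_curve hf (hd s hs) hb (hpos s hs)).congr_deriv ?_
    simp only [Mv_eq f (hpos s hs), UJet]
  · have hb := bary_lineDeriv hν s θ k
    have := Mh_curve hf (hasDerivAt_const (0 : ℝ) (v s)) hb (hpos s hs)
    refine HasDerivAt.congr_deriv this ?_
    simp only [zero_mul, zero_add, zero_smul, add_zero, UJet]
  · have hb := bary_lineDeriv hν s θ k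
    have h2 : ∀ i, HasLineDerivAt ℝ (fun θ => Mi i f (v s) (bary ν s θ))
        (∑ j, (mmJet ν fun x => x j).F1 k s θ * Mij i j f (v s) (bary ν s θ)) θ
        (EuclideanSpace.single k 1) := by
      intro i
      refine HasDerivAt.congr_deriv (Mi_curve hf hb (hpos s hs) i) ?_
      simp only [zero_smul, add_zero]
    exact HasDerivAt.fun_sum (u := Finset.univ) fun i _ => lineDeriv_mul ((hm i).d2 s hs θ k) (h2 i)

lemma gen_UJet {ν : Measure (Eu n)} (f : Eu n → ℝ) (v v' : ℝ → ℝ) (s : ℝ) (θ : Eu n) :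
    gen ν (UJet ν f v v') s θ = 1 / 2 * (v' s * ∑ i, Mij i i f (v s) (bary ν s θ) +
      ∑ k, ∑ i, ∑ j, cov ν s θ k i * cov ν s θ k j * Mij i j f (v s) (bary ν s θ)) := by
  have h0 : ∑ i, gen ν (mmJet ν fun x => x i) s θ * Mi i f (v s) (bary ν s θ) = 0 := by
    simp [gen_mmJet]
  have h1 : ∀ k i, (mmJet ν fun x => x i).F1 k s θ = cov ν s θ k i := fun k i => rfl
  simp only [gen, add_mul, Finset.sum_mul, Finset.mul_sum, Finset.sum_add_distrib] at h0
  simp only [gen, UJet, Finset.mul_sum, Finset.sum_add_distrib, mul_add]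
  rw [Finset.sum_comm (f := fun k i => mm ν (fun x => x k) s θ * _),
    Finset.sum_comm (f := fun k i => 1 / 2 * ((mmJet ν fun x => x i).F2 k s θ * _))]
  simp only [h1, ← mul_assoc] at h0 ⊢
  have : ∀ i, v' s * (1 / 2) * Mij i i f (v s) (bary ν s θ) =
    1 / 2 * v' s * Mij i i f (v s) (bary ν s θ) := fun i => by ring
  simp only [this]
  linarith

/-- In the eigenbasis of the covariance matrix, the generator applied to `U (v s) a` is a
combination of the second derivatives of `U` in the eigendirections. -/
lemma gen_UJet_eq {ν : Measure (Eu n)} {f : Eu n → ℝ} (hf : IsGauge f) (v v' : ℝ → ℝ) {s : ℝ}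
    {θ : Eu n} (hv : 0 < v s) {U : Matrix (Fin n) (Fin n) ℝ}
    {lam : Fin n → ℝ} (h : Diag (cov ν s θ) U lam) :
    ∃ b : Fin n → ℝ, (∀ β, 0 ≤ b β) ∧ ∑ β, b β ≤ (∫ z, f z ∂(stdGaussian n)) / √(v s) ∧
      gen ν (UJet ν f v v') s θ = 1 / 2 * ∑ β, (v' s + lam β ^ 2) * b β := by
  set H : Matrix (Fin n) (Fin n) ℝ := Matrix.of fun i j => Mij i j f (v s) (bary ν s θ) with hH
  have hA : cj U (cov ν s θ) = Matrix.diagonal lam := h.conj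
  have htr : ∑ i, Mij i i f (v s) (bary ν s θ) = ∑ β, cj U H β β := by
    change H.trace = (cj U H).trace
    rw [trace_cj h.right]
  refine ⟨fun β => cj U H β β, fun β => ?_, ?_, ?_⟩
  · change 0 ≤ (U.transpose * H * U) β β
    rw [conj_entry]
    exact hessian_U_nonneg hf (bary ν s θ) (WithLp.toLp 2 fun i => U i β) hv
  · rw [← htr]; exact laplacian_U_le hf _ hv
  · rw [gen_UJet, htr]
    have e : ∑ k, ∑ i, ∑ j, cov ν s θ k i * cov ν s θ k j * Mij i j f (v s) (bary ν s θ) =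
        (cov ν s θ * H * cov ν s θ).trace := by
      simp only [Matrix.trace, Matrix.diag, Matrix.mul_apply, Finset.sum_mul]
      refine Finset.sum_congr rfl fun k _ => ?_
      rw [Finset.sum_comm]
      refine Finset.sum_congr rfl fun j _ => Finset.sum_congr rfl fun i _ => ?_
      rw [cov_symm ν s θ j k, hH, Matrix.of_apply]; ring
    rw [e, ← trace_cj h.right, cj_mul h.right, cj_mul h.right, hA]
    simp only [Matrix.trace, Matrix.diag, Matrix.mul_diagonal, Matrix.diagonal_mul, add_mul,
      Finset.sum_add_distrib, Finset.mul_sum]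
    congr 2
    exact Finset.sum_congr rfl fun β _ => by ring

end

/-! ### Bounds for compactly supported measures -/

section

variable {n : ℕ}

lemma gen_UJet_nonpos {ν : Measure (Eu n)} {R : ℝ} (hν : Tame ν R) (hl : IsLogConcaveMeasure ν)
    {f : Eu n → ℝ} (hf : IsGauge f) {v v' : ℝ → ℝ} {s : ℝ} (hs : 0 < s) (hv : 0 < v s)
    (hv' : v' s = -(1 / s) ^ 2) (θ : Eu n) : gen ν (UJet ν f v v') s θ ≤ 0 := by
  obtain ⟨U, lam, h⟩ := cov_diag ν s θ
  obtain ⟨b, hb, -, e⟩ := gen_UJet_eq hf v v' hv h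
  rw [e]
  have : ∑ β, (v' s + lam β ^ 2) * b β ≤ 0 := Finset.sum_nonpos fun β _ => by
    refine mul_nonpos_of_nonpos_of_nonneg ?_ (hb β)
    have := pow_le_pow_left₀ (h.pos hν hl β).le (h.le hν hl hs β) 2
    rw [hv']; linarith
  linarith

/-- While the eigenvalues of the covariance are at most `3/2`, smoothing with speed `-4`
dominates; the complementary event is charged to the potential `V`. -/
lemma gen_UJet_le {ν : Measure (Eu n)} {R : ℝ} (hν : Tame ν R) (hl : IsLogConcaveMeasure ν)
    {f : Eu n → ℝ} (hf : IsGauge f) {v v' : ℝ → ℝ} {s : ℝ} (hs : 0 < s) (hv : 0 < v s)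
    (hv' : v' s = -4) (q : ℕ) (θ : Eu n) :
    gen ν (UJet ν f v v') s θ ≤
      (1 / 2 * (1 / s) ^ 2 * ((∫ z, f z ∂(stdGaussian n)) / √(v s))) *
        (2 * 4 ^ q * (VJet ν q).F s θ) := by
  obtain ⟨U, lam, h⟩ := cov_diag ν s θ
  obtain ⟨b, hb, hsum, e⟩ := gen_UJet_eq hf v v' hv h
  have hℓ := gaussian_nonneg hf
  have hV := VJet_nonneg ν s θ q
  have hK : 0 ≤ 1 / 2 * (1 / s) ^ 2 * ((∫ z, f z ∂(stdGaussian n)) / √(v s)) := by positivity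
  rw [e]
  rcases lt_or_ge (2 * 4 ^ q * (VJet ν q).F s θ) 1 with hg | hg
  · have : ∑ β, (v' s + lam β ^ 2) * b β ≤ 0 := Finset.sum_nonpos fun β _ => by
      refine mul_nonpos_of_nonpos_of_nonneg ?_ (hb β)
      have := pow_le_pow_left₀ (h.pos hν hl β).le (eig_good h hg β).2 2
      rw [hv']; linarith
    have h2 : 0 ≤ 1 / 2 * (1 / s) ^ 2 * ((∫ z, f z ∂(stdGaussian n)) / √(v s)) *
        (2 * 4 ^ q * (VJet ν q).F s θ) := mul_nonneg hK (by positivity)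
    linarith
  · have h1 : ∑ β, (v' s + lam β ^ 2) * b β ≤ (1 / s) ^ 2 * ∑ β, b β := by
      rw [Finset.mul_sum]
      refine Finset.sum_le_sum fun β _ => mul_le_mul_of_nonneg_right ?_ (hb β)
      have := pow_le_pow_left₀ (h.pos hν hl β).le (h.le hν hl hs β) 2
      rw [hv']; linarith
    have h2 : (1 / s) ^ 2 * ∑ β, b β ≤ (1 / s) ^ 2 * ((∫ z, f z ∂(stdGaussian n)) / √(v s)) :=
      mul_le_mul_of_nonneg_left hsum (by positivity)
    have h3 := mul_le_mul_of_nonneg_left hg hK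
    linarith

/-- While the eigenvalues of the covariance are at least `1/2`, the diffusion dominates
smoothing with speed `-1/4`. -/
lemma le_gen_UJet {ν : Measure (Eu n)} {f : Eu n → ℝ} (hf : IsGauge f) {v v' : ℝ → ℝ} {s : ℝ}
    (hv : 0 < v s) (hv' : v' s = -(1 / 4)) (q : ℕ) (θ : Eu n) :
    -(1 / 8 * ((∫ z, f z ∂(stdGaussian n)) / √(v s))) * (2 * 4 ^ q * (VJet ν q).F s θ) ≤
      gen ν (UJet ν f v v') s θ := by
  obtain ⟨U, lam, h⟩ := cov_diag ν s θ
  obtain ⟨b, hb, hsum, e⟩ := gen_UJet_eq hf v v' hv h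
  have hℓ := gaussian_nonneg hf
  have hV := VJet_nonneg ν s θ q
  have hK : 0 ≤ 1 / 8 * ((∫ z, f z ∂(stdGaussian n)) / √(v s)) := by positivity
  rw [e]
  rcases lt_or_ge (2 * 4 ^ q * (VJet ν q).F s θ) 1 with hg | hg
  · have : 0 ≤ ∑ β, (v' s + lam β ^ 2) * b β := Finset.sum_nonneg fun β _ => by
      refine mul_nonneg ?_ (hb β)
      have := pow_le_pow_left₀ (by norm_num : (0:ℝ) ≤ 1 / 2) (eig_good h hg β).1 2
      rw [hv']; linarith
    have h2 : 0 ≤ 1 / 8 * ((∫ z, f z ∂(stdGaussian n)) / √(v s)) *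
        (2 * 4 ^ q * (VJet ν q).F s θ) := mul_nonneg hK (by positivity)
    linarith
  · have h1 : -(1 / 4) * ∑ β, b β ≤ ∑ β, (v' s + lam β ^ 2) * b β := by
      rw [Finset.mul_sum]
      refine Finset.sum_le_sum fun β _ => mul_le_mul_of_nonneg_right ?_ (hb β)
      rw [hv']; linarith [sq_nonneg (lam β)]
    have h3 := mul_le_mul_of_nonneg_left hg hK
    linarith

lemma UJet_continuousAt {ν : Measure (Eu n)} {R : ℝ} (hν : Tame ν R) {f : Eu n → ℝ}
    (hf : IsGauge f) {v v' : ℝ → ℝ} (hv : 0 < v 0) (hc : ContinuousAt v 0) :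
    ContinuousAt (fun p : ℝ × Eu n => (UJet ν f v v').F p.1 p.2) (0, 0) := by
  have h1 : ContinuousAt (fun p : ℝ × Eu n => (v p.1, bary ν p.1 p.2)) (0, 0) :=
    (ContinuousAt.comp (f := Prod.fst) (x := ((0 : ℝ), (0 : Eu n))) hc continuousAt_fst).prodMk
      (bary_continuous hν).continuousAt
  exact ContinuousAt.comp (g := fun p : ℝ × Eu n => Mh f p.1 p.2)
    (f := fun p : ℝ × Eu n => (v p.1, bary ν p.1 p.2)) (x := (0, 0))
    (Mh_continuousAt hf.admV hv (bary ν 0 0)) h1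

lemma Bd.gauge_bary {ν : Measure (Eu n)} {R : ℝ} (hν : Tame ν R) {f : Eu n → ℝ} (hf : IsGauge f)
    (I : Set ℝ) : Bd I fun s θ => f (bary ν s θ) :=
  Bd.comp_bary hν (v := fun _ => 1) (v₀ := 1) (v₁ := 1) one_pos (fun _ _ => by simp)
    (Φ := fun p => f p.2) (hf.continuous.comp continuous_snd).continuousOn

lemma Bd.U_bary {ν : Measure (Eu n)} {R : ℝ} (hν : Tame ν R) {f : Eu n → ℝ} (hf : IsGauge f)
    (I : Set ℝ) {v : ℝ} (hv : 0 < v) : Bd I fun s θ => Mh f v (bary ν s θ) :=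
  Bd.comp_bary hν (v := fun _ => v) (v₀ := v) (v₁ := v) hv (fun _ _ => by simp)
    (Mh_continuousOn hf.admV)

/-- After time `t`, smoothing with variance `1 / s` makes the smoothed gauge of the barycenter a
supermartingale, so it controls the integral of `f`. -/
lemma integral_le_EE {ν : Measure (Eu n)} {R : ℝ} (hν : Tame ν R) (hl : IsLogConcaveMeasure ν)
    {f : Eu n → ℝ} (hf : IsGauge f) {t : ℝ} (ht : 0 < t) :
    ∫ x, f x ∂ν ≤ EE ν t fun θ => Mh f (1 / t) (bary ν t θ) := by
  set v : ℝ → ℝ := fun s => 1 / s with hvdef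
  set v' : ℝ → ℝ := fun s => -(1 / s) ^ 2 with hv'def
  have step : ∀ T, t ≤ T → EE ν T ((UJet ν f v v').F T) ≤ EE ν t ((UJet ν f v v').F t) := by
    intro T hT
    have hJ : IsJet (Set.Ioo (t / 2) (2 * T)) (UJet ν f v v') := by
      have hpos : ∀ s ∈ Set.Ioo (t / 2) (2 * T), 0 < s := fun s hs => by linarith [hs.1]
      refine UJet_isJet hν hf.admV (v₀ := 1 / (2 * T)) (v₁ := 1 / (t / 2)) (K := (1 / (t / 2)) ^ 2)
        (by have := ht.trans_le hT; positivity) (fun s hs => ⟨?_, ?_⟩) (fun s hs => ?_)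
        (fun s hs => ?_)
      · exact one_div_le_one_div_of_le (hpos s hs) hs.2.le
      · exact one_div_le_one_div_of_le (by positivity) hs.1.le
      · have := hasDerivAt_inv (hpos s hs).ne'
        simp only [hvdef, hv'def, one_div]
        rw [inv_pow]; exact this
      · have h0 := hpos s hs
        rw [hv'def, abs_neg, abs_of_nonneg (by positivity)]
        exact pow_le_pow_left₀ (by positivity)
          (one_div_le_one_div_of_le (by positivity) hs.1.le) 2
    have hd : ∀ s ∈ Set.Icc t T, HasDerivAt (fun s => EE ν s ((UJet ν f v v').F s))
        (EE ν s (gen ν (UJet ν f v v') s)) s := fun s hs =>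
      dynkin hν isOpen_Ioo hJ ⟨by linarith [hs.1], by linarith [hs.2, hs.1]⟩ (by linarith [hs.1])
    refine antitoneOn_of_deriv_nonpos (convex_Icc t T)
      (fun s hs => (hd s hs).continuousAt.continuousWithinAt)
      (fun s hs => (hd s (interior_subset hs)).differentiableAt.differentiableWithinAt)
      (fun s hs => ?_) (Set.left_mem_Icc.2 hT) (Set.right_mem_Icc.2 hT) hT
    have hs' := interior_subset hs
    have h0 : 0 < s := by linarith [hs'.1]
    rw [(hd s hs').deriv]
    have hsub : ({s} : Set ℝ) ⊆ Set.Ioo (t / 2) (2 * T) := by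
      rintro _ rfl; exact ⟨by linarith [hs'.1], by linarith [hs'.2, hs'.1]⟩
    have := EE_mono hν h0 (Bd.gen hν (hJ.mono hsub)) (Bd.const {s} 0)
      (fun θ => gen_UJet_nonpos hν hl hf h0 (one_div_pos.2 h0) rfl θ)
    rwa [EE_const hν 0 h0] at this
  obtain ⟨C, hC⟩ := mm_le_gauge_bary hν hl hf
  have main : ∀ T, t ≤ T → ∫ x, f x ∂ν ≤ EE ν t ((UJet ν f v v').F t) + C / √T := by
    intro T hT
    have hT0 : 0 < T := ht.trans_le hT
    have h1 := EE_mono hν hT0 (Bd.mm hν hf.continuous {T})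
      ((Bd.U_bary hν hf {T} (one_div_pos.2 hT0)).add (Bd.const {T} (C / √T)))
      (fun θ => (hC T hT0 θ).trans (add_le_add_left (le_U hf _ (one_div_pos.2 hT0)) _))
    rw [EE_mm hν hf.continuous hT0, EE_add hν hT0 (Bd.U_bary hν hf {T} (one_div_pos.2 hT0))
      (Bd.const {T} (C / √T)), EE_const hν _ hT0] at h1
    exact h1.trans (add_le_add_left (step T hT) _)
  have hlim : Filter.Tendsto (fun T : ℝ => EE ν t ((UJet ν f v v').F t) + C / √T) Filter.atTop
      (nhds (EE ν t ((UJet ν f v v').F t) + 0)) :=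
    tendsto_const_nhds.add (tendsto_const_nhds.div_atTop Real.tendsto_sqrt_atTop)
  rw [add_zero] at hlim
  exact ge_of_tendsto hlim (Filter.eventually_atTop.2 ⟨t, main⟩)

lemma sq_le_two_pow (q : ℕ) : q ^ 2 ≤ 2 * 2 ^ q := by
  induction q with
  | zero => norm_num
  | succ k ih =>
    rcases lt_or_ge k 3 with h | h
    · interval_cases k <;> norm_num
    · rw [pow_succ 2 k]; nlinarith

/-- `UJet` for the affine variance profile that equals `w` at time `t` and has slope `-c`. -/
lemma UJet_isJet_affine {ν : Measure (Eu n)} {R : ℝ} (hν : Tame ν R) {f : Eu n → ℝ}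
    (hf : IsGauge f) {t w c δ : ℝ} (hc : 0 ≤ c) (hw : 0 < w) (hδ : c * δ ≤ w / 2) :
    IsJet (Set.Ioo (-1) (t + δ)) (UJet ν f (fun s => w + c * (t - s)) fun _ => -c) := by
  refine UJet_isJet hν hf.admV (v₀ := w / 2) (v₁ := w + c * (t + 1)) (K := c) (by positivity)
    (fun s hs => ⟨?_, ?_⟩) (fun s hs => ?_) (fun s hs => ?_)
  · have : c * (-δ) ≤ c * (t - s) := mul_le_mul_of_nonneg_left (by linarith [hs.2]) hc
    linarith
  · have : c * (t - s) ≤ c * (t + 1) := mul_le_mul_of_nonneg_left (by linarith [hs.1]) hc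
    linarith
  · have := (((hasDerivAt_id s).const_sub t).const_mul c).const_add w
    simpa using this
  · rw [abs_neg, abs_of_nonneg hc]

/-- Up to time `t`, smoothing with speed `-4` dominates the diffusion of the barycenter, except
on a bad event. There the drift is at most of order `1 / s²`, which is not integrable near `0`;
it is compensated by the choice of the exponent `q` of order `1 / (κₙ² s)`, for which the bad event
has probability of order `2⁻ᵠ`. -/
lemma EE_U_le {ν : Measure (Eu n)} {R : ℝ} (hν : Tame ν R) (hl : IsLogConcaveMeasure ν)
    (hn : 0 < n) (h0 : ∑ i, ∑ j, (cov ν 0 0 i j - (1 : Matrix (Fin n) (Fin n) ℝ) i j) ^ 2 ≤ 1 / 64)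
    {f : Eu n → ℝ} (hf : IsGauge f) {t : ℝ} (ht : 0 < t) (ht1 : t ≤ 1) {Q : ℕ} (hQ : 3 ≤ Q)
    (hnQ : (n : ℝ) ≤ 2 ^ Q) (hQt : 4224 * kappaConst n ^ 2 * Q * t = 1) :
    (EE ν t fun θ => Mh f (1 / t) (bary ν t θ)) ≤
      f (bary ν 0 0) + 19 * (∫ z, f z ∂(stdGaussian n)) / √t := by
  set ℓ := ∫ z, f z ∂(stdGaussian n) with hℓdef
  have hℓ : 0 ≤ ℓ := gaussian_nonneg hf
  set a := 4224 * kappaConst n ^ 2 with ha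
  have ha0 : 0 < a := by have := one_le_kappa hn; positivity
  set v : ℝ → ℝ := fun s => 1 / t + 4 * (t - s) with hv
  set J := UJet ν f v fun _ => -4 with hJdef
  set D := 16 * a ^ 2 * ℓ * √t with hD
  have hst : 0 < √t := Real.sqrt_pos.2 ht
  have hJ : IsJet (Set.Ioo (-1) (t + 1 / (8 * t))) J :=
    UJet_isJet_affine hν hf (by norm_num) (by positivity) (by
      apply le_of_eq; field_simp; norm_num)
  have hδ : 0 < 1 / (8 * t) := by positivity
  have hd : ∀ s, 0 < s → s ≤ t → HasDerivAt (fun s => EE ν s (J.F s) - D * s)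
      (EE ν s (gen ν J s) - D) s := fun s hs hst => by
    have h1 := dynkin hν isOpen_Ioo hJ ⟨by linarith, by linarith⟩ hs
    have h2 : HasDerivAt (fun s => D * s) D s := by simpa using (hasDerivAt_id s).const_mul D
    exact h1.sub h2
  have hneg : ∀ s, 0 < s → s < t → EE ν s (gen ν J s) - D ≤ 0 := by
    intro s hs hlt
    have has : 0 < a * s := by positivity
    -- the largest exponent for which the potential is still controlled at time `s`
    set q := ⌊1 / (a * s)⌋₊ with hq
    have hQq : Q ≤ q := by
      refine Nat.le_floor ?_
      rw [le_div_iff₀ has]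
      have : a * Q * s ≤ a * Q * t := mul_le_mul_of_nonneg_left hlt.le (by positivity)
      nlinarith
    have hqs : a * q * s ≤ 1 := by
      have := Nat.floor_le (by positivity : 0 ≤ 1 / (a * s))
      rw [le_div_iff₀ has] at this
      linarith
    have hq1 : 1 ≤ 2 * (q : ℝ) * (a * s) := by
      have h1 := Nat.lt_floor_add_one (1 / (a * s))
      rw [div_lt_iff₀ has] at h1
      have h2 : (1 : ℝ) ≤ q := by exact_mod_cast (by omega : 1 ≤ q)
      have h3 : ((⌊1 / (a * s)⌋₊ : ℝ) + 1) * (a * s) ≤ 2 * q * (a * s) :=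
        mul_le_mul_of_nonneg_right (by linarith) has.le
      linarith
    have hq0 : (0 : ℝ) < q := by exact_mod_cast (by omega : 0 < q)
    have hpow : (1 / 2 : ℝ) ^ q ≤ 8 * a ^ 2 * s ^ 2 := by
      have h1 : (q : ℝ) ^ 2 ≤ 2 * 2 ^ q := by exact_mod_cast sq_le_two_pow q
      have h2 : (1 : ℝ) ≤ (2 * q * (a * s)) ^ 2 := one_le_pow₀ hq1
      rw [one_div, inv_pow, inv_le_iff_one_le_mul₀ (by positivity)]
      have h3 : (q : ℝ) ^ 2 * (4 * (a * s) ^ 2) ≤ 2 * 2 ^ q * (4 * (a * s) ^ 2) :=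
        mul_le_mul_of_nonneg_right h1 (by positivity)
      nlinarith
    have hvs : 1 / t ≤ v s := by simp only [hv]; linarith
    have hvs0 : 0 < v s := lt_of_lt_of_le (by positivity) hvs
    have hbad := EE_bad_le hν hl hn h0 hs (q := q) (by omega)
      (hnQ.trans (pow_le_pow_right₀ (by norm_num) hQq)) hqs
    have hsub : ({s} : Set ℝ) ⊆ Set.Ioo (-1) (t + 1 / (8 * t)) := by
      rintro _ rfl; exact ⟨by linarith, by linarith⟩
    have h1 := EE_mono hν hs (Bd.gen hν (hJ.mono hsub))
      ((Bd.const {s} (1 / 2 * (1 / s) ^ 2 * (ℓ / √(v s)))).mul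
        ((Bd.const {s} (2 * 4 ^ q)).mul (VJet_isJet hν q {s}).b))
      (fun θ => gen_UJet_le hν hl hf hs hvs0 rfl q θ)
    rw [EE_const_mul] at h1
    have h2 : ℓ / √(v s) ≤ ℓ * √t := by
      rw [div_eq_mul_inv]
      refine mul_le_mul_of_nonneg_left ?_ hℓ
      rw [← Real.sqrt_inv]
      refine Real.sqrt_le_sqrt ?_
      rw [inv_le_comm₀ hvs0 ht, ← one_div]; exact hvs
    have h3 : 1 / 2 * (1 / s) ^ 2 * (ℓ / √(v s)) * (EE ν s fun θ => 2 * 4 ^ q * (VJet ν q).F s θ) ≤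
        1 / 2 * (1 / s) ^ 2 * (ℓ * √t) * (4 * (8 * a ^ 2 * s ^ 2)) := by
      calc _ ≤ 1 / 2 * (1 / s) ^ 2 * (ℓ / √(v s)) * (4 * (8 * a ^ 2 * s ^ 2)) :=
            mul_le_mul_of_nonneg_left (hbad.trans (by linarith)) (by positivity)
        _ ≤ _ := by gcongr
    have h4 : 1 / 2 * (1 / s) ^ 2 * (ℓ * √t) * (4 * (8 * a ^ 2 * s ^ 2)) = D := by
      rw [hD]; field_simp; ring
    linarith
  have hv0 : 0 < v 0 := by simp only [hv]; positivity
  have hlim : Filter.Tendsto (fun s => EE ν s (J.F s) - D * s) (nhdsWithin 0 (Set.Ioi 0))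
      (nhds (J.F 0 0 - D * 0)) := by
    refine (EE_tendsto hν ht (hJ.mono fun s hs => ⟨by linarith [hs.1], by linarith [hs.2]⟩).b
      (UJet_continuousAt hν hf hv0 (by fun_prop))).sub ?_
    exact (Continuous.tendsto (by fun_prop : Continuous fun s : ℝ => D * s) 0).mono_left
      nhdsWithin_le_nhds
  have fin := le_limit ht hd hneg hlim
  have e1 : J.F t = fun θ => Mh f (1 / t) (bary ν t θ) := by
    simp [hJdef, UJet, hv]
  have e2 : J.F 0 0 ≤ f (bary ν 0 0) + √(v 0) * ℓ := U_le hf _ hv0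
  rw [e1] at fin
  have h5 : √(v 0) ≤ 3 / √t := by
    rw [Real.sqrt_le_left (by positivity), div_pow, Real.sq_sqrt ht.le]
    simp only [hv, sub_zero]
    rw [le_div_iff₀ ht, add_mul, one_div, inv_mul_cancel₀ ht.ne']
    nlinarith
  have h6 : D * t ≤ 16 * ℓ / √t := by
    have hat : a * t ≤ 1 := by
      have : (1 : ℝ) ≤ Q := by exact_mod_cast (by omega : 1 ≤ Q)
      nlinarith [mul_pos ha0 ht]
    have h7 : (a * t) ^ 2 ≤ 1 := pow_le_one₀ (by positivity) hat
    rw [le_div_iff₀ hst, hD]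
    have : 16 * a ^ 2 * ℓ * √t * t * √t = 16 * ℓ * (a * t) ^ 2 := by
      have := Real.mul_self_sqrt ht.le
      calc _ = 16 * a ^ 2 * ℓ * t * (√t * √t) := by ring
        _ = _ := by rw [this]; ring
    rw [this]
    nlinarith
  have h8 : √(v 0) * ℓ ≤ 3 / √t * ℓ := mul_le_mul_of_nonneg_right h5 hℓ
  have h9 : 19 * ℓ / √t = 3 / √t * ℓ + 16 * ℓ / √t := by ring
  linarith

/-- Upper bound for the integral of a gauge over a compactly supported log-concave measure whose
covariance is close to the identity; the barycenter need not vanish. -/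
lemma upper_bound {ν : Measure (Eu n)} {R : ℝ} (hν : Tame ν R) (hl : IsLogConcaveMeasure ν)
    (hn : 0 < n) (h0 : ∑ i, ∑ j, (cov ν 0 0 i j - (1 : Matrix (Fin n) (Fin n) ℝ) i j) ^ 2 ≤ 1 / 64)
    {f : Eu n → ℝ} (hf : IsGauge f) {t : ℝ} (ht : 0 < t) (ht1 : t ≤ 1) {Q : ℕ} (hQ : 3 ≤ Q)
    (hnQ : (n : ℝ) ≤ 2 ^ Q) (hQt : 4224 * kappaConst n ^ 2 * Q * t = 1) :
    ∫ x, f x ∂ν ≤ f (bary ν 0 0) + 19 * (∫ z, f z ∂(stdGaussian n)) / √t :=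
  (integral_le_EE hν hl hf ht).trans (EE_U_le hν hl hn h0 hf ht ht1 hQ hnQ hQt)

/-- Lower bound for the integral of a gauge over a compactly supported log-concave measure. The
variance profile `ε + (t - s) / 4` is positive up to time `t`, and `ε` tends to `0` in the end. -/
lemma lower_bound {ν : Measure (Eu n)} {R : ℝ} (hν : Tame ν R) (hl : IsLogConcaveMeasure ν)
    (hn : 0 < n) (h0 : ∑ i, ∑ j, (cov ν 0 0 i j - (1 : Matrix (Fin n) (Fin n) ℝ) i j) ^ 2 ≤ 1 / 64)
    {f : Eu n → ℝ} (hf : IsGauge f) {t : ℝ} (ht : 0 < t) {Q : ℕ} (hQ : 3 ≤ Q)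
    (hnQ : (n : ℝ) ≤ 2 ^ Q) (hQt : 4224 * kappaConst n ^ 2 * Q * t = 1) :
    1 / 4 * √t * (∫ z, f z ∂(stdGaussian n)) ≤ ∫ x, f x ∂ν + f (-bary ν 0 0) := by
  set ℓ := ∫ z, f z ∂(stdGaussian n) with hℓdef
  have hℓ : 0 ≤ ℓ := gaussian_nonneg hf
  have key : ∀ ε : ℝ, 0 < ε → 1 / 4 * √t * ℓ ≤ (∫ x, f x ∂ν) + f (-bary ν 0 0) + √ε * ℓ := by
    intro ε hε
    set v : ℝ → ℝ := fun s => ε + 1 / 4 * (t - s) with hv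
    set J := UJet ν f v fun _ => -(1 / 4) with hJdef
    have hJ : IsJet (Set.Ioo (-1) (t + ε)) J :=
      UJet_isJet_affine hν hf (by norm_num) hε (by linarith)
    have hvpos : ∀ s, s ≤ t → 0 < v s := fun s hs => by simp only [hv]; linarith
    have hd : ∀ s, 0 < s → s ≤ t → HasDerivAt (fun s => ℓ / 2 * √(v s) - EE ν s (J.F s))
        (-(1 / 16 * (ℓ / √(v s))) - EE ν s (gen ν J s)) s := fun s hs hst => by
      have h1 := dynkin hν isOpen_Ioo hJ ⟨by linarith, by linarith⟩ hs
      have h2 : HasDerivAt v (-(1 / 4)) s := by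
        exact ((((hasDerivAt_id s).const_sub t).const_mul (1 / 4)).const_add ε).congr_deriv
          (by norm_num)
      have h3 := (h2.sqrt (hvpos s hst).ne').const_mul (ℓ / 2)
      refine (h3.sub h1).congr_deriv ?_
      congr 1; ring
    have hneg : ∀ s, 0 < s → s < t → -(1 / 16 * (ℓ / √(v s))) - EE ν s (gen ν J s) ≤ 0 := by
      intro s hs hlt
      have hvs0 := hvpos s hlt.le
      have hbad := EE_bad_le hν hl hn h0 hs (q := Q) (by omega) hnQ
        (by
          have hk : 0 ≤ 4224 * kappaConst n ^ 2 * Q := by positivity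
          nlinarith)
      have hpow : (1 / 2 : ℝ) ^ Q ≤ (1 / 2) ^ 3 :=
        pow_le_pow_of_le_one (by norm_num) (by norm_num) hQ
      have hsub : ({s} : Set ℝ) ⊆ Set.Ioo (-1) (t + ε) := by
        rintro _ rfl; exact ⟨by linarith, by linarith⟩
      have h1 := EE_mono hν hs
        ((Bd.const {s} (-(1 / 8 * (ℓ / √(v s))))).mul
          ((Bd.const {s} (2 * 4 ^ Q)).mul (VJet_isJet hν Q {s}).b))
        (Bd.gen hν (hJ.mono hsub)) (fun θ => le_gen_UJet hf hvs0 rfl Q θ)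
      rw [EE_const_mul] at h1
      have hK : 0 ≤ 1 / 8 * (ℓ / √(v s)) := by positivity
      have h2 := mul_le_mul_of_nonneg_left (hbad.trans (by linarith : _ ≤ (1 / 2 : ℝ))) hK
      linarith
    have hv0 : 0 < v 0 := hvpos 0 ht.le
    have hvc : Continuous v := by fun_prop
    have hlim : Filter.Tendsto (fun s => ℓ / 2 * √(v s) - EE ν s (J.F s))
        (nhdsWithin 0 (Set.Ioi 0)) (nhds (ℓ / 2 * √(v 0) - J.F 0 0)) := by
      refine Filter.Tendsto.sub ?_ (EE_tendsto hν ht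
        (hJ.mono fun s hs => ⟨by linarith [hs.1], by linarith [hs.2]⟩).b
        (UJet_continuousAt hν hf hv0 hvc.continuousAt))
      exact (Continuous.tendsto (by fun_prop : Continuous fun s : ℝ => ℓ / 2 * √(v s)) 0).mono_left
        nhdsWithin_le_nhds
    have fin := le_limit ht hd hneg hlim
    have e1 : J.F t = fun θ => Mh f ε (bary ν t θ) := by simp [hJdef, UJet, hv]
    have e2 : √(v 0) * ℓ ≤ J.F 0 0 + f (-bary ν 0 0) := U_ge hf _ hv0
    have e3 : v t = ε := by simp [hv]
    rw [e1, e3] at fin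
    have h1 := EE_mono hν ht (Bd.U_bary hν hf {t} hε)
      ((Bd.mm hν hf.continuous {t}).add (Bd.const {t} (√ε * ℓ)))
      (fun θ => (U_le hf _ hε).trans (add_le_add_left (gauge_bary_le hν hf t θ) _))
    rw [EE_add hν ht (Bd.mm hν hf.continuous {t}) (Bd.const {t} (√ε * ℓ)),
      EE_mm hν hf.continuous ht, EE_const hν _ ht] at h1
    have h2 : 1 / 2 * √t ≤ √(v 0) := by
      apply Real.le_sqrt_of_sq_le
      rw [mul_pow, Real.sq_sqrt ht.le]
      simp only [hv]; linarith
    have h3 := mul_le_mul_of_nonneg_right h2 hℓ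
    have h4 : 0 ≤ √ε * ℓ := by positivity
    linarith
  have hlim : Filter.Tendsto (fun ε : ℝ => (∫ x, f x ∂ν) + f (-bary ν 0 0) + √ε * ℓ)
      (nhdsWithin 0 (Set.Ioi 0)) (nhds ((∫ x, f x ∂ν) + f (-bary ν 0 0) + √0 * ℓ)) :=
    (Continuous.tendsto (by fun_prop) 0).mono_left nhdsWithin_le_nhds
  rw [Real.sqrt_zero, zero_mul, add_zero] at hlim
  exact ge_of_tendsto hlim (Filter.eventually_of_mem self_mem_nhdsWithin fun ε hε => key ε hε)

end

/-! ### Truncation and conclusion -/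

section

variable {n : ℕ}

/-- The measure `μ` conditioned on the ball of radius `r` about the origin. -/
def trunc (μ : Measure (Eu n)) (r : ℝ) : Measure (Eu n) :=
  (μ (Metric.closedBall 0 r))⁻¹ • μ.restrict (Metric.closedBall 0 r)

lemma trunc_tame {μ : Measure (Eu n)} [IsProbabilityMeasure μ] {r : ℝ}
    (h : μ (Metric.closedBall 0 r) ≠ 0) : Tame (trunc μ r) r := by
  refine ⟨⟨?_⟩, ?_⟩
  · rw [trunc, Measure.smul_apply, Measure.restrict_apply_univ, smul_eq_mul,
      ENNReal.inv_mul_cancel h (measure_ne_top _ _)]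
  · refine Measure.ae_smul_measure ?_ _
    filter_upwards [ae_restrict_mem (Metric.isClosed_closedBall.measurableSet)] with x hx
    simpa using hx

lemma trunc_logConcave {μ : Measure (Eu n)} [IsProbabilityMeasure μ] (hl : IsLogConcaveMeasure μ)
    {r : ℝ} (h : μ (Metric.closedBall 0 r) ≠ 0) : IsLogConcaveMeasure (trunc μ r) := by
  obtain ⟨p, hpm, ⟨hp0, hp⟩, e⟩ := hl
  set B := Metric.closedBall (0 : Eu n) r with hB
  have hBm : MeasurableSet B := Metric.isClosed_closedBall.measurableSet
  set c : ℝ := (μ B).toReal⁻¹ with hc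
  have hc0 : 0 ≤ c := by positivity
  have hce : ENNReal.ofReal c = (μ B)⁻¹ := by
    rw [hc, ENNReal.ofReal_inv_of_pos (ENNReal.toReal_pos h (measure_ne_top _ _)),
      ENNReal.ofReal_toReal (measure_ne_top _ _)]
  have hq0 : ∀ x, 0 ≤ c * B.indicator p x := fun x =>
    mul_nonneg hc0 (Set.indicator_nonneg (fun x _ => hp0 x) x)
  refine ⟨fun x => c * B.indicator p x, (hpm.indicator hBm).const_mul c, ⟨hq0, ?_⟩, ?_⟩
  · intro x y t ht0 ht1
    rcases ht0.eq_or_lt with rfl | ht0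
    · simp
    rcases ht1.eq_or_lt with rfl | ht1
    · simp
    by_cases hx : x ∈ B
    · by_cases hy : y ∈ B
      · have hxy : t • x + (1 - t) • y ∈ B :=
          convex_closedBall (0 : Eu n) r hx hy ht0.le (by linarith) (by ring)
        simp only [Set.indicator_of_mem hx, Set.indicator_of_mem hy, Set.indicator_of_mem hxy]
        rw [Real.mul_rpow hc0 (hp0 x), Real.mul_rpow hc0 (hp0 y)]
        have h1 : c ^ t * c ^ (1 - t) = c := by
          rw [← Real.rpow_add_of_nonneg hc0 ht0.le (by linarith)]; simp
        calc _ = (c ^ t * c ^ (1 - t)) * (p x ^ t * p y ^ (1 - t)) := by ring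
          _ ≤ _ := by rw [h1]; exact mul_le_mul_of_nonneg_left (hp x y t ht0.le ht1.le) hc0
      · simp only [Set.indicator_of_notMem hy, mul_zero]
        rw [Real.zero_rpow (by linarith), mul_zero]; exact hq0 _
    · simp only [Set.indicator_of_notMem hx, mul_zero]
      rw [Real.zero_rpow ht0.ne', zero_mul]; exact hq0 _
  · rw [trunc, ← hB, ← hce, e, restrict_withDensity hBm, ← withDensity_indicator hBm,
      ← withDensity_smul' _ _ ENNReal.ofReal_ne_top]
    congr 1
    funext x
    by_cases hx : x ∈ B
    · simp [hx, ENNReal.ofReal_mul hc0]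
    · simp [hx]

lemma trunc_tendsto {μ : Measure (Eu n)} [IsProbabilityMeasure μ] {g : Eu n → ℝ}
    (hg : Integrable g μ) : Filter.Tendsto (fun k : ℕ => ∫ x, g x ∂(trunc μ k)) Filter.atTop
      (nhds (∫ x, g x ∂μ)) := by
  have hmono : Monotone fun k : ℕ => Metric.closedBall (0 : Eu n) k := fun a b hab =>
    Metric.closedBall_subset_closedBall (by exact_mod_cast hab)
  have hU : ⋃ k : ℕ, Metric.closedBall (0 : Eu n) k = Set.univ := Metric.iUnion_closedBall_nat 0
  have h1 := tendsto_setIntegral_of_monotone (μ := μ) (f := g)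
    (fun k : ℕ => (Metric.isClosed_closedBall (x := (0 : Eu n)) (ε := k)).measurableSet) hmono
    hg.integrableOn
  have h2 := tendsto_measure_iUnion_atTop (μ := μ) hmono
  rw [hU] at h1 h2
  rw [measure_univ] at h2
  have h3 := (ENNReal.tendsto_toReal (by simp)).comp h2
  simp only [Measure.restrict_univ] at h1
  have h4 := (h3.inv₀ (by simp)).mul h1
  simp only [ENNReal.toReal_one, inv_one, one_mul] at h4
  refine h4.congr fun k => ?_
  simp [trunc, integral_smul_measure]

lemma mm_zero {ν : Measure (Eu n)} {R : ℝ} (hν : Tame ν R) (h : Eu n → ℝ) :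
    mm ν h 0 0 = ∫ x, h x ∂ν := by
  have := hν.prob
  simp [mm, Psi, ew]

/-- The exponent `Q` is the binary logarithm of `n`, up to constants. -/
lemma exists_Q (hn : 2 ≤ n) : ∃ Q : ℕ, 3 ≤ Q ∧ (n : ℝ) ≤ 2 ^ Q ∧
    (Q : ℝ) ≤ 5 * Real.log (n + 1) := by
  refine ⟨Nat.log 2 n + 3, by omega, ?_, ?_⟩
  · have h := (Nat.lt_pow_succ_log_self (b := 2) (by norm_num) n).le
    have h2 : 2 ^ (Nat.log 2 n).succ ≤ 2 ^ (Nat.log 2 n + 3) :=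
      Nat.pow_le_pow_right (by norm_num) (by omega)
    exact_mod_cast h.trans h2
  · have h1 : (2 : ℝ) ^ Nat.log 2 n ≤ n + 1 := by
      have := Nat.pow_log_le_self 2 (x := n) (by omega)
      exact_mod_cast this.trans (Nat.le_succ n)
    have h2 := Real.log_le_log (by positivity) h1
    rw [Real.log_pow] at h2
    have h3 : (1 : ℝ) ≤ Real.log (n + 1) := by
      rw [Real.le_log_iff_exp_le (by positivity)]
      have : (2 : ℝ) ≤ n := by exact_mod_cast hn
      linarith [Real.exp_one_lt_d9]
    have h4 := Real.log_two_gt_d9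
    have h5 : (Nat.log 2 n : ℝ) * (1 / 2) ≤ Nat.log 2 n * Real.log 2 :=
      mul_le_mul_of_nonneg_left (by linarith) (by positivity)
    push_cast
    linarith

/-- The two-sided comparison with `√t` in place of `1 / (κₙ √(log (n + 1)))`. -/
lemma comparison_t {μ : Measure (Eu n)} [IsProbabilityMeasure μ] (hl : IsLogConcaveMeasure μ)
    (hi : IsIsotropicMeasure μ) (hn : 0 < n) {f : Eu n → ℝ} (hf : IsGauge f) {t : ℝ} (ht : 0 < t)
    (ht1 : t ≤ 1) {Q : ℕ} (hQ : 3 ≤ Q) (hnQ : (n : ℝ) ≤ 2 ^ Q)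
    (hQt : 4224 * kappaConst n ^ 2 * Q * t = 1) :
    1 / 4 * √t * (∫ z, f z ∂(stdGaussian n)) ≤ ∫ x, f x ∂μ ∧
      ∫ x, f x ∂μ ≤ 19 * (∫ z, f z ∂(stdGaussian n)) / √t := by
  have hii : ∀ i, Integrable (fun x : Eu n => x i * x i) μ := fun i => by
    by_contra hc
    have := hi.2 i i
    rw [integral_undef hc] at this
    simp at this
  have hsq : Integrable (fun x : Eu n => 1 + ‖x‖ ^ 2) μ := by
    have := integrable_finsetSum Finset.univ fun i _ => hii i
    refine (integrable_const 1).add (this.congr (Filter.Eventually.of_forall fun x => ?_))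
    simp [EuclideanSpace.norm_sq_eq, ← sq]
  have hdom : ∀ (g : Eu n → ℝ) (C : ℝ), Continuous g → (∀ x, |g x| ≤ C * (1 + ‖x‖ ^ 2)) →
      Integrable g μ := fun g C hg hb =>
    (hsq.const_mul C).mono' hg.aestronglyMeasurable (Filter.Eventually.of_forall hb)
  have hnorm : ∀ x : Eu n, ‖x‖ ≤ 1 + ‖x‖ ^ 2 := fun x => by nlinarith [sq_nonneg (‖x‖ - 1)]
  have hcoord : ∀ (x : Eu n) i, |x i| ≤ ‖x‖ := fun x i => PiLp.norm_apply_le x i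
  have h1 : ∀ i, Integrable (fun x : Eu n => x i) μ := fun i =>
    hdom _ 1 (by fun_prop) fun x => by linarith [hcoord x i, hnorm x]
  have h2 : ∀ i j, Integrable (fun x : Eu n => x i * x j) μ := fun i j =>
    hdom _ 1 (by fun_prop) fun x => by
      rw [abs_mul]
      have := mul_le_mul (hcoord x i) (hcoord x j) (abs_nonneg _) (norm_nonneg x)
      nlinarith
  have hfi : Integrable f μ := by
    obtain ⟨C, hC0, hC⟩ := hf.exists_le
    refine hdom f C hf.continuous fun x => ?_
    rw [abs_of_nonneg (hf.1 x)]
    exact (hC x).trans (mul_le_mul_of_nonneg_left (hnorm x) hC0)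
  have hball : ∀ᶠ k : ℕ in Filter.atTop, μ (Metric.closedBall 0 (k : ℝ)) ≠ 0 := by
    have h := tendsto_measure_iUnion_atTop (μ := μ) (s := fun k : ℕ => Metric.closedBall (0 : Eu n) k)
      fun a b hab => Metric.closedBall_subset_closedBall (by exact_mod_cast hab)
    rw [Metric.iUnion_closedBall_nat, measure_univ] at h
    exact h.eventually_ne one_ne_zero
  have hm1 : ∀ i, Filter.Tendsto (fun k : ℕ => mm (trunc μ k) (fun x => x i) 0 0) Filter.atTop
      (nhds 0) := fun i => by
    have := trunc_tendsto (h1 i)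
    rw [hi.1 i] at this
    refine this.congr' ?_
    filter_upwards [hball] with k hk
    rw [mm_zero (trunc_tame hk)]
  have hbary : Filter.Tendsto (fun k : ℕ => bary (trunc μ k) 0 0) Filter.atTop (nhds 0) :=
    ((PiLp.continuous_toLp 2 fun _ : Fin n => ℝ).tendsto 0).comp
      (tendsto_pi_nhds.2 fun i => hm1 i)
  have hcov : ∀ i j, Filter.Tendsto (fun k : ℕ => cov (trunc μ k) 0 0 i j) Filter.atTop
      (nhds ((1 : Matrix (Fin n) (Fin n) ℝ) i j)) := fun i j => by
    have h3 := trunc_tendsto (h2 i j)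
    rw [hi.2 i j] at h3
    have h4 : Filter.Tendsto (fun k : ℕ => mm (trunc μ k) (fun x => x i * x j) 0 0) Filter.atTop
        (nhds (if i = j then 1 else 0)) := by
      refine h3.congr' ?_
      filter_upwards [hball] with k hk
      rw [mm_zero (trunc_tame hk)]
    have h5 := h4.sub ((hm1 i).mul (hm1 j))
    rw [mul_zero, sub_zero] at h5
    rw [Matrix.one_apply]
    exact h5
  have hS : Filter.Tendsto (fun k : ℕ => ∑ i, ∑ j,
      (cov (trunc μ k) 0 0 i j - (1 : Matrix (Fin n) (Fin n) ℝ) i j) ^ 2) Filter.atTop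
      (nhds 0) := by
    have := tendsto_finsetSum Finset.univ fun i _ => tendsto_finsetSum Finset.univ fun j _ =>
      ((hcov i j).sub_const ((1 : Matrix (Fin n) (Fin n) ℝ) i j)).pow 2
    simpa using this
  have hS' := hS.eventually_le_const (by norm_num : (0 : ℝ) < 1 / 64)
  have hfc := trunc_tendsto hfi
  have hf1 : Filter.Tendsto (fun k : ℕ => f (bary (trunc μ k) 0 0)) Filter.atTop (nhds 0) := by
    have := (hf.continuous.tendsto 0).comp hbary
    rwa [hf.zero] at this
  have hf2 : Filter.Tendsto (fun k : ℕ => f (-bary (trunc μ k) 0 0)) Filter.atTop (nhds 0) := by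
    have := (hf.continuous.tendsto (-0)).comp hbary.neg
    rwa [neg_zero, hf.zero] at this
  constructor
  · have hlim := hfc.add hf2
    rw [add_zero] at hlim
    refine ge_of_tendsto hlim ?_
    filter_upwards [hball, hS'] with k hk hk'
    exact lower_bound (trunc_tame hk) (trunc_logConcave hl hk) hn hk' hf ht hQ hnQ hQt
  · have hlim := hf1.add_const (19 * (∫ z, f z ∂(stdGaussian n)) / √t)
    rw [zero_add] at hlim
    refine le_of_tendsto_of_tendsto hfc hlim ?_
    filter_upwards [hball, hS'] with k hk hk'
    exact upper_bound (trunc_tame hk) (trunc_logConcave hl hk) hn hk' hf ht ht1 hQ hnQ hQt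

end

/-- Comparison of log-concave and Gaussian averages of gauge functions
(with the constant kappa_n). -/
theorem gauge_comparison_kappa_n :
    ∃ c C : ℝ, 0 < c ∧ 0 < C ∧
      ∀ n : ℕ, 2 ≤ n → ∀ μ : Measure (EuclideanSpace ℝ (Fin n)),
        IsProbabilityMeasure μ → IsLogConcaveMeasure μ → IsIsotropicMeasure μ →
        ∀ f : EuclideanSpace ℝ (Fin n) → ℝ, IsGauge f →
          c / (kappaConst n * Real.sqrt (Real.log (n + 1))) * ∫ x, f x ∂(stdGaussian n) ≤
              ∫ x, f x ∂μ ∧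
            ∫ x, f x ∂μ ≤
              C * (kappaConst n * Real.sqrt (Real.log (n + 1))) * ∫ x, f x ∂(stdGaussian n) := by
  refine ⟨1 / 584, 2774, by norm_num, by norm_num, ?_⟩
  intro n hn μ hμ hl hi f hf
  obtain ⟨Q, hQ, hnQ, hQL⟩ := exists_Q hn
  have hκ : 1 ≤ kappaConst n := one_le_kappa (by omega)
  have hQ' : (3 : ℝ) ≤ Q := by exact_mod_cast hQ
  set κ := kappaConst n with hκdef
  set L := Real.log (n + 1) with hL
  have hL0 : 0 < L := by linarith
  have hD : 0 < 4224 * κ ^ 2 * Q := by positivity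
  have ht : 0 < 1 / (4224 * κ ^ 2 * Q) := by positivity
  have ht1 : 1 / (4224 * κ ^ 2 * Q) ≤ 1 := by
    rw [div_le_one hD]
    nlinarith [one_le_pow₀ (n := 2) hκ]
  have main := comparison_t hl hi (by omega) hf ht ht1 hQ hnQ (by
    rw [mul_one_div, div_self hD.ne'])
  have hℓ := gaussian_nonneg hf
  have hP : 0 < κ * √L := by positivity
  -- `Q ≤ 5 L`, and `4224 * 5 = 21120 ≤ 146²`
  have hs : 1 / √(1 / (4224 * κ ^ 2 * Q)) ≤ 146 * (κ * √L) := by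
    rw [one_div, ← Real.sqrt_inv, one_div, inv_inv, Real.sqrt_le_left (by positivity)]
    rw [mul_pow, mul_pow, Real.sq_sqrt hL0.le]
    have : 4224 * κ ^ 2 * Q ≤ 4224 * κ ^ 2 * (5 * L) :=
      mul_le_mul_of_nonneg_left hQL (by positivity)
    nlinarith [mul_pos (by positivity : 0 < κ ^ 2) hL0]
  have hst : 0 < √(1 / (4224 * κ ^ 2 * Q)) := Real.sqrt_pos.2 ht
  constructor
  · refine le_trans (mul_le_mul_of_nonneg_right ?_ hℓ) main.1
    rw [one_div, ← one_div, div_le_iff₀ hP]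
    rw [div_le_iff₀ hst] at hs
    linarith
  · refine main.2.trans ?_
    have := mul_le_mul_of_nonneg_left hs (by positivity : 0 ≤ 19 * ∫ z, f z ∂(stdGaussian n))
    calc _ = 19 * (∫ z, f z ∂(stdGaussian n)) * (1 / √(1 / (4224 * κ ^ 2 * Q))) := by ring
      _ ≤ _ := this
      _ = _ := by ring

end
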